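/- arXiv:1212.3799 — 4 statements merged into one kernel-verified Lean document; each statement's English description precedes it below -/
import Mathlib

section
/- Let N ≥ 1, 1 ≤ n ≤ N, and 0 < ε < 1. Then Pr[S > (1+ε)·n/N] < exp(−(n/2)·(ε²/2 − ε³/3)), where S = Σ_{j=1}^n Q_j². -/
open MeasureTheory Finset

noncomputable section

/-- The real sign value of a Boolean. -/
def rad (b : Bool) : ℝ := if b then 1 else -1

/-- The symmetric random sign matrix: entries `r i j = r j i`, determined by the
independent Booleans `ω i j` for `i ≤ j`. -/
def rsym {N : ℕ} (ω : Fin N → Fin N → Bool) (i j : Fin N) : ℝ :=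
  if i ≤ j then rad (ω i j) else rad (ω j i)

/-- The uniform probability measure on Boolean square arrays, making the upper-triangular
entries of `rsym` independent Rademacher random variables. -/
def μsym (N : ℕ) : Measure (Fin N → Fin N → Bool) :=
  (PMF.uniformOfFintype (Fin N → Fin N → Bool)).toMeasure

/-- `Q j = N^{-1/2} ∑_k r_{jk} α_k`. -/
def Q {N n : ℕ} (hn : n ≤ N) (α : Fin N → ℝ) (j : Fin n)
    (ω : Fin N → Fin N → Bool) : ℝ :=
  (Real.sqrt N)⁻¹ * ∑ k, rsym ω (Fin.castLE hn j) k * α k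

/-- `S = ∑_{j=1}^n Q_j^2`. -/
def S {N n : ℕ} (hn : n ≤ N) (α : Fin N → ℝ) (ω : Fin N → Fin N → Bool) : ℝ :=
  ∑ j : Fin n, (Q hn α j ω) ^ 2

/-!
Let `E = ∑ i ∈ I, (∑ k, rsym ω i k * α k) ^ 2` be the energy of `m = #I` rows; its mean is `m`. The
rows of a symmetric matrix share entries, so the row sums are not independent, but their squares are
still uncorrelated.

Two successive Gaussian linearizations and the matrix determinant lemma show that the moment
generating function of `E` exceeds the bound for independent rows by a factor of at most
`1 / √(1 - c ^ 2)`, where `c / (2 * (1 + c))` is the exponential parameter. A Chernoff bound absorbs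
this factor as soon as `m * ε ^ 2` is bounded below. For smaller `m * ε ^ 2` the variance bound
`2 * m`, inserted in Cantelli's inequality, suffices.
-/

open ProbabilityTheory
open scoped ENNReal

/-- The error `∑ - log (1 + x)` vanishes at `0` and has derivative `x ^ (2 * n + 1) / (1 + x)`. -/
lemma log_one_add_le_sum_range {x : ℝ} (hx : 0 ≤ x) (n : ℕ) :
    Real.log (1 + x) ≤ ∑ i ∈ range (2 * n + 1), (-1) ^ i * x ^ (i + 1) / (i + 1) := by
  set F : ℝ → ℝ := fun y ↦
    ∑ i ∈ range (2 * n + 1), (-1) ^ i * y ^ (i + 1) / (i + 1) - Real.log (1 + y) with hF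
  have hderiv (y : ℝ) (hy : 0 ≤ y) : HasDerivAt F (y ^ (2 * n + 1) / (1 + y)) y := by
    have hpos : 1 + y ≠ 0 := by positivity
    have hsum : HasDerivAt (fun y : ℝ ↦ ∑ i ∈ range (2 * n + 1), (-1) ^ i * y ^ (i + 1) / (i + 1))
        (∑ i ∈ range (2 * n + 1), (-y) ^ i) y := by
      refine HasDerivAt.fun_sum fun i _ ↦ HasDerivAt.congr_deriv
        (((hasDerivAt_pow (i + 1) y).const_mul ((-1 : ℝ) ^ i)).div_const (i + 1)) ?_
      rw [Nat.add_sub_cancel, Nat.cast_add_one, neg_pow y]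
      field_simp
    have hgeom := mul_neg_geom_sum (-y) (2 * n + 1)
    rw [Odd.neg_pow ⟨n, rfl⟩, sub_neg_eq_add, sub_neg_eq_add] at hgeom
    refine (hsum.sub (((hasDerivAt_id y).const_add 1).log hpos)).congr_deriv ?_
    rw [id, eq_div_iff hpos, sub_mul, div_mul_cancel₀ _ hpos, mul_comm, hgeom, add_sub_cancel_left]
  have hmono : MonotoneOn F (Set.Ici 0) := by
    refine monotoneOn_of_deriv_nonneg (convex_Ici 0)
      (fun y hy ↦ (hderiv y hy).continuousAt.continuousWithinAt)
      (fun y hy ↦ (hderiv y (interior_subset hy)).differentiableAt.differentiableWithinAt)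
      fun y hy ↦ ?_
    have hy0 : 0 ≤ y := interior_subset hy
    rw [(hderiv y hy0).deriv]
    positivity
  have h0 : F 0 = 0 := by simp [hF]
  exact sub_nonneg.mp (h0 ▸ hmono Set.self_mem_Ici hx hx)

lemma neg_log_one_sub_le {x : ℝ} (h0 : 0 ≤ x) (h1 : x ≤ 1 / 4) :
    -Real.log (1 - x) ≤ x + 2 / 3 * x ^ 2 := by
  have habs : |x| < 1 := abs_lt.mpr (by constructor <;> linarith)
  have htaylor : |x + x ^ 2 / 2 + x ^ 3 / 3 + Real.log (1 - x)| ≤ x ^ 4 / (1 - x) := by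
    convert Real.abs_log_sub_add_sum_range_le habs 3 using 2
    · norm_num [sum_range_succ]
    · rw [abs_of_nonneg h0]
    · rw [abs_of_nonneg h0]
  have hcube : x ^ 3 ≤ x ^ 2 / 4 := by nlinarith [sq_nonneg x]
  have htail : x ^ 4 / (1 - x) ≤ x ^ 2 / 12 := by
    rw [div_le_div_iff₀ (by linarith) (by norm_num)]
    nlinarith [sq_nonneg x]
  linarith [abs_le.mp htaylor]

lemma exp_lt_one_add_mul_of_le {a k u v : ℝ} (hu : 0 < u) (huv : u ≤ v)
    (h : Real.exp (k * v) < 1 + a * v) : Real.exp (k * u) < 1 + a * u := by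
  have hv : 0 < v := hu.trans_le huv
  have hle : u / v ≤ 1 := (div_le_one hv).mpr huv
  have hconv := convexOn_exp.2 (Set.mem_univ (k * v)) (Set.mem_univ 0) (div_nonneg hu.le hv.le)
    (sub_nonneg.mpr hle) (add_sub_cancel _ _)
  simp only [smul_eq_mul, mul_zero, add_zero, Real.exp_zero, mul_one] at hconv
  have hpos : 0 < u / v := div_pos hu hv
  calc Real.exp (k * u) = Real.exp (u / v * (k * v)) := by field_simp
    _ ≤ u / v * Real.exp (k * v) + (1 - u / v) := hconv
    _ < u / v * (1 + a * v) + (1 - u / v) := by gcongr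
    _ = 1 + a * u := by field_simp; ring

lemma exp_mul_lt_one_add_two_mul {ε u : ℝ} (hε : 0 ≤ ε) (hu0 : 0 < u) (hu : u ≤ 1 + 2 * ε) :
    Real.exp ((1 - 2 * ε / 3) * u) < 1 + 2 * u := by
  refine exp_lt_one_add_mul_of_le hu0 hu ?_
  set y := 4 / 3 * ε * (1 - ε) with hy
  have hy_lt : 0 < 1 - y := by nlinarith [sq_nonneg (2 * ε - 1)]
  have hexp_y : Real.exp y ≤ (1 - y)⁻¹ := by
    rw [← inv_inv (Real.exp y), ← Real.exp_neg]
    exact inv_anti₀ hy_lt (by linarith [Real.add_one_le_exp (-y)])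
  calc Real.exp ((1 - 2 * ε / 3) * (1 + 2 * ε)) = Real.exp 1 * Real.exp y := by
        rw [← Real.exp_add]; congr 1; ring
    _ ≤ 2.7182818286 * (1 - y)⁻¹ := by gcongr; exact Real.exp_one_lt_d9.le
    _ < 1 + 2 * (1 + 2 * ε) := by
        rw [← div_eq_mul_inv, div_lt_iff₀ hy_lt]
        nlinarith [mul_nonneg hε (sq_nonneg (6 * ε - 1))]

/-- Twice the exponent in the Chernoff bound for the energy of `n` rows of the sign matrix to be at
least `(1 + ε) * n`, with exponential parameter `c / (2 * (1 + c))`. For independent rows the term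
`Real.log (1 - c ^ 2)` would be absent. -/
def chernoffExponent (n ε c : ℝ) : ℝ :=
  n * (c * (1 + ε) / (1 + c) - Real.log (1 + c)) + Real.log (1 - c ^ 2)

lemma rate_lt_chernoffExponent_self {ε n : ℝ} (hε0 : 0 < ε) (hε : ε ≤ 1 / 2)
    (hn : 4 * (1 + 2 * ε) ≤ n * ε ^ 2) :
    n * (ε ^ 2 / 2 - ε ^ 3 / 3) < chernoffExponent n ε ε := by
  have hn0 : 0 < n := pos_of_mul_pos_left (by linarith) (sq_nonneg ε)
  have hlog : Real.log (1 + ε) ≤ ε - ε ^ 2 / 2 + ε ^ 3 / 3 - ε ^ 4 / 4 + ε ^ 5 / 5 :=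
    (log_one_add_le_sum_range hε0.le 2).trans_eq <| by
      simp only [sum_range_succ, sum_range_zero]
      ring
  have hmain : ε ^ 2 + 2 / 3 * (ε ^ 2) ^ 2 < n * (ε ^ 4 / 4 - ε ^ 5 / 5) := by
    have hcoeff : 0 < ε ^ 2 * (1 / 4 - ε / 5) := by
      have : 0 < 1 / 4 - ε / 5 := by linarith
      positivity
    nlinarith [mul_le_mul_of_nonneg_right hn hcoeff.le, pow_pos hε0 3]
  have hgap : n * (ε ^ 4 / 4 - ε ^ 5 / 5) ≤ n * (ε - Real.log (1 + ε) - ε ^ 2 / 2 + ε ^ 3 / 3) := by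
    gcongr
    linarith
  rw [chernoffExponent, mul_div_cancel_right₀ _ (by positivity)]
  linarith [neg_log_one_sub_le (sq_nonneg ε) (by nlinarith)]

lemma rate_lt_chernoffExponent_half {ε n : ℝ} (hε : 1 / 2 ≤ ε)
    (hn : 4 * (1 + 2 * ε) ≤ n * ε ^ 2) :
    n * (ε ^ 2 / 2 - ε ^ 3 / 3) < chernoffExponent n ε (1 / 2) := by
  have hlog : Real.log (1 + 1 / 2) ≤ 391 / 960 :=
    (log_one_add_le_sum_range (by norm_num) 2).trans_eq (by norm_num [sum_range_succ])
  have hε2 : 0 < ε ^ 2 := by positivity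
  have hn0 : 0 < n := pos_of_mul_pos_left (by linarith) hε2.le
  have hmain : 7 / 24 < n * ((1 + ε) / 3 - 391 / 960 - ε ^ 2 / 2 + ε ^ 3 / 3) := by
    obtain ⟨t, ht, rfl⟩ : ∃ t, 0 ≤ t ∧ ε = 1 / 2 + t := ⟨ε - 1 / 2, by linarith, by ring⟩
    have hcoeff : 0 ≤ 3 / 320 + t / 12 + t ^ 3 / 3 := by positivity
    refine lt_of_mul_lt_mul_right ?_ hε2.le
    nlinarith [mul_le_mul_of_nonneg_right hn hcoeff, pow_nonneg ht 3, pow_nonneg ht 4]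
  have hgap : n * ((1 + ε) / 3 - 391 / 960 - ε ^ 2 / 2 + ε ^ 3 / 3) ≤
      n * (1 / 2 * (1 + ε) / (1 + 1 / 2) - Real.log (1 + 1 / 2) - ε ^ 2 / 2 + ε ^ 3 / 3) := by
    refine mul_le_mul_of_nonneg_left ?_ hn0.le
    norm_num
    linarith
  rw [chernoffExponent]
  linarith [neg_log_one_sub_le (x := (1 / 2) ^ 2) (by norm_num) (by norm_num)]

lemma exists_rate_lt_chernoffExponent {ε n : ℝ} (hε0 : 0 < ε)
    (hn : 4 * (1 + 2 * ε) ≤ n * ε ^ 2) :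
    ∃ c, 0 < c ∧ c < 1 ∧ n * (ε ^ 2 / 2 - ε ^ 3 / 3) < chernoffExponent n ε c := by
  rcases le_total ε (1 / 2) with hε | hε
  · exact ⟨ε, hε0, by linarith, rate_lt_chernoffExponent_self hε0 hε hn⟩
  · exact ⟨1 / 2, by norm_num, by norm_num, rate_lt_chernoffExponent_half hε hn⟩

section

variable {ι : Type*} {s : Finset ι} {x : ι → ℝ}

lemma one_add_sum_le_prod_one_add (hx : ∀ i ∈ s, 0 ≤ x i) :
    1 + ∑ i ∈ s, x i ≤ ∏ i ∈ s, (1 + x i) := by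
  classical
  induction s using Finset.induction_on with
  | empty => simp
  | insert a s ha ih =>
    rw [sum_insert ha, prod_insert ha]
    have hxa := hx a (mem_insert_self a s)
    have hxs (i) (hi : i ∈ s) := hx i (mem_insert_of_mem hi)
    nlinarith [ih hxs, mul_nonneg hxa (sum_nonneg hxs)]

/-- By the matrix determinant lemma the right-hand side is the determinant of
`diagonal (d + x) - √x √xᵀ`. -/
lemma pow_card_mul_one_sub_sq_le {c d : ℝ} (hd : 0 < d) (hc1 : c ≤ 1) (hx : ∀ i ∈ s, 0 ≤ x i)
    (hsum : ∑ i ∈ s, x i ≤ c * d) :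
    d ^ #s * (1 - c ^ 2) ≤ (∏ i ∈ s, (d + x i)) * (1 - ∑ i ∈ s, x i / (d + x i)) := by
  set b := (∑ i ∈ s, x i) / d with hb
  have hb0 : 0 ≤ b := div_nonneg (sum_nonneg hx) hd.le
  have hbc : b ≤ c := (div_le_iff₀ hd).mpr hsum
  have hprod : d ^ #s * (1 + b) ≤ ∏ i ∈ s, (d + x i) := by
    have hfactor : ∏ i ∈ s, (d + x i) = d ^ #s * ∏ i ∈ s, (1 + x i / d) := by
      rw [← prod_const, ← prod_mul_distrib]
      exact prod_congr rfl fun i _ ↦ by field_simp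
    rw [hfactor, hb, sum_div]
    gcongr
    exact one_add_sum_le_prod_one_add fun i hi ↦ div_nonneg (hx i hi) hd.le
  have hsub : 1 - b ≤ 1 - ∑ i ∈ s, x i / (d + x i) := by
    rw [hb, sum_div]
    gcongr with i hi
    · exact hx i hi
    · linarith [hx i hi]
  calc d ^ #s * (1 - c ^ 2) ≤ d ^ #s * ((1 + b) * (1 - b)) := by gcongr; nlinarith
    _ = d ^ #s * (1 + b) * (1 - b) := by ring
    _ ≤ _ :=
      mul_le_mul hprod hsub (by linarith) (prod_nonneg fun i hi ↦ by linarith [hx i hi])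

end

section

variable {Ω : Type*} [MeasurableSpace Ω] {μ : Measure Ω} [IsProbabilityMeasure μ]

/-- Cantelli's inequality: Markov's inequality for `(X - μ[X] + b) ^ 2`, where
`b = Var[X; μ] / a` is the optimal shift. -/
lemma measureReal_mean_add_le_le_variance_div {X : Ω → ℝ} (hX : MemLp X 2 μ) {a : ℝ} (ha : 0 < a) :
    μ.real {ω | μ[X] + a ≤ X ω} ≤ Var[X; μ] / (Var[X; μ] + a ^ 2) := by
  set v := Var[X; μ]
  have hv0 : 0 ≤ v := variance_nonneg X μ
  set b := v / a with hb
  have hb0 : 0 ≤ b := div_nonneg hv0 ha.le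
  set Y : Ω → ℝ := fun ω ↦ X ω - (μ[X] - b) with hY
  have hYL2 : MemLp Y 2 μ := hX.sub (memLp_const _)
  have hYmean : μ[Y] = b := by
    simp [hY, integral_sub (hX.integrable one_le_two) (integrable_const _)]
  have hYvar : Var[Y; μ] = v := variance_sub_const hX.aestronglyMeasurable _
  have hYsq : μ[Y ^ 2] = v + b ^ 2 := by
    rw [← hYvar, variance_eq_sub hYL2, hYmean, sub_add_cancel]
  have hsub : {ω | μ[X] + a ≤ X ω} ⊆ {ω | (a + b) ^ 2 ≤ (Y ^ 2) ω} := by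
    intro ω (hω : μ[X] + a ≤ X ω)
    have hle : a + b ≤ Y ω := by simp only [hY]; linarith
    exact pow_le_pow_left₀ (by positivity) hle 2
  have hmarkov : (a + b) ^ 2 * μ.real {ω | (a + b) ^ 2 ≤ (Y ^ 2) ω} ≤ v + b ^ 2 :=
    hYsq ▸ mul_meas_ge_le_integral_of_nonneg (ae_of_all _ fun ω ↦ sq_nonneg _)
      hYL2.integrable_sq _
  calc μ.real {ω | μ[X] + a ≤ X ω}
      ≤ μ.real {ω | (a + b) ^ 2 ≤ (Y ^ 2) ω} := measureReal_mono hsub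
    _ ≤ (v + b ^ 2) / (a + b) ^ 2 := by rwa [le_div_iff₀' (by positivity)]
    _ = v / (v + a ^ 2) := by rw [hb]; field_simp; ring

end

section

variable {ι : Type*} [Fintype ι]

lemma lintegral_pi_prod {Ω : ι → Type*} [∀ i, MeasurableSpace (Ω i)] {μ : ∀ i, Measure (Ω i)}
    [∀ i, IsProbabilityMeasure (μ i)] (s : Finset ι) {f : ∀ i, Ω i → ℝ≥0∞}
    (hf : ∀ i, Measurable (f i)) :
    ∫⁻ x, ∏ i ∈ s, f i (x i) ∂Measure.pi μ = ∏ i ∈ s, ∫⁻ y, f i y ∂μ i := by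
  have hindep : iIndepFun (fun i (x : ∀ i, Ω i) ↦ f i (x i)) (Measure.pi μ) :=
    iIndepFun_pi fun i ↦ (hf i).aemeasurable
  rw [lintegral_prod_eq_prod_lintegral_of_indepFun s _ hindep
    fun i ↦ (hf i).comp (measurable_pi_apply i)]
  exact prod_congr rfl fun i _ ↦ (measurePreserving_eval μ i).lintegral_comp (hf i)

end

lemma gaussianPDFReal_mul_exp {a : ℝ} (ha : a < 1) (b x : ℝ) :
    gaussianPDFReal 0 1 x * Real.exp (a / 2 * x ^ 2 + b * x) =
      (√(1 - a))⁻¹ * Real.exp (b ^ 2 / (2 * (1 - a))) *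
        gaussianPDFReal (b / (1 - a)) (1 - a).toNNReal⁻¹ x := by
  have hd : 0 < 1 - a := sub_pos.mpr ha
  have hexp : Real.exp (-(x - 0) ^ 2 / (2 * 1)) * Real.exp (a / 2 * x ^ 2 + b * x) =
      Real.exp (b ^ 2 / (2 * (1 - a))) *
        Real.exp (-(x - b / (1 - a)) ^ 2 / (2 * (1 - a)⁻¹)) := by
    rw [← Real.exp_add, ← Real.exp_add]
    congr 1
    field_simp
    ring
  rw [gaussianPDFReal, gaussianPDFReal, NNReal.coe_inv, Real.coe_toNNReal _ hd.le, NNReal.coe_one,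
    mul_assoc, hexp, mul_one, Real.sqrt_mul (by positivity) (1 - a)⁻¹, Real.sqrt_inv]
  have : √(1 - a) ≠ 0 := by positivity
  field_simp

lemma lintegral_exp_sq_add_gaussianReal {a : ℝ} (ha : a < 1) (b : ℝ) :
    ∫⁻ x, ENNReal.ofReal (Real.exp (a / 2 * x ^ 2 + b * x)) ∂gaussianReal 0 1 =
      ENNReal.ofReal ((√(1 - a))⁻¹ * Real.exp (b ^ 2 / (2 * (1 - a)))) := by
  have hvar : (1 - a).toNNReal⁻¹ ≠ 0 := by simpa using ha
  rw [gaussianReal_of_var_ne_zero _ one_ne_zero,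
    lintegral_withDensity_eq_lintegral_mul _ (measurable_gaussianPDF 0 1) (by fun_prop)]
  calc ∫⁻ x, gaussianPDF 0 1 x * ENNReal.ofReal (Real.exp (a / 2 * x ^ 2 + b * x))
      = ∫⁻ x, ENNReal.ofReal ((√(1 - a))⁻¹ * Real.exp (b ^ 2 / (2 * (1 - a)))) *
          gaussianPDF (b / (1 - a)) (1 - a).toNNReal⁻¹ x := by
        refine lintegral_congr fun x ↦ ?_
        rw [gaussianPDF, gaussianPDF, ← ENNReal.ofReal_mul (gaussianPDFReal_nonneg _ _ _),
          gaussianPDFReal_mul_exp ha, ENNReal.ofReal_mul (by positivity)]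
    _ = _ := by
        rw [lintegral_const_mul _ (measurable_gaussianPDF _ _),
          lintegral_gaussianPDF_eq_one _ hvar, mul_one]

lemma ofReal_exp_half_sq (y : ℝ) :
    ENNReal.ofReal (Real.exp (y ^ 2 / 2)) =
      ∫⁻ x, ENNReal.ofReal (Real.exp (y * x)) ∂gaussianReal 0 1 := by
  simpa using (lintegral_exp_sq_add_gaussianReal zero_lt_one y).symm

section

variable {ι : Type*} [Fintype ι] (s : Finset ι)

lemma lintegral_exp_sum_pi_gaussianReal {a : ι → ℝ} (ha : ∀ i, a i < 1) (b : ι → ℝ) :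
    ∫⁻ g, ENNReal.ofReal (Real.exp (∑ i ∈ s, (a i / 2 * g i ^ 2 + b i * g i)))
        ∂Measure.pi (fun _ : ι ↦ gaussianReal 0 1) =
      ENNReal.ofReal ((√(∏ i ∈ s, (1 - a i)))⁻¹ *
        Real.exp ((∑ i ∈ s, b i ^ 2 / (1 - a i)) / 2)) := by
  simp only [Real.exp_sum, ENNReal.ofReal_prod_of_nonneg fun _ _ ↦ (Real.exp_pos _).le]
  rw [lintegral_pi_prod s (f := fun i x ↦ ENNReal.ofReal (Real.exp (a i / 2 * x ^ 2 + b i * x)))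
    fun i ↦ by fun_prop]
  simp only [lintegral_exp_sq_add_gaussianReal (ha _)]
  rw [← ENNReal.ofReal_prod_of_nonneg fun i _ ↦ by positivity, prod_mul_distrib, prod_inv_distrib,
    ← Real.exp_sum, Real.sqrt_prod s fun i _ ↦ (sub_pos.mpr (ha i)).le, sum_div]
  simp only [div_div, mul_comm (2 : ℝ)]

lemma ofReal_exp_half_sum_sq (y : ι → ℝ) :
    ENNReal.ofReal (Real.exp ((∑ i ∈ s, y i ^ 2) / 2)) =
      ∫⁻ g, ENNReal.ofReal (Real.exp (∑ i ∈ s, y i * g i))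
        ∂Measure.pi (fun _ : ι ↦ gaussianReal 0 1) := by
  simpa using (lintegral_exp_sum_pi_gaussianReal s (a := 0) (fun _ ↦ zero_lt_one) y).symm

/-- The radicand is the determinant of `diagonal (1 - a) - b bᵀ`. Linearizing the square of
`∑ i ∈ s, b i * g i` with one more Gaussian reduces the claim to the diagonal case. -/
lemma lintegral_exp_half_sum_sq_add_sq {a b : ι → ℝ} (ha : ∀ i, a i < 1)
    (hb : ∑ i ∈ s, b i ^ 2 / (1 - a i) < 1) :
    ∫⁻ g, ENNReal.ofReal (Real.exp ((∑ i ∈ s, a i * g i ^ 2 + (∑ i ∈ s, b i * g i) ^ 2) / 2))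
        ∂Measure.pi (fun _ : ι ↦ gaussianReal 0 1) =
      ENNReal.ofReal
        (√((∏ i ∈ s, (1 - a i)) * (1 - ∑ i ∈ s, b i ^ 2 / (1 - a i))))⁻¹ := by
  set γ := Measure.pi fun _ : ι ↦ gaussianReal 0 1
  set q := ∑ i ∈ s, b i ^ 2 / (1 - a i) with hq
  set D := (√(∏ i ∈ s, (1 - a i)))⁻¹ with hD
  have hlinearize (g : ι → ℝ) :
      ENNReal.ofReal (Real.exp ((∑ i ∈ s, a i * g i ^ 2 + (∑ i ∈ s, b i * g i) ^ 2) / 2)) =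
        ∫⁻ x, ENNReal.ofReal (Real.exp (∑ i ∈ s, (a i / 2 * g i ^ 2 + x * b i * g i)))
          ∂gaussianReal 0 1 := by
    rw [add_div, Real.exp_add, ENNReal.ofReal_mul (by positivity), ofReal_exp_half_sq,
      ← lintegral_const_mul _ (by fun_prop)]
    refine lintegral_congr fun x ↦ ?_
    rw [← ENNReal.ofReal_mul (by positivity), ← Real.exp_add, sum_add_distrib, sum_div, sum_mul]
    congr 3 <;> exact sum_congr rfl fun i _ ↦ by ring
  have hinner (x : ℝ) :
      ∫⁻ g, ENNReal.ofReal (Real.exp (∑ i ∈ s, (a i / 2 * g i ^ 2 + x * b i * g i))) ∂γ =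
        ENNReal.ofReal D * ENNReal.ofReal (Real.exp (q / 2 * x ^ 2 + 0 * x)) := by
    have hscale : ∑ i ∈ s, (x * b i) ^ 2 / (1 - a i) = q * x ^ 2 := by
      rw [hq, sum_mul]
      exact sum_congr rfl fun i _ ↦ by ring
    rw [lintegral_exp_sum_pi_gaussianReal s ha, hscale, ENNReal.ofReal_mul (by positivity)]
    congr 3
    ring
  calc ∫⁻ g, ENNReal.ofReal
          (Real.exp ((∑ i ∈ s, a i * g i ^ 2 + (∑ i ∈ s, b i * g i) ^ 2) / 2)) ∂γ
      = ∫⁻ x, ∫⁻ g, ENNReal.ofReal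
          (Real.exp (∑ i ∈ s, (a i / 2 * g i ^ 2 + x * b i * g i))) ∂γ ∂gaussianReal 0 1 := by
        simp only [hlinearize]
        exact lintegral_lintegral_swap (by fun_prop)
    _ = ENNReal.ofReal D * ENNReal.ofReal (√(1 - q))⁻¹ := by
        simp only [hinner]
        rw [lintegral_const_mul _ (by fun_prop), lintegral_exp_sq_add_gaussianReal hb]
        simp
    _ = _ := by
        rw [← ENNReal.ofReal_mul (by positivity), hD, ← mul_inv,
          Real.sqrt_mul (prod_nonneg fun i _ ↦ (sub_pos.mpr (ha i)).le)]

end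

section

variable {ι : Type*} [LinearOrder ι]

lemma eq_of_sym2_eq_of_le {p q : ι × ι} (hp : p.1 ≤ p.2) (hq : q.1 ≤ q.2)
    (h : s(p.1, p.2) = s(q.1, q.2)) : p = q := by
  rcases Sym2.eq_iff.mp h with ⟨h1, h2⟩ | ⟨h1, h2⟩
  · exact Prod.ext h1 h2
  · exact Prod.ext (by order) (by order)

variable [Fintype ι]

lemma sum_prod_eq_sum_filter_le {M : Type*} [AddCommMonoid M] (F : ι × ι → M) :
    ∑ p, F p = ∑ p : ι × ι with p.1 ≤ p.2, (F p + if p.1 = p.2 then 0 else F p.swap) := by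
  have hlower : ∑ p : ι × ι with ¬p.1 ≤ p.2, F p =
      ∑ p : ι × ι with p.1 ≤ p.2 ∧ p.1 ≠ p.2, F p.swap :=
    sum_equiv (Equiv.prodComm ι ι) (by simp [lt_iff_le_and_ne, eq_comm]) (by simp)
  rw [← sum_filter_add_sum_filter_not univ (fun p : ι × ι ↦ p.1 ≤ p.2), hlower, sum_add_distrib,
    ← filter_filter, sum_filter (fun p : ι × ι ↦ p.1 ≠ p.2)]
  simp only [ne_eq, ite_not]

lemma sum_filter_le_sq_eq (α u : ι → ℝ) :
    ∑ p : ι × ι with p.1 ≤ p.2, (u p.1 * α p.2 + if p.1 = p.2 then 0 else u p.2 * α p.1) ^ 2 =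
      ∑ i, (∑ k, α k ^ 2 - α i ^ 2) * u i ^ 2 + (∑ i, α i * u i) ^ 2 := by
  set G : ι × ι → ℝ := fun p ↦ α p.2 ^ 2 * u p.1 ^ 2 + α p.1 * u p.1 * (α p.2 * u p.2) -
    if p.1 = p.2 then α p.1 ^ 2 * u p.1 ^ 2 else 0 with hG
  have hsq (p : ι × ι) : (u p.1 * α p.2 + if p.1 = p.2 then 0 else u p.2 * α p.1) ^ 2 =
      G p + if p.1 = p.2 then 0 else G p.swap := by
    rcases p with ⟨i, k⟩
    by_cases h : i = k
    · subst h
      simp only [hG, if_true]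
      ring
    · simp only [hG, Prod.fst_swap, Prod.snd_swap, if_neg h, if_neg (Ne.symm h)]
      ring
  simp only [hsq]
  rw [← sum_prod_eq_sum_filter_le, sq (∑ i, α i * u i), sum_mul_sum]
  simp only [hG, Fintype.sum_prod_type, sum_sub_distrib, sum_add_distrib, sum_ite_eq, mem_univ,
    if_true, sub_mul, sum_mul]
  ring

end

section

variable {N : ℕ}

instance : IsProbabilityMeasure (μsym N) := PMF.toMeasure.isProbabilityMeasure _

lemma integral_μsym (f : (Fin N → Fin N → Bool) → ℝ) :
    ∫ ω, f ω ∂μsym N = ∑ ω, (Fintype.card (Fin N → Fin N → Bool) : ℝ)⁻¹ * f ω := by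
  rw [μsym, PMF.integral_eq_sum]
  simp

lemma rad_not (b : Bool) : rad (!b) = -rad b := by cases b <;> simp [rad]

lemma rsym_mul_self (ω : Fin N → Fin N → Bool) (i k : Fin N) : rsym ω i k * rsym ω i k = 1 := by
  have hrad (b : Bool) : rad b * rad b = 1 := by cases b <;> simp [rad]
  unfold rsym
  split_ifs <;> exact hrad _

lemma rsym_comm (ω : Fin N → Fin N → Bool) (i k : Fin N) : rsym ω i k = rsym ω k i := by
  rcases lt_trichotomy i k with h | rfl | h
  · simp [rsym, h.le, h.not_ge]
  · rfl
  · simp [rsym, h.le, h.not_ge]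

/-- The reversal of the sign of the entries `(i, k)` and `(k, i)` of the random matrix `rsym`. It
preserves `μsym`, so it stands in for the independence of `rsym ω i k` from the other entries. Both
`ω i k` and `ω k i` are negated, although only one of them enters `rsym`, to avoid comparing `i` and
`k`. -/
def flipEntry (i k : Fin N) (ω : Fin N → Fin N → Bool) : Fin N → Fin N → Bool :=
  fun a b ↦ if s(a, b) = s(i, k) then !ω a b else ω a b

lemma flipEntry_involutive (i k : Fin N) : Function.Involutive (flipEntry i k) := by
  intro ω
  funext a b
  unfold flipEntry
  split_ifs <;> simp

lemma rsym_flipEntry (i k a b : Fin N) (ω : Fin N → Fin N → Bool) :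
    rsym (flipEntry i k ω) a b = if s(a, b) = s(i, k) then -rsym ω a b else rsym ω a b := by
  unfold rsym flipEntry
  rw [Sym2.eq_swap (a := b)]
  split_ifs <;> simp only [rad_not]

lemma rsym_flipEntry_of_ne {i k a b : Fin N} (h : s(a, b) ≠ s(i, k)) (ω : Fin N → Fin N → Bool) :
    rsym (flipEntry i k ω) a b = rsym ω a b := by
  rw [rsym_flipEntry, if_neg h]

lemma integral_comp_flipEntry (i k : Fin N) (f : (Fin N → Fin N → Bool) → ℝ) :
    ∫ ω, f (flipEntry i k ω) ∂μsym N = ∫ ω, f ω ∂μsym N := by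
  simp only [integral_μsym]
  exact Equiv.sum_comp (flipEntry_involutive i k).toPerm
    fun ω ↦ (Fintype.card (Fin N → Fin N → Bool) : ℝ)⁻¹ * f ω

lemma integral_rsym_mul_eq_zero {i k : Fin N} {f : (Fin N → Fin N → Bool) → ℝ}
    (hf : ∀ ω, f (flipEntry i k ω) = f ω) : ∫ ω, rsym ω i k * f ω ∂μsym N = 0 := by
  have hflip := integral_comp_flipEntry i k fun ω ↦ rsym ω i k * f ω
  simp only [rsym_flipEntry, if_true, hf, neg_mul, integral_neg] at hflip
  linarith

lemma integral_exp_rsym_mul {i k : Fin N} {f : (Fin N → Fin N → Bool) → ℝ}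
    (hf : ∀ ω, f (flipEntry i k ω) = f ω) (c : ℝ) :
    ∫ ω, Real.exp (rsym ω i k * c) * f ω ∂μsym N = Real.cosh c * ∫ ω, f ω ∂μsym N := by
  have hexp (ω) : Real.exp (rsym ω i k * c) = Real.cosh c + rsym ω i k * Real.sinh c := by
    rcases mul_self_eq_one_iff.mp (rsym_mul_self ω i k) with h | h <;>
      simp [h, Real.cosh_eq, Real.sinh_eq] <;> ring
  simp only [hexp, add_mul, mul_right_comm _ (Real.sinh c)]
  rw [integral_add .of_finite .of_finite, integral_const_mul, integral_mul_const,
    integral_rsym_mul_eq_zero hf, zero_mul, add_zero]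

lemma integral_exp_sum_rsym_mul_le {s : Finset (Fin N × Fin N)} (hs : ∀ p ∈ s, p.1 ≤ p.2)
    (c : Fin N × Fin N → ℝ) :
    ∫ ω, Real.exp (∑ p ∈ s, rsym ω p.1 p.2 * c p) ∂μsym N ≤
      Real.exp ((∑ p ∈ s, c p ^ 2) / 2) := by
  induction s using Finset.induction_on with
  | empty => simp
  | insert p s hp ih =>
    obtain ⟨hp_le, hs⟩ := (forall_mem_insert _ _ _).mp hs
    have hinv (ω) : Real.exp (∑ q ∈ s, rsym (flipEntry p.1 p.2 ω) q.1 q.2 * c q) =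
        Real.exp (∑ q ∈ s, rsym ω q.1 q.2 * c q) := by
      congr 1
      refine sum_congr rfl fun q hq ↦ ?_
      have hsym : s(q.1, q.2) ≠ s(p.1, p.2) := fun h ↦
        hp (eq_of_sym2_eq_of_le (hs q hq) hp_le h ▸ hq)
      rw [rsym_flipEntry_of_ne hsym]
    simp only [sum_insert hp, Real.exp_add, add_div]
    rw [integral_exp_rsym_mul hinv]
    gcongr
    · exact Real.cosh_le_exp_half_sq _
    · exact ih hs

/-- The `i`-th coordinate of the image of `α` under the random sign matrix `rsym`. -/
def rowSum (α : Fin N → ℝ) (i : Fin N) (ω : Fin N → Fin N → Bool) : ℝ :=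
  ∑ k, rsym ω i k * α k

/-- The sum of the squares of the coordinates in `I` of the image of `α` under the random sign
matrix `rsym`. -/
def rowEnergy (α : Fin N → ℝ) (I : Finset (Fin N)) (ω : Fin N → Fin N → Bool) : ℝ :=
  ∑ i ∈ I, rowSum α i ω ^ 2

lemma integral_exp_sum_univ_mul_rowSum_le (α u : Fin N → ℝ) :
    ∫ ω, Real.exp (∑ i, u i * rowSum α i ω) ∂μsym N ≤
      Real.exp ((∑ i, (∑ k, α k ^ 2 - α i ^ 2) * u i ^ 2 + (∑ i, α i * u i) ^ 2) / 2) := by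
  set c : Fin N × Fin N → ℝ := fun p ↦
    u p.1 * α p.2 + if p.1 = p.2 then 0 else u p.2 * α p.1 with hc
  have hlinear (ω : Fin N → Fin N → Bool) : ∑ i, u i * rowSum α i ω =
      ∑ p : Fin N × Fin N with p.1 ≤ p.2, rsym ω p.1 p.2 * c p := by
    simp only [rowSum, mul_sum]
    rw [← Fintype.sum_prod_type' fun i k ↦ u i * (rsym ω i k * α k), sum_prod_eq_sum_filter_le]
    refine sum_congr rfl fun p _ ↦ ?_
    simp only [hc, Prod.fst_swap, Prod.snd_swap, rsym_comm ω p.2]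
    split_ifs <;> ring
  simp only [hlinear, ← sum_filter_le_sq_eq]
  exact integral_exp_sum_rsym_mul_le (by simp) c

lemma integral_exp_sum_mul_rowSum_le (α u : Fin N → ℝ) (I : Finset (Fin N)) :
    ∫ ω, Real.exp (∑ i ∈ I, u i * rowSum α i ω) ∂μsym N ≤
      Real.exp ((∑ i ∈ I, (∑ k, α k ^ 2 - α i ^ 2) * u i ^ 2 + (∑ i ∈ I, α i * u i) ^ 2) / 2) := by
  simpa [sum_ite_mem] using integral_exp_sum_univ_mul_rowSum_le α fun i ↦ if i ∈ I then u i else 0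

/-- Both squarings are linearized by Gaussians: first the squares of the row sums, then, inside the
Gaussian integral, the square left over by the entries shared between rows. -/
lemma lintegral_exp_half_rowEnergy_le {β : Fin N → ℝ} {d : ℝ} (hd : d = 1 - ∑ k, β k ^ 2)
    (hd0 : 0 < d) {I : Finset (Fin N)} (hI : ∑ i ∈ I, β i ^ 2 / (d + β i ^ 2) < 1) :
    ∫⁻ ω, ENNReal.ofReal (Real.exp (rowEnergy β I ω / 2)) ∂μsym N ≤
      ENNReal.ofReal
        (√((∏ i ∈ I, (d + β i ^ 2)) * (1 - ∑ i ∈ I, β i ^ 2 / (d + β i ^ 2))))⁻¹ := by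
  set γ := Measure.pi fun _ : Fin N ↦ gaussianReal 0 1
  have hmeas (i : Fin N) : Measurable (rowSum β i) := .of_discrete
  have hcoeff (i : Fin N) : 1 - (∑ k, β k ^ 2 - β i ^ 2) = d + β i ^ 2 := by rw [hd]; ring
  have hrow (g : Fin N → ℝ) :
      ∫⁻ ω, ENNReal.ofReal (Real.exp (∑ i ∈ I, rowSum β i ω * g i)) ∂μsym N ≤
        ENNReal.ofReal (Real.exp
          ((∑ i ∈ I, (∑ k, β k ^ 2 - β i ^ 2) * g i ^ 2 + (∑ i ∈ I, β i * g i) ^ 2) / 2)) := by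
    rw [← ofReal_integral_eq_lintegral_ofReal .of_finite (ae_of_all _ fun _ ↦ (Real.exp_pos _).le)]
    simp only [mul_comm (rowSum _ _ _)]
    exact ENNReal.ofReal_le_ofReal (integral_exp_sum_mul_rowSum_le β g I)
  calc ∫⁻ ω, ENNReal.ofReal (Real.exp (rowEnergy β I ω / 2)) ∂μsym N
      = ∫⁻ ω, ∫⁻ g, ENNReal.ofReal (Real.exp (∑ i ∈ I, rowSum β i ω * g i)) ∂γ ∂μsym N := by
        simp only [rowEnergy, ofReal_exp_half_sum_sq, γ]
    _ = ∫⁻ g, ∫⁻ ω, ENNReal.ofReal (Real.exp (∑ i ∈ I, rowSum β i ω * g i)) ∂μsym N ∂γ :=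
        lintegral_lintegral_swap (by fun_prop)
    _ ≤ ∫⁻ g, ENNReal.ofReal (Real.exp
          ((∑ i ∈ I, (∑ k, β k ^ 2 - β i ^ 2) * g i ^ 2 + (∑ i ∈ I, β i * g i) ^ 2) / 2)) ∂γ :=
        lintegral_mono hrow
    _ = _ := by
        rw [lintegral_exp_half_sum_sq_add_sq I (fun i ↦ by linarith [hcoeff i, sq_nonneg (β i)])]
        · simp only [hcoeff]
        · simpa only [hcoeff] using hI

lemma mgf_rowEnergy_le {α : Fin N → ℝ} (hα : ∑ k, α k ^ 2 = 1) (I : Finset (Fin N)) {c : ℝ}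
    (hc0 : 0 < c) (hc1 : c < 1) :
    mgf (rowEnergy α I) (μsym N) (c / (2 * (1 + c))) ≤
      (√((1 - c ^ 2) / (1 + c) ^ #I))⁻¹ := by
  set d := (1 + c)⁻¹ with hd
  have hd0 : 0 < d := by positivity
  have hcd : 0 < c * d := by positivity
  have hd_eq : d = 1 - c * d := by rw [hd]; field_simp; ring
  set β : Fin N → ℝ := fun k ↦ √(c * d) * α k with hβ
  have hβsq (k : Fin N) : β k ^ 2 = c * d * α k ^ 2 := by rw [hβ, mul_pow, Real.sq_sqrt hcd.le]
  have hβsum : ∑ k, β k ^ 2 = c * d := by simp only [hβsq, ← mul_sum, hα, mul_one]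
  have hβI : ∑ i ∈ I, β i ^ 2 ≤ c * d :=
    hβsum ▸ sum_le_univ_sum_of_nonneg fun k ↦ sq_nonneg (β k)
  have hdet := pow_card_mul_one_sub_sq_le hd0 hc1.le (fun i _ ↦ sq_nonneg (β i)) hβI
  have hdet0 : 0 < d ^ #I * (1 - c ^ 2) := mul_pos (by positivity) (by nlinarith)
  have hsum_lt : ∑ i ∈ I, β i ^ 2 / (d + β i ^ 2) < 1 :=
    sub_pos.mp (pos_of_mul_pos_right (hdet0.trans_le hdet)
      (prod_nonneg fun i _ ↦ by positivity))
  have henergy (ω) : c / (2 * (1 + c)) * rowEnergy α I ω = rowEnergy β I ω / 2 := by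
    simp only [rowEnergy, rowSum, hβ, mul_left_comm _ √(c * d), ← mul_sum, mul_pow,
      Real.sq_sqrt hcd.le]
    rw [hd]
    field_simp
  have hle := lintegral_exp_half_rowEnergy_le (hβsum ▸ hd_eq) hd0 hsum_lt
  rw [← ofReal_integral_eq_lintegral_ofReal .of_finite (ae_of_all _ fun _ ↦ (Real.exp_pos _).le),
    ENNReal.ofReal_le_ofReal_iff (by positivity)] at hle
  calc mgf (rowEnergy α I) (μsym N) (c / (2 * (1 + c)))
      = ∫ ω, Real.exp (rowEnergy β I ω / 2) ∂μsym N := by simp only [mgf, henergy]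
    _ ≤ (√((∏ i ∈ I, (d + β i ^ 2)) * (1 - ∑ i ∈ I, β i ^ 2 / (d + β i ^ 2))))⁻¹ := hle
    _ ≤ (√(d ^ #I * (1 - c ^ 2)))⁻¹ := by gcongr
    _ = (√((1 - c ^ 2) / (1 + c) ^ #I))⁻¹ := by rw [hd, inv_pow, inv_mul_eq_div]

lemma rowSum_flipEntry_of_ne {i j k : Fin N} (hij : i ≠ j) (hkj : k ≠ j) (α : Fin N → ℝ)
    (ω : Fin N → Fin N → Bool) : rowSum α j (flipEntry i k ω) = rowSum α j ω := by
  have hsym (l : Fin N) : s(j, l) ≠ s(i, k) := by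
    rw [Ne, Sym2.eq_iff]
    tauto
  simp only [rowSum, rsym_flipEntry_of_ne (hsym _)]

lemma integral_rsym_mul_rsym_mul {i j : Fin N} {f : (Fin N → Fin N → Bool) → ℝ}
    (hf : ∀ k ≠ j, ∀ ω, f (flipEntry i k ω) = f ω) (k l : Fin N) :
    ∫ ω, rsym ω i k * rsym ω i l * f ω ∂μsym N = if k = l then ∫ ω, f ω ∂μsym N else 0 := by
  split_ifs with hkl
  · subst hkl
    simp only [rsym_mul_self, one_mul]
  · wlog hkj : k ≠ j generalizing k l
    · simp only [mul_comm (rsym _ i k)]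
      exact this l k (Ne.symm hkl) fun hlj ↦ hkl ((not_not.mp hkj).trans hlj.symm)
    simp only [mul_assoc]
    refine integral_rsym_mul_eq_zero fun ω ↦ ?_
    rw [rsym_flipEntry_of_ne (Sym2.congr_right.not.mpr (Ne.symm hkl)), hf k hkj]

lemma integral_sq_sum_rsym_mul {i j : Fin N} {f : (Fin N → Fin N → Bool) → ℝ}
    (hf : ∀ k ≠ j, ∀ ω, f (flipEntry i k ω) = f ω) (α : Fin N → ℝ) (s : Finset (Fin N)) :
    ∫ ω, (∑ k ∈ s, rsym ω i k * α k) ^ 2 * f ω ∂μsym N =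
      (∑ k ∈ s, α k ^ 2) * ∫ ω, f ω ∂μsym N := by
  have hexpand (ω : Fin N → Fin N → Bool) : (∑ k ∈ s, rsym ω i k * α k) ^ 2 * f ω =
      ∑ k ∈ s, ∑ l ∈ s, α k * α l * (rsym ω i k * rsym ω i l * f ω) := by
    rw [sq, sum_mul_sum, sum_mul]
    refine sum_congr rfl fun k _ ↦ ?_
    rw [sum_mul]
    exact sum_congr rfl fun l _ ↦ by ring
  simp only [hexpand]
  rw [integral_finsetSum _ fun _ _ ↦ .of_finite, sum_mul]
  refine sum_congr rfl fun k hk ↦ ?_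
  rw [integral_finsetSum _ fun _ _ ↦ .of_finite]
  simp only [integral_const_mul, integral_rsym_mul_rsym_mul hf, mul_ite, mul_zero, sum_ite_eq, hk,
    if_true, sq]

lemma integral_sq_sum_rsym (α : Fin N → ℝ) (i : Fin N) (s : Finset (Fin N)) :
    ∫ ω, (∑ k ∈ s, rsym ω i k * α k) ^ 2 ∂μsym N = ∑ k ∈ s, α k ^ 2 := by
  simpa using integral_sq_sum_rsym_mul (i := i) (j := i) (f := fun _ ↦ 1) (by simp) α s

lemma integral_pow_four_sum_rsym_le (α : Fin N → ℝ) (i : Fin N) (s : Finset (Fin N)) :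
    ∫ ω, (∑ k ∈ s, rsym ω i k * α k) ^ 4 ∂μsym N ≤ 3 * (∑ k ∈ s, α k ^ 2) ^ 2 := by
  induction s using Finset.induction_on with
  | empty => simp
  | insert k s hk ih =>
    set Y : (Fin N → Fin N → Bool) → ℝ := fun ω ↦ ∑ l ∈ s, rsym ω i l * α l
    have hinv (ω) : Y (flipEntry i k ω) = Y ω := sum_congr rfl fun l hl ↦ by
      rw [rsym_flipEntry_of_ne (Sym2.congr_right.not.mpr (ne_of_mem_of_not_mem hl hk))]
    have hexpand (ω) : (rsym ω i k * α k + Y ω) ^ 4 =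
        rsym ω i k * (4 * α k ^ 3 * Y ω + 4 * α k * Y ω ^ 3) +
          (α k ^ 4 + 6 * α k ^ 2 * Y ω ^ 2 + Y ω ^ 4) := by
      have hsq := rsym_mul_self ω i k
      linear_combination (α k ^ 4 * (rsym ω i k * rsym ω i k + 1) +
        4 * rsym ω i k * α k ^ 3 * Y ω + 6 * α k ^ 2 * Y ω ^ 2) * hsq
    have hodd : ∫ ω, rsym ω i k * (4 * α k ^ 3 * Y ω + 4 * α k * Y ω ^ 3) ∂μsym N = 0 :=
      integral_rsym_mul_eq_zero fun ω ↦ by rw [hinv]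
    have hsecond : ∫ ω, Y ω ^ 2 ∂μsym N = ∑ l ∈ s, α l ^ 2 := integral_sq_sum_rsym α i s
    simp only [sum_insert hk]
    calc ∫ ω, (rsym ω i k * α k + Y ω) ^ 4 ∂μsym N
        = α k ^ 4 + 6 * α k ^ 2 * ∑ l ∈ s, α l ^ 2 + ∫ ω, Y ω ^ 4 ∂μsym N := by
          simp only [hexpand]
          rw [integral_add .of_finite .of_finite, hodd, integral_add .of_finite .of_finite,
            integral_add .of_finite .of_finite, integral_const_mul, hsecond]
          simp
      _ ≤ 3 * (α k ^ 2 + ∑ l ∈ s, α l ^ 2) ^ 2 := by nlinarith [sq_nonneg (α k ^ 2)]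

lemma integral_rowSum_sq (α : Fin N → ℝ) (i : Fin N) :
    ∫ ω, rowSum α i ω ^ 2 ∂μsym N = ∑ k, α k ^ 2 :=
  integral_sq_sum_rsym α i univ

lemma covariance_rowSum_sq_eq_zero (α : Fin N → ℝ) {i j : Fin N} (hij : i ≠ j) :
    cov[fun ω ↦ rowSum α i ω ^ 2, fun ω ↦ rowSum α j ω ^ 2; μsym N] = 0 := by
  have hprod : ∫ ω, rowSum α i ω ^ 2 * rowSum α j ω ^ 2 ∂μsym N =
      (∑ k, α k ^ 2) * ∫ ω, rowSum α j ω ^ 2 ∂μsym N :=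
    integral_sq_sum_rsym_mul (fun k hk ω ↦ by rw [rowSum_flipEntry_of_ne hij hk]) α univ
  rw [covariance_eq_sub .of_discrete .of_discrete, integral_rowSum_sq α i]
  exact sub_eq_zero.mpr hprod

lemma variance_rowSum_sq_le (α : Fin N → ℝ) (i : Fin N) :
    Var[fun ω ↦ rowSum α i ω ^ 2; μsym N] ≤ 2 * (∑ k, α k ^ 2) ^ 2 := by
  have hfourth : ∫ ω, (rowSum α i ω ^ 2) ^ 2 ∂μsym N ≤ 3 * (∑ k, α k ^ 2) ^ 2 := by
    simp only [← pow_mul]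
    exact integral_pow_four_sum_rsym_le α i univ
  rw [variance_eq_sub .of_discrete, integral_rowSum_sq]
  exact (sub_le_sub_right hfourth _).trans_eq (by ring)

lemma integral_rowEnergy (α : Fin N → ℝ) (I : Finset (Fin N)) :
    ∫ ω, rowEnergy α I ω ∂μsym N = #I * ∑ k, α k ^ 2 := by
  simp only [rowEnergy]
  rw [integral_finsetSum _ fun _ _ ↦ .of_finite]
  simp only [integral_rowSum_sq, sum_const, nsmul_eq_mul]

lemma variance_rowEnergy_le (α : Fin N → ℝ) (I : Finset (Fin N)) :
    Var[rowEnergy α I; μsym N] ≤ 2 * #I * (∑ k, α k ^ 2) ^ 2 := by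
  have hsum : rowEnergy α I = ∑ i ∈ I, fun ω ↦ rowSum α i ω ^ 2 := by
    ext ω
    simp [rowEnergy]
  rw [hsum, variance_sum' fun _ _ ↦ .of_discrete]
  calc ∑ i ∈ I, ∑ j ∈ I, cov[fun ω ↦ rowSum α i ω ^ 2, fun ω ↦ rowSum α j ω ^ 2; μsym N]
      = ∑ i ∈ I, Var[fun ω ↦ rowSum α i ω ^ 2; μsym N] := by
        refine sum_congr rfl fun i hi ↦ ?_
        rw [sum_eq_single_of_mem i hi fun j _ hj ↦ covariance_rowSum_sq_eq_zero α hj.symm,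
          covariance_self Measurable.of_discrete.aemeasurable]
    _ ≤ ∑ _i ∈ I, 2 * (∑ k, α k ^ 2) ^ 2 := sum_le_sum fun i _ ↦ variance_rowSum_sq_le α i
    _ = 2 * #I * (∑ k, α k ^ 2) ^ 2 := by rw [sum_const, nsmul_eq_mul]; ring

lemma measureReal_rowEnergy_ge_le_inv {α : Fin N → ℝ} (hα : ∑ k, α k ^ 2 = 1) {I : Finset (Fin N)}
    (hI : I.Nonempty) {ε : ℝ} (hε : 0 < ε) :
    (μsym N).real {ω | (1 + ε) * #I ≤ rowEnergy α I ω} ≤ (1 + #I * ε ^ 2 / 2)⁻¹ := by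
  have hcard : (0 : ℝ) < #I := by exact_mod_cast hI.card_pos
  have hcantelli := measureReal_mean_add_le_le_variance_div (μ := μsym N) (X := rowEnergy α I)
    .of_discrete (mul_pos hε hcard)
  have hvar : Var[rowEnergy α I; μsym N] ≤ 2 * #I := by
    simpa [hα] using variance_rowEnergy_le α I
  have hvar0 := variance_nonneg (rowEnergy α I) (μsym N)
  rw [integral_rowEnergy, hα, mul_one, ← one_add_mul] at hcantelli
  refine hcantelli.trans ?_
  rw [inv_eq_one_div, div_le_div_iff₀ (by positivity) (by positivity)]
  have hscaled : #I * ε ^ 2 / 2 * Var[rowEnergy α I; μsym N] ≤ #I * ε ^ 2 / 2 * (2 * #I) := by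
    gcongr
  linarith

lemma measureReal_rowEnergy_ge_le_exp {α : Fin N → ℝ} (hα : ∑ k, α k ^ 2 = 1) (I : Finset (Fin N))
    (ε : ℝ) {c : ℝ} (hc0 : 0 < c) (hc1 : c < 1) :
    (μsym N).real {ω | (1 + ε) * #I ≤ rowEnergy α I ω} ≤
      Real.exp (-chernoffExponent #I ε c / 2) := by
  have hc2 : 0 < 1 - c ^ 2 := by nlinarith
  calc (μsym N).real {ω | (1 + ε) * #I ≤ rowEnergy α I ω}
      ≤ Real.exp (-(c / (2 * (1 + c))) * ((1 + ε) * #I)) *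
          mgf (rowEnergy α I) (μsym N) (c / (2 * (1 + c))) :=
        measure_ge_le_exp_mul_mgf _ (by positivity) .of_finite
    _ ≤ Real.exp (-(c / (2 * (1 + c))) * ((1 + ε) * #I)) *
          (√((1 - c ^ 2) / (1 + c) ^ #I))⁻¹ := by
        gcongr
        exact mgf_rowEnergy_le hα I hc0 hc1
    _ = Real.exp (-chernoffExponent #I ε c / 2) := by
        rw [← Real.exp_log (inv_pos.mpr (Real.sqrt_pos.mpr (div_pos hc2 (by positivity)))),
          ← Real.exp_add, Real.log_inv, Real.log_sqrt (by positivity),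
          Real.log_div hc2.ne' (by positivity), Real.log_pow, chernoffExponent]
        congr 1
        field_simp
        ring

lemma measureReal_rowEnergy_ge_lt {α : Fin N → ℝ} (hα : ∑ k, α k ^ 2 = 1) {I : Finset (Fin N)}
    (hI : I.Nonempty) {ε : ℝ} (hε : 0 < ε) :
    (μsym N).real {ω | (1 + ε) * #I ≤ rowEnergy α I ω} <
      Real.exp (-(#I / 2) * (ε ^ 2 / 2 - ε ^ 3 / 3)) := by
  have hcard : (0 : ℝ) < #I := by exact_mod_cast hI.card_pos
  rcases le_total (#I * ε ^ 2 / 4) (1 + 2 * ε) with hsmall | hlarge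
  · calc (μsym N).real {ω | (1 + ε) * #I ≤ rowEnergy α I ω}
        ≤ (1 + #I * ε ^ 2 / 2)⁻¹ := measureReal_rowEnergy_ge_le_inv hα hI hε
      _ = (1 + 2 * (#I * ε ^ 2 / 4))⁻¹ := by ring
      _ < (Real.exp ((1 - 2 * ε / 3) * (#I * ε ^ 2 / 4)))⁻¹ :=
        inv_strictAnti₀ (Real.exp_pos _) (exp_mul_lt_one_add_two_mul hε.le (by positivity) hsmall)
      _ = Real.exp (-(#I / 2) * (ε ^ 2 / 2 - ε ^ 3 / 3)) := by
        rw [← Real.exp_neg]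
        congr 1
        ring
  · obtain ⟨c, hc0, hc1, hrate⟩ := exists_rate_lt_chernoffExponent hε (n := #I) (by linarith)
    refine (measureReal_rowEnergy_ge_le_exp hα I ε hc0 hc1).trans_lt (Real.exp_lt_exp.mpr ?_)
    linarith

lemma S_eq_rowEnergy_div {n : ℕ} (hn : n ≤ N) (α : Fin N → ℝ) (ω : Fin N → Fin N → Bool) :
    S hn α ω = rowEnergy α (univ.map (Fin.castLEEmb hn)) ω / N := by
  simp only [S, Q, rowEnergy, rowSum, sum_map, Fin.coe_castLEEmb, mul_pow, inv_pow,
    Real.sq_sqrt N.cast_nonneg, ← mul_sum, div_eq_inv_mul]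

end

theorem stmt2_general {N n : ℕ} (hn1 : 1 ≤ n) (hnN : n ≤ N) (α : Fin N → ℝ)
    (hα : ∑ k, (α k) ^ 2 = 1) (ε : ℝ) (hε0 : 0 < ε) :
    (μsym N) {ω | S hnN α ω > (1 + ε) * n / N}
      < ENNReal.ofReal (Real.exp (-((n : ℝ) / 2) * (ε ^ 2 / 2 - ε ^ 3 / 3))) := by
  set I : Finset (Fin N) := univ.map (Fin.castLEEmb hnN)
  have hcard : #I = n := by simp [I]
  have hI : I.Nonempty := card_pos.mp (by omega)
  have hN : (0 : ℝ) < N := by exact_mod_cast hn1.trans hnN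
  have hsub : {ω | S hnN α ω > (1 + ε) * n / N} ⊆ {ω | (1 + ε) * n ≤ rowEnergy α I ω} := by
    intro ω (hω : (1 + ε) * n / N < S hnN α ω)
    rw [S_eq_rowEnergy_div, div_lt_div_iff_of_pos_right hN] at hω
    exact hω.le
  have htail := measureReal_rowEnergy_ge_lt hα hI hε0
  rw [hcard] at htail
  calc (μsym N) {ω | S hnN α ω > (1 + ε) * n / N}
      ≤ (μsym N) {ω | (1 + ε) * n ≤ rowEnergy α I ω} := measure_mono hsub
    _ = ENNReal.ofReal ((μsym N).real {ω | (1 + ε) * n ≤ rowEnergy α I ω}) :=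
        (ofReal_measureReal).symm
    _ < _ := (ENNReal.ofReal_lt_ofReal_iff (Real.exp_pos _)).mpr htail

theorem stmt2 {N n : ℕ} (hN : 1 ≤ N) (hn1 : 1 ≤ n) (hnN : n ≤ N)
    (α : Fin N → ℝ) (hα : ∑ k, (α k) ^ 2 = 1)
    (ε : ℝ) (hε0 : 0 < ε) (hε1 : ε < 1) :
    (μsym N) {ω | S hnN α ω > (1 + ε) * n / N}
      < ENNReal.ofReal (Real.exp (-((n : ℝ) / 2) * (ε ^ 2 / 2 - ε ^ 3 / 3))) :=
  stmt2_general hn1 hnN α hα ε hε0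
end
end

section
/- Let N ≥ 1, 1 ≤ n ≤ N, and 0 < ε < 1. Then Pr[S < (1−ε)·n/N] < exp(−(n/2)·(ε²/2 − ε³/3)), where S = Σ_{j=1}^n Q_j². -/
open MeasureTheory Finset

noncomputable section

/-!
The rows of the matrix are dependent, so the exponential moment of `S` does not factor. Instead
write `N * S = ‖∑ p, r p • v p‖²`, where `v p` collects the coefficients of the independent sign
`r p`, and average out one sign at a time. Averaging the sign of `v` in `exp (-B(x ± v, x ± v))`
and using `cosh y ≤ exp (y² / 2)` leaves again the exponential of a quadratic form, namely
`B - 2 B(v, ·) ⊗ B(v, ·)`, and gains the factor `exp (-B(v, v))`. A dual lower bound on the forms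
that occur turns the total gain into `h ∑ ‖v p‖² - h² ∑_{p ≠ q} (1 + O(h‖v p‖²)) ⟪v p, v q⟫²`.

Each row and column contributes entries of the unit vector `α`, so `∑ p, v p ⊗ v p` has unit
diagonal and `∑_{q ≠ p} ⟪v p, v q⟫² ≤ ‖v p‖² - ‖v p‖⁴ / 2`. The quartic saving absorbs the
`O(h‖v p‖²)`, whence `𝔼 exp (-h N S) ≤ exp (-(h - h²) n)` for `h ≤ 1 / 8`; Markov's inequality with
`h = min (ε / 2) (1 / 8)` concludes.
-/

open scoped BigOperators RealInnerProductSpace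

open LinearMap (BilinForm)

section SignAverages

variable {ι : Type*} [Fintype ι] [DecidableEq ι]

lemma expect_apply_update_not {M : Type*} [AddCommMonoid M] [Module ℚ≥0 M] (s : ι)
    (F : (ι → Bool) → M) :
    𝔼 r, F (Function.update r s (!r s)) = 𝔼 r, F r := by
  have flip_involutive :
      Function.Involutive fun r : ι → Bool ↦ Function.update r s (!r s) := by
    intro r
    simp
  exact Fintype.expect_equiv flip_involutive.toPerm _ _ fun _ ↦ rfl

lemma expect_eq_expect_update_add_update_div_two (s : ι) (F : (ι → Bool) → ℝ) :
    𝔼 r, F r =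
      (𝔼 r, F (Function.update r s true) + 𝔼 r, F (Function.update r s false)) / 2 := by
  have pair (r : ι → Bool) : F (Function.update r s true) + F (Function.update r s false) =
      F r + F (Function.update r s (!r s)) := by
    cases hr : r s
    · rw [← hr, Function.update_eq_self, hr, Bool.not_false, add_comm]
    · rw [← hr, Function.update_eq_self, hr, Bool.not_true]
  rw [← expect_add_distrib]
  simp only [pair]
  rw [expect_add_distrib, expect_apply_update_not]
  ring

lemma expect_sum_insert_rad_smul {E : Type*} [AddCommGroup E] [Module ℝ E] (v : ι → E)
    {s : ι} {A : Finset ι} (hs : s ∉ A) (F : E → ℝ) :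
    𝔼 r : ι → Bool, F (∑ t ∈ insert s A, rad (r t) • v t) =
      (𝔼 r : ι → Bool, F (v s + ∑ t ∈ A, rad (r t) • v t) +
        𝔼 r : ι → Bool, F (-v s + ∑ t ∈ A, rad (r t) • v t)) / 2 := by
  have sum_update (r : ι → Bool) (b : Bool) :
      ∑ t ∈ insert s A, rad (Function.update r s b t) • v t =
        rad b • v s + ∑ t ∈ A, rad (r t) • v t := by
    rw [sum_insert hs, Function.update_self]
    congr 1
    refine sum_congr rfl fun t ht ↦ ?_
    rw [Function.update_of_ne (ne_of_mem_of_not_mem ht hs)]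
  rw [expect_eq_expect_update_add_update_div_two s]
  simp only [sum_update]
  simp [rad]

end SignAverages

section Downdate

variable {E : Type*} [AddCommGroup E] [Module ℝ E]

/-- The bilinear form `B - 2 B(v, ·) ⊗ B(v, ·)`: it replaces `B` in the exponent once the sign
of `v` has been averaged out, see `exp_neg_add_exp_neg_le_exp_neg_downdate`. -/
def downdate (B : BilinForm ℝ E) (v : E) : BilinForm ℝ E :=
  B - (2 : ℝ) • BilinForm.linMulLin (B v) (B v)

lemma downdate_apply (B : BilinForm ℝ E) (v x y : E) :
    downdate B v x y = B x y - 2 * (B v x * B v y) := by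
  simp [downdate]

lemma downdate_self_le (B : BilinForm ℝ E) (v x : E) : downdate B v x x ≤ B x x := by
  rw [downdate_apply]
  linarith [mul_self_nonneg (B v x)]

variable {B : BilinForm ℝ E}

lemma isSymm_downdate (hB : B.IsSymm) (v : E) : (downdate B v).IsSymm :=
  ⟨fun x y ↦ by rw [downdate_apply, downdate_apply, hB.eq x y, mul_comm (B v x)]⟩

lemma exp_neg_add_exp_neg_le_exp_neg_downdate (hB : B.IsSymm) (v x : E) :
    (Real.exp (-B (x + v) (x + v)) + Real.exp (-B (x - v) (x - v))) / 2 ≤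
      Real.exp (-(downdate B v x x + B v v)) := by
  have expand_add : -B (x + v) (x + v) = -(B x x + B v v) + -(2 * B v x) := by
    simp only [map_add, LinearMap.add_apply, hB.eq x v]
    ring
  have expand_sub : -B (x - v) (x - v) = -(B x x + B v v) + 2 * B v x := by
    simp only [map_sub, LinearMap.sub_apply, hB.eq x v]
    ring
  calc (Real.exp (-B (x + v) (x + v)) + Real.exp (-B (x - v) (x - v))) / 2
      = Real.exp (-(B x x + B v v)) * Real.cosh (2 * B v x) := by
        rw [expand_add, expand_sub, Real.exp_add, Real.exp_add, Real.cosh_eq]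
        ring
    _ ≤ Real.exp (-(B x x + B v v)) * Real.exp ((2 * B v x) ^ 2 / 2) := by
        gcongr
        exact Real.cosh_le_exp_half_sq _
    _ = Real.exp (-(downdate B v x x + B v v)) := by
        rw [← Real.exp_add, downdate_apply]
        ring_nf

lemma two_mul_mul_le_sq_add_sq_of_one_le_mul {a c : ℝ} (hc : 0 < c) (hac : 1 ≤ c * a)
    (p q : ℝ) : 2 * p * q ≤ a * p ^ 2 + c * q ^ 2 := by
  have : 0 ≤ c * (a * p ^ 2 + c * q ^ 2 - 2 * p * q) := by
    nlinarith [sq_nonneg (p - c * q), sq_nonneg p]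
  linarith [nonneg_of_mul_nonneg_right this hc]

/- If `B` dominates the inverse of a covariance form `C`, then `downdate B v` dominates the inverse
of `C + 2 c v ⊗ v`. Inverses are avoided by convex duality: `K` stands for `C(φ, φ)`. -/
lemma two_mul_sub_le_downdate_self (hB : B.IsSymm) {v : E} {c : ℝ} (hc : 0 < c)
    (hcv : 1 ≤ c * (1 - 2 * B v v)) {φ : Module.Dual ℝ E} {K : ℝ}
    (hφ : ∀ x, 2 * φ x - K ≤ B x x) (x : E) :
    2 * φ x - (K + 2 * c * φ v ^ 2) ≤ downdate B v x x := by
  set y := x - (2 * B v x) • v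
  have apply_y : B y y = B x x - 4 * B v x ^ 2 + 4 * B v x ^ 2 * B v v := by
    simp only [y, map_sub, map_smul, LinearMap.sub_apply, LinearMap.smul_apply, smul_eq_mul,
      hB.eq x v]
    ring
  have bound_y := hφ y
  rw [apply_y] at bound_y
  simp only [y, map_sub, map_smul, smul_eq_mul] at bound_y
  rw [downdate_apply]
  linarith [two_mul_mul_le_sq_add_sq_of_one_le_mul hc hcv (B v x) (φ v)]

end Downdate

lemma sum_sum_erase_insert {ι M : Type*} [DecidableEq ι] [AddCommMonoid M] {s : ι}
    {A : Finset ι} (hs : s ∉ A) (f : ι → ι → M) :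
    ∑ a ∈ insert s A, ∑ b ∈ (insert s A).erase a, f a b =
      (∑ a ∈ A, ∑ b ∈ A.erase a, f a b) + ∑ a ∈ A, (f s a + f a s) := by
  have row (a : ι) (ha : a ∈ A) :
      ∑ b ∈ (insert s A).erase a, f a b = f a s + ∑ b ∈ A.erase a, f a b := by
    rw [erase_insert_of_ne (ne_of_mem_of_not_mem ha hs).symm,
      sum_insert fun h ↦ hs (mem_of_mem_erase h)]
  rw [sum_insert hs, erase_insert hs, sum_congr rfl row, sum_add_distrib, sum_add_distrib]
  abel

section GaussianComparison

variable {ι E : Type*} [NormedAddCommGroup E]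

/-- The factor `1 / (1 - 2h‖v‖²)` by which the variance of a random sign times `v` is inflated when
that sign is averaged out of `exp (-h‖·‖²)`. It is meaningful only for `2h‖v‖² < 1`. -/
def inflation (h : ℝ) (v : E) : ℝ := (1 - 2 * h * ‖v‖ ^ 2)⁻¹

lemma one_le_inflation {h : ℝ} (hh : 0 ≤ h) {v : E} (hv : 2 * h * ‖v‖ ^ 2 < 1) :
    1 ≤ inflation h v := by
  rw [inflation, one_le_inv₀ (by linarith)]
  have : 0 ≤ 2 * h * ‖v‖ ^ 2 := by positivity
  linarith

lemma inflation_mul {h : ℝ} {v : E} (hv : 2 * h * ‖v‖ ^ 2 < 1) :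
    inflation h v * (1 - 2 * h * ‖v‖ ^ 2) = 1 :=
  inv_mul_cancel₀ (by linarith)

lemma inflation_mul_sub_le {h : ℝ} (h0 : 0 ≤ h) (h8 : h ≤ 1 / 8) {v : E}
    (hv : 2 * h * ‖v‖ ^ 2 < 1) :
    (2 * inflation h v - 1) * (‖v‖ ^ 2 - ‖v‖ ^ 4 / 2) ≤ ‖v‖ ^ 2 := by
  have denominator_pos : 0 < 1 - 2 * h * ‖v‖ ^ 2 := by linarith
  have factor_eq : 2 * inflation h v - 1 =
      (1 + 2 * h * ‖v‖ ^ 2) / (1 - 2 * h * ‖v‖ ^ 2) := by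
    rw [inflation]
    field_simp
    ring
  rw [factor_eq, div_mul_eq_mul_div, div_le_iff₀ denominator_pos]
  nlinarith [mul_nonneg (sub_nonneg.2 h8) (sq_nonneg (‖v‖ ^ 2)),
    mul_nonneg h0 (sq_nonneg (‖v‖ ^ 3))]

variable [InnerProductSpace ℝ E] [DecidableEq ι]

/-- The first two terms of the expansion in `h` of `-log 𝔼 exp (-h‖∑ s ∈ A, ± v s‖²)`, with the
second-order term inflated so as to give a lower bound. -/
def quadraticExponent (h : ℝ) (v : ι → E) (A : Finset ι) : ℝ :=
  h * ∑ s ∈ A, ‖v s‖ ^ 2 -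
    h ^ 2 * ∑ s ∈ A, ∑ t ∈ A.erase s, (2 * inflation h (v s) - 1) * ⟪v s, v t⟫ ^ 2

lemma quadraticExponent_insert_le {h : ℝ} (hh : 0 ≤ h) {v : ι → E} {s : ι} {A : Finset ι}
    (hs : s ∉ A) (hvs : 2 * h * ‖v s‖ ^ 2 < 1) :
    quadraticExponent h v (insert s A) ≤ quadraticExponent h v A +
      (h * ‖v s‖ ^ 2 - 2 * h ^ 2 * ∑ t ∈ A, inflation h (v t) * ⟪v t, v s⟫ ^ 2) := by
  have cross_le : 2 * ∑ t ∈ A, inflation h (v t) * ⟪v t, v s⟫ ^ 2 ≤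
      ∑ t ∈ A, ((2 * inflation h (v s) - 1) * ⟪v s, v t⟫ ^ 2 +
        (2 * inflation h (v t) - 1) * ⟪v t, v s⟫ ^ 2) := by
    rw [mul_sum]
    refine sum_le_sum fun t _ ↦ ?_
    rw [real_inner_comm (v t) (v s)]
    nlinarith [one_le_inflation hh hvs, sq_nonneg ⟪v t, v s⟫]
  rw [quadraticExponent, quadraticExponent, sum_insert hs, sum_sum_erase_insert hs]
  linarith [mul_le_mul_of_nonneg_left cross_le (sq_nonneg h)]

variable [Fintype ι]

/-- `B` is what is left of `h‖·‖²` after averaging out the signs indexed by `A`: it bounds the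
exponential moment at every offset `x`, and it dominates the inverse of the inflated covariance
form `h⁻¹‖·‖² + 2 ∑ t ∈ A, inflation h (v t) ⟪v t, ·⟫²` (in dual form, evaluated at `h • w`, so
that neither inverse appears). -/
structure IsResidualForm (h : ℝ) (v : ι → E) (A : Finset ι) (B : BilinForm ℝ E) : Prop where
  isSymm : B.IsSymm
  self_le (x : E) : B x x ≤ h * ‖x‖ ^ 2
  le_self (w x : E) : 2 * (h * ⟪w, x⟫) -
    (h * ‖w‖ ^ 2 + 2 * h ^ 2 * ∑ t ∈ A, inflation h (v t) * ⟪v t, w⟫ ^ 2) ≤ B x x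
  expect_exp_le (x : E) :
    𝔼 r : ι → Bool, Real.exp (-(h * ‖x + ∑ t ∈ A, rad (r t) • v t‖ ^ 2)) ≤
      Real.exp (-(B x x + quadraticExponent h v A))

namespace IsResidualForm

variable {h : ℝ} {v : ι → E} {A : Finset ι} {B : BilinForm ℝ E} {s : ι}

lemma smul_inner_empty (hh : 0 ≤ h) (v : ι → E) : IsResidualForm h v ∅ (h • innerₗ E) where
  isSymm := ⟨fun x y ↦ by simp [real_inner_comm]⟩
  self_le x := by simp
  le_self w x := by
    have := mul_nonneg hh (sq_nonneg ‖w - x‖)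
    rw [norm_sub_sq_real] at this
    simp only [sum_empty, LinearMap.smul_apply, innerₗ_apply_apply, smul_eq_mul,
      real_inner_self_eq_norm_sq]
    linarith
  expect_exp_le x := by simp [quadraticExponent]

lemma quadraticExponent_insert_le_add_self (hB : IsResidualForm h v A B) (hh : 0 ≤ h)
    (hs : s ∉ A) (hvs : 2 * h * ‖v s‖ ^ 2 < 1) :
    quadraticExponent h v (insert s A) ≤ quadraticExponent h v A + B (v s) (v s) := by
  have := hB.le_self (v s) (v s)
  rw [real_inner_self_eq_norm_sq] at this
  linarith [quadraticExponent_insert_le hh hs hvs]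

lemma expect_exp_insert_le (hB : IsResidualForm h v A B) (hs : s ∉ A) (x : E) :
    𝔼 r : ι → Bool, Real.exp (-(h * ‖x + ∑ t ∈ insert s A, rad (r t) • v t‖ ^ 2)) ≤
      Real.exp (-(downdate B (v s) x x + B (v s) (v s) + quadraticExponent h v A)) := by
  rw [expect_sum_insert_rad_smul v hs fun y ↦ Real.exp (-(h * ‖x + y‖ ^ 2))]
  simp only [← add_assoc, ← sub_eq_add_neg]
  calc _ ≤ (Real.exp (-(B (x + v s) (x + v s) + quadraticExponent h v A)) +
        Real.exp (-(B (x - v s) (x - v s) + quadraticExponent h v A))) / 2 := by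
        gcongr <;> exact hB.expect_exp_le _
    _ = (Real.exp (-B (x + v s) (x + v s)) + Real.exp (-B (x - v s) (x - v s))) / 2 *
        Real.exp (-quadraticExponent h v A) := by
        rw [neg_add, neg_add, Real.exp_add, Real.exp_add]
        ring
    _ ≤ Real.exp (-(downdate B (v s) x x + B (v s) (v s))) *
        Real.exp (-quadraticExponent h v A) := by
        gcongr
        exact exp_neg_add_exp_neg_le_exp_neg_downdate hB.isSymm _ _
    _ = _ := by rw [← Real.exp_add, ← neg_add]

lemma downdate_insert (hB : IsResidualForm h v A B) (hh : 0 ≤ h) (hs : s ∉ A)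
    (hvs : 2 * h * ‖v s‖ ^ 2 < 1) : IsResidualForm h v (insert s A) (downdate B (v s)) where
  isSymm := isSymm_downdate hB.isSymm _
  self_le x := (downdate_self_le B (v s) x).trans (hB.self_le x)
  le_self w x := by
    have inflation_pos : 0 < inflation h (v s) :=
      zero_lt_one.trans_le (one_le_inflation hh hvs)
    have one_le_mul : 1 ≤ inflation h (v s) * (1 - 2 * B (v s) (v s)) := by
      refine (inflation_mul hvs).ge.trans (mul_le_mul_of_nonneg_left ?_ inflation_pos.le)
      linarith [hB.self_le (v s)]
    have := two_mul_sub_le_downdate_self hB.isSymm inflation_pos one_le_mul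
      (φ := h • innerₗ E w) (hB.le_self w) x
    simp only [LinearMap.smul_apply, innerₗ_apply_apply, smul_eq_mul] at this
    rw [sum_insert hs, real_inner_comm w (v s)]
    linarith
  expect_exp_le x := (hB.expect_exp_insert_le hs x).trans <| by
    rw [Real.exp_le_exp]
    linarith [hB.quadraticExponent_insert_le_add_self hh hs hvs]

end IsResidualForm

lemma exists_isResidualForm {h : ℝ} (hh : 0 ≤ h) {v : ι → E}
    (hv : ∀ s, 2 * h * ‖v s‖ ^ 2 < 1) (A : Finset ι) : ∃ B, IsResidualForm h v A B := by
  induction A using Finset.induction_on with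
  | empty => exact ⟨_, .smul_inner_empty hh v⟩
  | insert s A hs ih =>
    obtain ⟨B, hB⟩ := ih
    exact ⟨_, hB.downdate_insert hh hs (hv s)⟩

theorem expect_exp_neg_norm_sum_sq_le {h : ℝ} (hh : 0 ≤ h) {v : ι → E}
    (hv : ∀ s, 2 * h * ‖v s‖ ^ 2 < 1) :
    𝔼 r : ι → Bool, Real.exp (-(h * ‖∑ s, rad (r s) • v s‖ ^ 2)) ≤
      Real.exp (-quadraticExponent h v univ) := by
  obtain ⟨B, hB⟩ := exists_isResidualForm hh hv univ
  simpa using hB.expect_exp_le 0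

theorem expect_exp_neg_norm_sum_sq_le_of_sum_inner_sq_le {h : ℝ} (h0 : 0 ≤ h) (h8 : h ≤ 1 / 8)
    {v : ι → E} (hv : ∀ s, ∑ t ∈ univ.erase s, ⟪v s, v t⟫ ^ 2 ≤ ‖v s‖ ^ 2 - ‖v s‖ ^ 4 / 2) :
    𝔼 r : ι → Bool, Real.exp (-(h * ‖∑ s, rad (r s) • v s‖ ^ 2)) ≤
      Real.exp (-((h - h ^ 2) * ∑ s, ‖v s‖ ^ 2)) := by
  have norm_sq_le_two (s : ι) : ‖v s‖ ^ 2 ≤ 2 := by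
    have : 0 ≤ ‖v s‖ ^ 2 - ‖v s‖ ^ 4 / 2 := (sum_nonneg fun t _ ↦ sq_nonneg _).trans (hv s)
    nlinarith
  have small (s : ι) : 2 * h * ‖v s‖ ^ 2 < 1 := by nlinarith [norm_sq_le_two s]
  have row_le (s : ι) : ∑ t ∈ univ.erase s, (2 * inflation h (v s) - 1) * ⟪v s, v t⟫ ^ 2 ≤
      ‖v s‖ ^ 2 := by
    have factor_nonneg : 0 ≤ 2 * inflation h (v s) - 1 := by
      linarith [one_le_inflation h0 (small s)]
    rw [← mul_sum]
    exact (mul_le_mul_of_nonneg_left (hv s) factor_nonneg).trans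
      (inflation_mul_sub_le h0 h8 (small s))
  refine (expect_exp_neg_norm_sum_sq_le h0 small).trans ?_
  rw [Real.exp_le_exp, neg_le_neg_iff, quadraticExponent, sub_mul]
  gcongr with s
  exact row_le s

end GaussianComparison

section SymmetricSignMatrix

variable {ι κ : Type*} [LinearOrder ι]

/-- The position on or above the diagonal that carries the entries `(i, j)` and `(j, i)` of a
symmetric matrix. -/
def entrySlot (i j : ι) : ι × ι := (min i j, max i j)

lemma entrySlot_eq_entrySlot_iff {i j k l : ι} :
    entrySlot i j = entrySlot k l ↔ i = k ∧ j = l ∨ i = l ∧ j = k := by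
  simp only [entrySlot, Prod.mk.injEq]
  grind

lemma rsym_eq_rad_entrySlot {N : ℕ} (ω : Fin N → Fin N → Bool) (i j : Fin N) :
    rsym ω i j = rad (ω (entrySlot i j).1 (entrySlot i j).2) := by
  rcases le_total i j with hij | hji
  · simp [rsym, entrySlot, hij]
  · rcases hji.eq_or_lt with rfl | hlt
    · simp [rsym, entrySlot]
    · simp [rsym, entrySlot, hlt.not_ge, hji]

variable [Fintype ι]

/-- The coefficient vector of the sign in slot `p` in the product of a symmetric sign matrix with
`α`, restricted to the rows `f l`. It vanishes when `p` lies below the diagonal. -/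
def slotVector (f : κ → ι) (α : ι → ℝ) (p : ι × ι) : EuclideanSpace ℝ κ :=
  WithLp.toLp 2 fun l ↦ ∑ k, if entrySlot (f l) k = p then α k else 0

variable {f : κ → ι} (α : ι → ℝ)

lemma sum_mul_slotVector_apply (l : κ) (g : ι × ι → ℝ) :
    ∑ p, g p * slotVector f α p l = ∑ k, g (entrySlot (f l) k) * α k := by
  simp only [slotVector, mul_sum, mul_ite, mul_zero]
  rw [sum_comm]
  simp

lemma exists_entrySlot_eq_of_slotVector_apply_ne_zero {p : ι × ι} {l : κ}
    (hl : slotVector f α p l ≠ 0) : ∃ k, entrySlot (f l) k = p := by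
  obtain ⟨k, -, hk⟩ := exists_ne_zero_of_sum_ne_zero hl
  exact ⟨k, (ite_ne_right_iff.1 hk).1⟩

lemma slotVector_entrySlot_apply_self (l : κ) (k : ι) :
    slotVector f α (entrySlot (f l) k) l = α k := by
  have (j : ι) : entrySlot (f l) j = entrySlot (f l) k ↔ j = k := by
    rw [entrySlot_eq_entrySlot_iff]
    grind
  simp [slotVector, this]

lemma slotVector_entrySlot_apply_of_ne (hf : f.Injective) {l m : κ} (hlm : m ≠ l) (k : ι) :
    slotVector f α (entrySlot (f l) k) m = if k = f m then α (f l) else 0 := by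
  have (j : ι) : entrySlot (f m) j = entrySlot (f l) k ↔ j = f l ∧ k = f m := by
    rw [entrySlot_eq_entrySlot_iff]
    have := hf.ne hlm
    grind
  simp [slotVector, this, ite_and]

lemma sum_slotVector_apply_sq (l : κ) : ∑ p, slotVector f α p l ^ 2 = ∑ k, α k ^ 2 := by
  simp only [sq]
  rw [sum_mul_slotVector_apply]
  simp only [slotVector_entrySlot_apply_self]

lemma sum_slotVector_apply_mul_apply_of_ne (hf : f.Injective) {l m : κ} (hlm : l ≠ m) :
    ∑ p, slotVector f α p l * slotVector f α p m = α (f l) * α (f m) := by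
  rw [sum_mul_slotVector_apply]
  simp [slotVector_entrySlot_apply_of_ne α hf hlm, mul_comm]

lemma slotVector_apply_mul_apply_mul_of_ne (hf : f.Injective) {l m : κ} (hlm : l ≠ m)
    (p : ι × ι) :
    slotVector f α p l * slotVector f α p m * (α (f l) * α (f m)) =
      slotVector f α p l ^ 2 * slotVector f α p m ^ 2 := by
  by_cases hl : slotVector f α p l = 0
  · simp [hl]
  · obtain ⟨k, rfl⟩ := exists_entrySlot_eq_of_slotVector_apply_ne_zero α hl
    rw [slotVector_entrySlot_apply_self, slotVector_entrySlot_apply_of_ne α hf hlm.symm]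
    split_ifs with hk
    · rw [hk]
      ring
    · simp

variable [Fintype κ]

lemma sum_norm_slotVector_sq :
    ∑ p, ‖slotVector f α p‖ ^ 2 = Fintype.card κ * ∑ k, α k ^ 2 := by
  simp only [EuclideanSpace.real_norm_sq_eq]
  rw [sum_comm]
  simp [sum_slotVector_apply_sq]

lemma sum_inner_slotVector_sq (hf : f.Injective) (hα : ∑ k, α k ^ 2 = 1) (p : ι × ι) :
    ∑ q, ⟪slotVector f α p, slotVector f α q⟫ ^ 2 =
      ‖slotVector f α p‖ ^ 2 + ‖slotVector f α p‖ ^ 4 - ∑ l, slotVector f α p l ^ 4 := by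
  classical
  set v := slotVector f α
  have pair (l m : κ) : v p l * v p m * ∑ q, v q l * v q m =
      v p l ^ 2 * v p m ^ 2 + if l = m then v p l ^ 2 - v p l ^ 4 else 0 := by
    by_cases hlm : l = m
    · subst hlm
      simp only [← sq, v, sum_slotVector_apply_sq, hα, if_true]
      ring
    · rw [sum_slotVector_apply_mul_apply_of_ne α hf hlm,
        slotVector_apply_mul_apply_mul_of_ne α hf hlm, if_neg hlm, add_zero]
  calc ∑ q, ⟪v p, v q⟫ ^ 2
      = ∑ l, ∑ m, v p l * v p m * ∑ q, v q l * v q m := by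
        simp only [PiLp.inner_apply, RCLike.inner_apply, conj_trivial, sq, sum_mul_sum]
        rw [sum_comm]
        refine sum_congr rfl fun l _ ↦ ?_
        rw [sum_comm]
        refine sum_congr rfl fun m _ ↦ ?_
        rw [mul_sum]
        exact sum_congr rfl fun q _ ↦ by ring
    _ = (∑ l, v p l ^ 2) * (∑ m, v p m ^ 2) + ∑ l, (v p l ^ 2 - v p l ^ 4) := by
        simp only [pair, sum_add_distrib, sum_ite_eq, mem_univ, if_true, sum_mul_sum]
    _ = ‖v p‖ ^ 2 + ‖v p‖ ^ 4 - ∑ l, v p l ^ 4 := by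
        rw [sum_sub_distrib, ← EuclideanSpace.real_norm_sq_eq]
        ring

lemma norm_slotVector_pow_four_le (hf : f.Injective) (p : ι × ι) :
    ‖slotVector f α p‖ ^ 4 ≤ 2 * ∑ l, slotVector f α p l ^ 4 := by
  classical
  set T : Finset κ := {l | f l ∈ ({p.1, p.2} : Finset ι)}
  have card_T : (#T : ℝ) ≤ 2 := by
    have : #T ≤ #({p.1, p.2} : Finset ι) :=
      card_le_card_of_injOn f (fun l hl ↦ (mem_filter.1 hl).2) hf.injOn
    exact_mod_cast this.trans card_le_two
  have apply_eq_zero (l : κ) (hl : l ∉ T) : slotVector f α p l = 0 := by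
    by_contra hne
    obtain ⟨k, rfl⟩ := exists_entrySlot_eq_of_slotVector_apply_ne_zero α hne
    rcases le_total (f l) k with hlk | hkl
    · simp [T, entrySlot, hlk] at hl
    · simp [T, entrySlot, hkl] at hl
  have norm_sq : ‖slotVector f α p‖ ^ 2 = ∑ l ∈ T, slotVector f α p l ^ 2 := by
    rw [EuclideanSpace.real_norm_sq_eq]
    exact (sum_subset (subset_univ T) fun l _ hl ↦ by simp [apply_eq_zero l hl]).symm
  have fourth_nonneg (l : κ) : 0 ≤ slotVector f α p l ^ (2 * 2) :=
    (even_two_mul 2).pow_nonneg _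
  calc ‖slotVector f α p‖ ^ 4 = (∑ l ∈ T, slotVector f α p l ^ 2) ^ 2 := by
        rw [← norm_sq]
        ring
    _ ≤ #T * ∑ l ∈ T, (slotVector f α p l ^ 2) ^ 2 := sq_sum_le_card_mul_sum_sq
    _ ≤ 2 * ∑ l, slotVector f α p l ^ 4 := by
        simp only [← pow_mul]
        exact mul_le_mul card_T (sum_le_univ_sum_of_nonneg fourth_nonneg)
          (sum_nonneg fun l _ ↦ fourth_nonneg l) zero_le_two

lemma sum_erase_inner_slotVector_sq_le (hf : f.Injective) (hα : ∑ k, α k ^ 2 = 1) (p : ι × ι) :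
    ∑ q ∈ univ.erase p, ⟪slotVector f α p, slotVector f α q⟫ ^ 2 ≤
      ‖slotVector f α p‖ ^ 2 - ‖slotVector f α p‖ ^ 4 / 2 := by
  rw [sum_erase_eq_sub (mem_univ p), sum_inner_slotVector_sq α hf hα,
    real_inner_self_eq_norm_sq, ← pow_mul]
  linarith [norm_slotVector_pow_four_le α hf p]

end SymmetricSignMatrix

section RandomSymmetricMatrix

variable {N n : ℕ}

lemma sum_rad_smul_slotVector_apply (hnN : n ≤ N) (α : Fin N → ℝ) (ω : Fin N → Fin N → Bool)
    (j : Fin n) :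
    (∑ p : Fin N × Fin N, rad (ω p.1 p.2) • slotVector (Fin.castLE hnN) α p) j =
      ∑ k, rsym ω (Fin.castLE hnN j) k * α k := by
  simp only [rsym_eq_rad_entrySlot, WithLp.ofLp_sum, WithLp.ofLp_smul, Finset.sum_apply,
    Pi.smul_apply, smul_eq_mul]
  exact sum_mul_slotVector_apply α j fun p ↦ rad (ω p.1 p.2)

lemma norm_sum_rad_smul_slotVector_sq (hnN : n ≤ N) (α : Fin N → ℝ)
    (ω : Fin N → Fin N → Bool) :
    ‖∑ p : Fin N × Fin N, rad (ω p.1 p.2) • slotVector (Fin.castLE hnN) α p‖ ^ 2 =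
      N * S hnN α ω := by
  rcases eq_or_ne N 0 with rfl | hN
  · obtain rfl := Nat.le_zero.1 hnN
    simp
  have : (N : ℝ) ≠ 0 := Nat.cast_ne_zero.2 hN
  simp only [EuclideanSpace.real_norm_sq_eq, sum_rad_smul_slotVector_apply, S, Q, mul_pow,
    inv_pow, Real.sq_sqrt N.cast_nonneg, ← mul_sum]
  field_simp

instance isProbabilityMeasure_μsym (N : ℕ) : IsProbabilityMeasure (μsym N) := by
  unfold μsym
  infer_instance

lemma integral_μsym_s3 (F : (Fin N → Fin N → Bool) → ℝ) : ∫ ω, F ω ∂μsym N = 𝔼 ω, F ω := by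
  simp only [μsym, PMF.integral_eq_sum, PMF.uniformOfFintype_apply, ENNReal.toReal_inv,
    ENNReal.toReal_natCast, smul_eq_mul, ← mul_sum]
  rw [Fintype.expect_eq_sum_div_card, div_eq_inv_mul]

theorem mgf_mul_S_le (hnN : n ≤ N) {α : Fin N → ℝ} (hα : ∑ k, α k ^ 2 = 1)
    {h : ℝ} (h0 : 0 ≤ h) (h8 : h ≤ 1 / 8) :
    ProbabilityTheory.mgf (fun ω ↦ N * S hnN α ω) (μsym N) (-h) ≤
      Real.exp (-((h - h ^ 2) * n)) := by
  set v := slotVector (Fin.castLE hnN) α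
  have hf : (Fin.castLE hnN).Injective := Fin.castLE_injective hnN
  calc ProbabilityTheory.mgf (fun ω ↦ N * S hnN α ω) (μsym N) (-h)
      = 𝔼 r : Fin N × Fin N → Bool, Real.exp (-(h * ‖∑ p, rad (r p) • v p‖ ^ 2)) := by
        rw [ProbabilityTheory.mgf, integral_μsym_s3]
        refine Fintype.expect_equiv (Equiv.curry _ _ _).symm _ _ fun ω ↦ ?_
        rw [← norm_sum_rad_smul_slotVector_sq, neg_mul]
        rfl
    _ ≤ Real.exp (-((h - h ^ 2) * ∑ p, ‖v p‖ ^ 2)) :=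
        expect_exp_neg_norm_sum_sq_le_of_sum_inner_sq_le h0 h8
          (sum_erase_inner_slotVector_sq_le α hf hα)
    _ = Real.exp (-((h - h ^ 2) * n)) := by
        rw [sum_norm_slotVector_sq, hα, mul_one, Fintype.card_fin]

theorem measureReal_S_lt_le (hnN : n ≤ N) {α : Fin N → ℝ} (hα : ∑ k, α k ^ 2 = 1)
    (ε : ℝ) {h : ℝ} (h0 : 0 ≤ h) (h8 : h ≤ 1 / 8) :
    (μsym N).real {ω | S hnN α ω < (1 - ε) * n / N} ≤ Real.exp (n * (h ^ 2 - ε * h)) := by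
  have hN : (0 : ℝ) < N := by
    refine Nat.cast_pos.2 (Nat.pos_of_ne_zero ?_)
    rintro rfl
    simp at hα
  calc (μsym N).real {ω | S hnN α ω < (1 - ε) * n / N}
      ≤ (μsym N).real {ω | N * S hnN α ω ≤ (1 - ε) * n} := by
        exact measureReal_mono fun ω hω ↦ ((lt_div_iff₀' hN).1 hω).le
    _ ≤ Real.exp (-(-h) * ((1 - ε) * n)) *
          ProbabilityTheory.mgf (fun ω ↦ N * S hnN α ω) (μsym N) (-h) :=
        ProbabilityTheory.measure_le_le_exp_mul_mgf _ (neg_nonpos.2 h0) .of_finite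
    _ ≤ Real.exp (-(-h) * ((1 - ε) * n)) * Real.exp (-((h - h ^ 2) * n)) := by
        gcongr
        exact mgf_mul_S_le hnN hα h0 h8
    _ = Real.exp (n * (h ^ 2 - ε * h)) := by
        rw [← Real.exp_add]
        ring_nf

end RandomSymmetricMatrix

lemma exists_sq_sub_mul_lt {ε : ℝ} (hε0 : 0 < ε) (hε1 : ε < 1) :
    ∃ h : ℝ, 0 ≤ h ∧ h ≤ 1 / 8 ∧ h ^ 2 - ε * h < -(ε ^ 2 / 2 - ε ^ 3 / 3) / 2 := by
  rcases le_or_gt ε (1 / 4) with hε | hε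
  · refine ⟨ε / 2, by linarith, by linarith, ?_⟩
    linarith [pow_pos hε0 3]
  · refine ⟨1 / 8, by norm_num, le_rfl, ?_⟩
    nlinarith [mul_nonneg hε0.le (sq_nonneg (ε - 5 / 8)), mul_pos (sub_pos.2 hε) (sub_pos.2 hε1)]

theorem stmt3 {N n : ℕ} (hN : 1 ≤ N) (hn1 : 1 ≤ n) (hnN : n ≤ N)
    (α : Fin N → ℝ) (hα : ∑ k, (α k) ^ 2 = 1)
    (ε : ℝ) (hε0 : 0 < ε) (hε1 : ε < 1) :
    (μsym N) {ω | S hnN α ω < (1 - ε) * n / N}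
      < ENNReal.ofReal (Real.exp (-((n : ℝ) / 2) * (ε ^ 2 / 2 - ε ^ 3 / 3))) := by
  obtain ⟨h, h0, h8, hh⟩ := exists_sq_sub_mul_lt hε0 hε1
  have hn : (0 : ℝ) < n := Nat.cast_pos.2 hn1
  have tail_lt : (μsym N).real {ω | S hnN α ω < (1 - ε) * n / N} <
      Real.exp (-((n : ℝ) / 2) * (ε ^ 2 / 2 - ε ^ 3 / 3)) :=
    calc (μsym N).real {ω | S hnN α ω < (1 - ε) * n / N}
        ≤ Real.exp (n * (h ^ 2 - ε * h)) :=
          measureReal_S_lt_le hnN hα ε h0 h8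
      _ < Real.exp (n * (-(ε ^ 2 / 2 - ε ^ 3 / 3) / 2)) :=
        Real.exp_lt_exp.2 (mul_lt_mul_of_pos_left hh hn)
      _ = Real.exp (-((n : ℝ) / 2) * (ε ^ 2 / 2 - ε ^ 3 / 3)) := by ring_nf
  rw [← ofReal_measureReal]
  exact (ENNReal.ofReal_lt_ofReal_iff (Real.exp_pos _)).2 tail_lt
end
end

section
/- Let ε > 0 and β > 0 with ε²/2 − ε³/3 > 0, let p_1, …, p_m be m points in ℝ^N, and suppose n ≥ ((4+2β)/(ε²/2 − ε³/3))·log m with n ≤ N. Let f : ℝ^N → ℝ^n be the random linear map f(x) = n^{−1/2} R x, where R is the n × N partial random symmetric Bernoulli matrix. Then with probability at least 1 − m^{−β}, for every pair of points u, v among p_1,…,p_m one has (1−ε)·‖u−v‖₂² ≤ ‖f(u)−f(v)‖₂² ≤ (1+ε)·‖u−v‖₂². -/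
open MeasureTheory Finset

noncomputable section

/-- The random linear map `f(x) = n^{-1/2} R x`, where `R` is the partial random
symmetric Bernoulli matrix given by the first `n` rows of `rsym ω`. -/
def proj {N n : ℕ} (hn : n ≤ N) (ω : Fin N → Fin N → Bool)
    (x : Fin N → ℝ) (i : Fin n) : ℝ :=
  (Real.sqrt n)⁻¹ * ∑ k, rsym ω (Fin.castLE hn i) k * x k

/-!
For a unit vector `x`, the first `n` coordinates of `R x` form a vector `W r`, where `r` lists the
independent signs by unordered pairs of indices and `W` depends only on `x`. Chernoff's bound asks
for the exponential moments of `|W r|²`, and both signs of the exponent reduce to a Gaussian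
quadratic form.

For the upper tail, `exp (c |w|²)` is the average of `exp (√(2c) ⟨w, g⟩)` over a standard Gaussian
`g`; averaging over `r` first, with `cosh b ≤ exp (b² / 2)`, leaves the quadratic form of
`W Wᵀ = 1 + offdiag (y yᵀ)`, where `y` is `x` restricted to the first `n` coordinates. For the lower
tail, `|W r|² - n` is the quadratic form of the off-diagonal part of `Wᵀ W`. It is affine in each
sign, and the exponential of an affine function has a larger mean under a standard Gaussian than
under a sign, so the signs may be replaced by Gaussians one at a time.

The Gaussian moment is `∏ (1 - t λᵢ) ^ (-1/2)` over the eigenvalues `λᵢ`, which sum to `0` and are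
at most `1`. Since `-log (1 - t λ) - t λ ≤ λ² (-log (1 - t) - t)`, only `∑ λᵢ²` matters: it is at
most `1` for the upper tail and at most `n` for the lower one, because two rows of `R` share a
single entry. Each tail then has probability at most `m ^ (-2 - β)`, and charging the upper tail to
one ordering of a pair of points and the lower tail to the other gives `m²` events in all.
-/

open ProbabilityTheory Matrix
open scoped ENNReal

/-! ### Replacing the factors of a product measure -/

section Domination

variable {ι : Type*} [DecidableEq ι] {Ω : ι → Type*} [∀ i, MeasurableSpace (Ω i)]
  {μ ν : ∀ i, Measure (Ω i)} [∀ i, SigmaFinite (μ i)] [∀ i, SigmaFinite (ν i)]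
  {f : (∀ i, Ω i) → ℝ≥0∞}

theorem lmarginal_mono_of_update (s : Finset ι) (hf : Measurable f)
    (h : ∀ i ∈ s, ∀ x, ∫⁻ t, f (Function.update x i t) ∂μ i ≤
      ∫⁻ t, f (Function.update x i t) ∂ν i) :
    ∫⋯∫⁻_s, f ∂μ ≤ ∫⋯∫⁻_s, f ∂ν := by
  induction s using Finset.induction generalizing f with
  | empty => simp only [lmarginal_empty, le_refl]
  | insert i s hi ih =>
    rw [lmarginal_insert' _ hf hi, lmarginal_insert' _ hf hi]
    have meas : Measurable fun x ↦ ∫⁻ t, f (Function.update x i t) ∂ν i :=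
      Measurable.lintegral_prod_right (by fun_prop)
    refine (lmarginal_mono fun x ↦ h i (mem_insert_self i s) x).trans (ih meas fun j hj x ↦ ?_)
    have hij : i ≠ j := by rintro rfl; exact hi hj
    have swap (ρ : Measure (Ω j)) [SigmaFinite ρ] :
        ∫⁻ t, ∫⁻ r, f (Function.update (Function.update x j t) i r) ∂ν i ∂ρ =
          ∫⁻ r, ∫⁻ t, f (Function.update (Function.update x i r) j t) ∂ρ ∂ν i := by
      simp_rw [Function.update_comm hij.symm]
      exact lintegral_lintegral_swap (by fun_prop)
    rw [swap, swap]
    exact lintegral_mono fun r ↦ h j (mem_insert_of_mem hj) _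

theorem lintegral_pi_mono_of_update [Fintype ι] (hf : Measurable f)
    (h : ∀ i x, ∫⁻ t, f (Function.update x i t) ∂μ i ≤ ∫⁻ t, f (Function.update x i t) ∂ν i) :
    ∫⁻ x, f x ∂Measure.pi μ ≤ ∫⁻ x, f x ∂Measure.pi ν := by
  rcases isEmpty_or_nonempty (∀ i, Ω i) with _ | ⟨⟨x⟩⟩
  · simp only [lintegral_of_isEmpty, le_refl]
  · simp_rw [lintegral_eq_lmarginal_univ x]
    exact lmarginal_mono_of_update univ hf (fun i _ ↦ h i) x

end Domination

/-! ### Rademacher and Gaussian exponential moments -/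

/-- The law of a uniform random sign, as a measure on `ℝ` so that it compares with Gaussian
measures. -/
def rademacher : Measure ℝ := (PMF.uniformOfFintype Bool).toMeasure.map rad

instance : IsProbabilityMeasure rademacher :=
  Measure.isProbabilityMeasure_map (by fun_prop)

theorem ae_rademacher_sq : ∀ᵐ t ∂rademacher, t ^ 2 = 1 := by
  rw [rademacher, ae_map_iff (by fun_prop) (measurableSet_eq_fun (by fun_prop) (by fun_prop))]
  exact ae_of_all _ fun b ↦ by cases b <;> norm_num [rad]

theorem lintegral_exp_affine_rademacher_le (a b : ℝ) :
    ∫⁻ t, .ofReal (Real.exp (a + b * t)) ∂rademacher ≤ .ofReal (Real.exp (a + b ^ 2 / 2)) := by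
  have average : ∫⁻ t, .ofReal (Real.exp (a + b * t)) ∂rademacher =
      .ofReal (Real.exp a * Real.cosh b) := by
    rw [rademacher, lintegral_map (by fun_prop) (by fun_prop), lintegral_fintype, Fintype.sum_bool]
    simp only [PMF.toMeasure_apply_singleton, MeasurableSet.singleton,
      PMF.uniformOfFintype_apply, Fintype.card_bool]
    rw [← add_mul, ← ENNReal.ofReal_add (by positivity) (by positivity),
      show ((2 : ℕ) : ℝ≥0∞)⁻¹ = .ofReal (1 / 2) by simp, ← ENNReal.ofReal_mul (by positivity),
      Real.cosh_eq, Real.exp_add, Real.exp_add]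
    simp only [rad, if_true, Bool.false_eq_true, if_false, mul_one, mul_neg]
    ring_nf
  rw [average, Real.exp_add]
  gcongr
  exact Real.cosh_le_exp_half_sq b

theorem gaussianPDFReal_mul_exp_quadratic {α : ℝ} (hα : α < 1 / 2) (a b t : ℝ) :
    gaussianPDFReal 0 1 t * Real.exp (a + b * t + α * t ^ 2) =
      Real.exp (a + b ^ 2 / (2 * (1 - 2 * α)) - Real.log (1 - 2 * α) / 2) *
        gaussianPDFReal (b / (1 - 2 * α)) (Real.toNNReal (1 - 2 * α)⁻¹) t := by
  have h0 : 0 < 1 - 2 * α := by linarith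
  have normalization : (√(2 * Real.pi * (1 - 2 * α)⁻¹))⁻¹ =
      (√(2 * Real.pi))⁻¹ * Real.exp (Real.log (1 - 2 * α) / 2) := by
    rw [Real.sqrt_mul (by positivity), mul_inv, Real.sqrt_inv, inv_inv, Real.exp_half,
      Real.exp_log h0]
  simp only [gaussianPDFReal, NNReal.coe_one, Real.coe_toNNReal _ (inv_pos.2 h0).le, normalization]
  rw [mul_one, mul_assoc, mul_left_comm (Real.exp (_ - _)), mul_assoc, ← Real.exp_add,
    ← Real.exp_add, ← Real.exp_add]
  congr 2
  field_simp
  ring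

theorem lintegral_exp_quadratic_gaussianReal {α : ℝ} (hα : α < 1 / 2) (a b : ℝ) :
    ∫⁻ t, .ofReal (Real.exp (a + b * t + α * t ^ 2)) ∂gaussianReal 0 1 =
      .ofReal (Real.exp (a + b ^ 2 / (2 * (1 - 2 * α)) - Real.log (1 - 2 * α) / 2)) := by
  have hv : Real.toNNReal (1 - 2 * α)⁻¹ ≠ 0 :=
    (Real.toNNReal_pos.2 (inv_pos.2 (by linarith))).ne'
  rw [gaussianReal_of_var_ne_zero _ one_ne_zero,
    lintegral_withDensity_eq_lintegral_mul _ (measurable_gaussianPDF _ _) (by fun_prop)]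
  simp_rw [Pi.mul_apply, gaussianPDF, ← ENNReal.ofReal_mul (gaussianPDFReal_nonneg _ _ _),
    gaussianPDFReal_mul_exp_quadratic hα, ENNReal.ofReal_mul (Real.exp_pos _).le]
  rw [lintegral_const_mul _ (by fun_prop)]
  exact (congrArg _ (lintegral_gaussianPDF_eq_one _ hv)).trans (mul_one _)

/-! ### Logarithm inequalities -/

theorem hasSum_neg_sub_log_one_sub {x : ℝ} (hx : |x| < 1) :
    HasSum (fun k : ℕ ↦ x ^ (k + 2) / (k + 2)) (-x - Real.log (1 - x)) := by
  have h := (hasSum_nat_add_iff' 1).2 (Real.hasSum_pow_div_log_of_abs_lt_one hx)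
  simp only [range_one, sum_singleton, zero_add, pow_one, Nat.cast_zero, div_one, Nat.cast_add,
    Nat.cast_one, add_assoc, one_add_one_eq_two] at h
  rwa [neg_sub_left, add_comm, ← neg_sub_left] at h

theorem neg_sub_log_one_sub_mul_le {t u : ℝ} (ht0 : 0 ≤ t) (ht : t < 1) (hu : u ≤ 1) :
    -(t * u) - Real.log (1 - t * u) ≤ u ^ 2 * (-t - Real.log (1 - t)) := by
  have series := hasSum_neg_sub_log_one_sub (abs_lt.2 ⟨by linarith, ht⟩)
  rcases le_total 0 u with hu0 | hu0
  · refine hasSum_le (fun k ↦ ?_)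
      (hasSum_neg_sub_log_one_sub (abs_lt.2 ⟨by nlinarith, by nlinarith⟩)) (series.mul_left (u ^ 2))
    rw [mul_pow, mul_comm, mul_div_assoc]
    gcongr ?_ * _
    exact pow_le_pow_of_le_one hu0 hu (Nat.le_add_left 2 k)
  · have leading : t ^ 2 / 2 ≤ -t - Real.log (1 - t) := by
      simpa using le_hasSum series 0 fun k _ ↦ by positivity
    obtain ⟨y, hy, rfl⟩ : ∃ y, 0 ≤ y ∧ u = -y := ⟨-u, by linarith, by ring⟩
    have hty : 0 ≤ t * y := by positivity
    have log_bound : t * y - (t * y) ^ 2 / 2 ≤ Real.log (1 + t * y) := by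
      refine le_trans ?_ (Real.le_log_one_add_of_nonneg hty)
      rw [le_div_iff₀ (by positivity)]
      nlinarith [pow_nonneg hty 3]
    have := mul_le_mul_of_nonneg_left leading (sq_nonneg y)
    rw [mul_neg, sub_neg_eq_add, neg_sq]
    linarith [mul_pow t y 2]

theorem neg_sub_log_one_sub_nonneg {t : ℝ} (ht : t < 1) : 0 ≤ -t - Real.log (1 - t) := by
  linarith [Real.log_le_sub_one_of_pos (sub_pos.2 ht)]

theorem log_one_add_le_sum_of_odd {m : ℕ} (hm : Odd m) {x : ℝ} (hx : 0 ≤ x) :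
    Real.log (1 + x) ≤ ∑ k ∈ range m, (-1) ^ k * x ^ (k + 1) / (k + 1) := by
  let gap (y : ℝ) := ∑ k ∈ range m, (-1) ^ k * y ^ (k + 1) / (k + 1) - Real.log (1 + y)
  have gap_deriv {y : ℝ} (hy : 0 ≤ y) : HasDerivAt gap (y ^ m / (1 + y)) y := by
    have term (k : ℕ) : HasDerivAt (fun y : ℝ ↦ (-1) ^ k * y ^ (k + 1) / (k + 1)) ((-y) ^ k) y := by
      refine (((hasDerivAt_pow (k + 1) y).const_mul ((-1) ^ k)).div_const _).congr_deriv ?_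
      rw [neg_pow y, Nat.add_sub_cancel]
      push_cast
      field_simp
    refine ((HasDerivAt.fun_sum fun k _ ↦ term k).sub
      (((hasDerivAt_id y).const_add 1).log (by simp only [id]; positivity))).congr_deriv ?_
    rw [geom_sum_eq (by linarith), hm.neg_pow, id, ← neg_add', ← neg_add', neg_div_neg_eq,
      add_comm y, ← sub_div, add_sub_cancel_right]
  have mono : MonotoneOn gap (Set.Ici 0) :=
    monotoneOn_of_hasDerivWithinAt_nonneg (convex_Ici 0)
      (fun y hy ↦ (gap_deriv hy).continuousAt.continuousWithinAt)
      (fun y hy ↦ (gap_deriv (interior_subset hy)).hasDerivWithinAt)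
      fun y hy ↦ by have : 0 ≤ y := interior_subset hy; positivity
  have := mono Set.self_mem_Ici hx hx
  simpa [gap] using this

theorem log_one_add_le_cubic {x : ℝ} (hx : 0 ≤ x) :
    Real.log (1 + x) ≤ x - x ^ 2 / 2 + x ^ 3 / 3 := by
  refine (log_one_add_le_sum_of_odd (m := 3) (by decide) hx).trans_eq ?_
  simp only [sum_range_succ, sum_range_zero]
  push_cast
  ring

theorem log_one_add_le_quintic {x : ℝ} (hx : 0 ≤ x) :
    Real.log (1 + x) ≤ x - x ^ 2 / 2 + x ^ 3 / 3 - x ^ 4 / 4 + x ^ 5 / 5 := by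
  refine (log_one_add_le_sum_of_odd (m := 5) (by decide) hx).trans_eq ?_
  simp only [sum_range_succ, sum_range_zero]
  push_cast
  ring

theorem neg_sub_log_one_sub_le_sq {x : ℝ} (hx : x ≤ 1 / 2) : -x - Real.log (1 - x) ≤ x ^ 2 := by
  have scaled := neg_sub_log_one_sub_mul_le (t := 1 / 2) (u := 2 * x) (by norm_num) (by norm_num)
    (by linarith)
  have log_half : Real.log (1 - 1 / 2) = -Real.log 2 := by
    rw [← Real.log_inv]
    norm_num
  rw [log_half, one_div, inv_mul_cancel_left₀ two_ne_zero] at scaled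
  nlinarith [Real.log_two_lt_d9, sq_nonneg x]

/-! ### Quadratic forms -/

section OffDiag

variable {ι : Type*} [DecidableEq ι]

/-- The off-diagonal part of a square matrix: `A` with its diagonal replaced by zeros. Removing the
diagonal makes a quadratic form affine in each coordinate. -/
def offDiagPart (A : Matrix ι ι ℝ) : Matrix ι ι ℝ := A - diagonal A.diag

theorem offDiagPart_apply_self (A : Matrix ι ι ℝ) (i : ι) : offDiagPart A i i = 0 := by
  simp [offDiagPart]

theorem offDiagPart_apply_of_ne (A : Matrix ι ι ℝ) {i j : ι} (h : i ≠ j) :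
    offDiagPart A i j = A i j := by
  simp [offDiagPart, h]

theorem isHermitian_offDiagPart {A : Matrix ι ι ℝ} (hA : A.IsHermitian) :
    (offDiagPart A).IsHermitian :=
  hA.sub (isHermitian_diagonal _)

variable [Fintype ι]

theorem trace_offDiagPart (A : Matrix ι ι ℝ) : (offDiagPart A).trace = 0 := by
  simp only [trace, diag_apply, offDiagPart_apply_self, sum_const_zero]

theorem dotProduct_offDiagPart_mulVec (A : Matrix ι ι ℝ) (v : ι → ℝ) :
    v ⬝ᵥ offDiagPart A *ᵥ v = v ⬝ᵥ A *ᵥ v - ∑ i, A i i * v i ^ 2 := by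
  simp only [offDiagPart, sub_mulVec, dotProduct_sub]
  congr 1
  exact sum_congr rfl fun i _ ↦ by rw [mulVec_diagonal, diag_apply]; ring

end OffDiag

section FiniteIndex

variable {ι κ : Type*} [Fintype ι] [Fintype κ]

/-- The law of independent Rademacher coordinates indexed by `ι`. -/
abbrev rademacherPi (ι : Type*) [Fintype ι] : Measure (ι → ℝ) := Measure.pi fun _ ↦ rademacher

/-- The law of independent standard Gaussian coordinates indexed by `ι`, on `ι → ℝ` so that it
compares directly with `rademacherPi ι`. -/
abbrev gaussianPi (ι : Type*) [Fintype ι] : Measure (ι → ℝ) :=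
  Measure.pi fun _ ↦ gaussianReal 0 1

theorem lintegral_exp_sum_pi {μ : ι → Measure ℝ} [∀ i, IsProbabilityMeasure (μ i)]
    {q : ι → ℝ → ℝ} (hq : ∀ i, Measurable (q i)) :
    ∫⁻ g, .ofReal (Real.exp (∑ i, q i (g i))) ∂Measure.pi μ =
      ∏ i, ∫⁻ t, .ofReal (Real.exp (q i t)) ∂μ i := by
  have meas (i) : Measurable fun t ↦ ENNReal.ofReal (Real.exp (q i t)) := by fun_prop
  simp_rw [Real.exp_sum, ENNReal.ofReal_prod_of_nonneg fun i _ ↦ (Real.exp_pos (q i _)).le]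
  rw [lintegral_prod_eq_prod_lintegral_of_indepFun univ
    (fun i (g : ι → ℝ) ↦ ENNReal.ofReal (Real.exp (q i (g i))))
    (iIndepFun_pi fun i ↦ (meas i).aemeasurable) fun i ↦ by fun_prop]
  exact prod_congr rfl fun i _ ↦ (measurePreserving_eval μ i).lintegral_comp (meas i)

theorem lintegral_exp_dotProduct_rademacher_le (b : ι → ℝ) :
    ∫⁻ r, .ofReal (Real.exp (b ⬝ᵥ r)) ∂rademacherPi ι ≤ .ofReal (Real.exp (b ⬝ᵥ b / 2)) := by
  simp_rw [dotProduct]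
  rw [lintegral_exp_sum_pi (q := fun i t ↦ b i * t) (by fun_prop), sum_div, Real.exp_sum,
    ENNReal.ofReal_prod_of_nonneg fun i _ ↦ (Real.exp_pos _).le]
  refine prod_le_prod' fun i _ ↦ ?_
  simpa only [zero_add, sq] using lintegral_exp_affine_rademacher_le 0 (b i)

theorem lintegral_exp_dotProduct_gaussian (b : ι → ℝ) :
    ∫⁻ g, .ofReal (Real.exp (b ⬝ᵥ g)) ∂gaussianPi ι = .ofReal (Real.exp (b ⬝ᵥ b / 2)) := by
  simp_rw [dotProduct]
  rw [lintegral_exp_sum_pi (q := fun i t ↦ b i * t) (by fun_prop), sum_div, Real.exp_sum,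
    ENNReal.ofReal_prod_of_nonneg fun i _ ↦ (Real.exp_pos _).le]
  refine prod_congr rfl fun i _ ↦ ?_
  simpa [sq] using lintegral_exp_quadratic_gaussianReal (α := 0) (by norm_num) 0 (b i)

theorem lintegral_exp_sq_mulVec_rademacher_le (W : Matrix ι κ ℝ) :
    ∫⁻ r, .ofReal (Real.exp (W *ᵥ r ⬝ᵥ W *ᵥ r / 2)) ∂rademacherPi κ ≤
      ∫⁻ g, .ofReal (Real.exp (g ⬝ᵥ (W * Wᵀ) *ᵥ g / 2)) ∂gaussianPi ι := by
  calc _ = ∫⁻ r, ∫⁻ g, .ofReal (Real.exp (W *ᵥ r ⬝ᵥ g)) ∂gaussianPi ι ∂rademacherPi κ := by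
        simp_rw [lintegral_exp_dotProduct_gaussian]
    _ = ∫⁻ g, ∫⁻ r, .ofReal (Real.exp (Wᵀ *ᵥ g ⬝ᵥ r)) ∂rademacherPi κ ∂gaussianPi ι := by
        rw [lintegral_lintegral_swap (by unfold mulVec dotProduct; fun_prop)]
        simp_rw [dotProduct_comm (W *ᵥ _), dotProduct_mulVec, mulVec_transpose]
    _ ≤ ∫⁻ g, .ofReal (Real.exp (Wᵀ *ᵥ g ⬝ᵥ Wᵀ *ᵥ g / 2)) ∂gaussianPi ι :=
        lintegral_mono fun g ↦ lintegral_exp_dotProduct_rademacher_le _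
    _ = _ := by simp_rw [← mulVec_mulVec, dotProduct_mulVec _ W, mulVec_transpose]

theorem lintegral_exp_sum_mul_sq_gaussian {α : ι → ℝ} (hα : ∀ i, α i < 1 / 2) :
    ∫⁻ g, .ofReal (Real.exp (∑ i, α i * g i ^ 2)) ∂gaussianPi ι =
      .ofReal (Real.exp (∑ i, -Real.log (1 - 2 * α i) / 2)) := by
  rw [lintegral_exp_sum_pi (q := fun i t ↦ α i * t ^ 2) (by fun_prop), Real.exp_sum,
    ENNReal.ofReal_prod_of_nonneg fun i _ ↦ (Real.exp_pos _).le]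
  refine prod_congr rfl fun i _ ↦ ?_
  have h := lintegral_exp_quadratic_gaussianReal (hα i) 0 0
  simpa only [zero_mul, zero_add, zero_pow two_ne_zero, zero_div, zero_sub, neg_div] using h

theorem map_sum_smul_gaussianPi (b : OrthonormalBasis ι ℝ (EuclideanSpace ℝ ι)) :
    (gaussianPi ι).map (fun g ↦ (∑ i, g i • b i).ofLp) = gaussianPi ι := by
  have rotation := congrArg (Measure.map WithLp.ofLp)
    (map_pi_eq_stdGaussian.trans (stdGaussian_eq_map_pi_orthonormalBasis b))
  rw [Measure.map_map (by fun_prop) (by fun_prop), Measure.map_map (by fun_prop) (by fun_prop)]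
    at rotation
  exact rotation.symm.trans Measure.map_id

section QuadraticForm

variable {A : Matrix ι ι ℝ}

theorem sum_sq_eigenvalues [DecidableEq ι] (hA : A.IsHermitian) :
    ∑ i, hA.eigenvalues i ^ 2 = ∑ i, ∑ j, A i j ^ 2 := by
  have diagonalization := congrArg (fun B ↦ (B * B).trace) hA.conjStarAlgAut_star_eigenvectorUnitary
  simp only [← map_mul, diagonal_mul_diagonal, trace_diagonal] at diagonalization
  rw [Unitary.conjStarAlgAut_star_apply, trace_mul_cycle] at diagonalization
  simp only [SetLike.coe_mem, Unitary.mul_star_self_of_mem, one_mul, RCLike.ofReal_real_eq_id,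
    Function.comp_apply, id_eq] at diagonalization
  simp_rw [sq, ← diagonalization, trace, diag_apply, mul_apply]
  refine sum_congr rfl fun i _ ↦ sum_congr rfl fun j _ ↦ ?_
  rw [← hA.apply i j, star_trivial]

theorem eigenvalues_le_one [DecidableEq ι] (hA : A.IsHermitian)
    (hle : ∀ v, v ⬝ᵥ A *ᵥ v ≤ v ⬝ᵥ v) (i : ι) : hA.eigenvalues i ≤ 1 := by
  have norm_eigenvector : (hA.eigenvectorBasis i : ι → ℝ) ⬝ᵥ hA.eigenvectorBasis i = 1 := by
    have := hA.eigenvectorBasis.norm_eq_one i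
    rw [EuclideanSpace.norm_eq, Real.sqrt_eq_one] at this
    simpa [dotProduct, sq] using this
  rw [hA.eigenvalues_eq, star_trivial, RCLike.re_to_real]
  exact (hle _).trans_eq norm_eigenvector

theorem lintegral_comp_quadraticForm_gaussian [DecidableEq ι] (hA : A.IsHermitian)
    {F : ℝ → ℝ → ℝ≥0∞} (hF : Measurable F.uncurry) :
    ∫⁻ g, F (g ⬝ᵥ g) (g ⬝ᵥ A *ᵥ g) ∂gaussianPi ι =
      ∫⁻ g, F (∑ i, g i ^ 2) (∑ i, hA.eigenvalues i * g i ^ 2) ∂gaussianPi ι := by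
  have dot (g v : ι → ℝ) : (∑ i, g i • hA.eigenvectorBasis i).ofLp ⬝ᵥ
      (∑ i, v i • hA.eigenvectorBasis i).ofLp = g ⬝ᵥ v := by
    have h := hA.eigenvectorBasis.orthonormal.inner_sum v g univ
    rw [PiLp.inner_apply] at h
    simpa [dotProduct, mul_comm] using h
  have act (g : ι → ℝ) : A *ᵥ (∑ i, g i • hA.eigenvectorBasis i).ofLp =
      (∑ i, (hA.eigenvalues i * g i) • hA.eigenvectorBasis i).ofLp := by
    simp [mulVec_sum, mulVec_smul, hA.mulVec_eigenvectorBasis, smul_smul, mul_comm]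
  have meas : Measurable fun g : ι → ℝ ↦ F (g ⬝ᵥ g) (g ⬝ᵥ A *ᵥ g) :=
    hF.comp (f := fun g : ι → ℝ ↦ (g ⬝ᵥ g, g ⬝ᵥ A *ᵥ g))
      (by unfold dotProduct mulVec dotProduct; fun_prop)
  conv_lhs => rw [← map_sum_smul_gaussianPi hA.eigenvectorBasis]
  rw [lintegral_map meas (by fun_prop)]
  simp_rw [act, dot, dotProduct, mul_left_comm _ (hA.eigenvalues _), sq]

theorem sum_neg_log_one_sub_eigenvalues_le [DecidableEq ι] (hA : A.IsHermitian) (htr : A.trace = 0)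
    (hle : ∀ v, v ⬝ᵥ A *ᵥ v ≤ v ⬝ᵥ v) {t : ℝ} (ht0 : 0 ≤ t) (ht : t < 1) :
    ∑ i, -Real.log (1 - t * hA.eigenvalues i) ≤
      (∑ i, ∑ j, A i j ^ 2) * (-t - Real.log (1 - t)) := by
  have eigenvalue_sum : ∑ i, hA.eigenvalues i = 0 := by
    rw [← htr, hA.trace_eq_sum_eigenvalues]; rfl
  calc ∑ i, -Real.log (1 - t * hA.eigenvalues i)
      = ∑ i, (-(t * hA.eigenvalues i) - Real.log (1 - t * hA.eigenvalues i)) := by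
        simp_rw [sum_sub_distrib, sum_neg_distrib, ← mul_sum, eigenvalue_sum]
        ring
    _ ≤ ∑ i, hA.eigenvalues i ^ 2 * (-t - Real.log (1 - t)) :=
        sum_le_sum fun i _ ↦ neg_sub_log_one_sub_mul_le ht0 ht (eigenvalues_le_one hA hle i)
    _ = _ := by rw [← sum_mul, sum_sq_eigenvalues]

theorem lintegral_exp_quadraticForm_gaussian_le (hA : A.IsHermitian) (htr : A.trace = 0)
    (hle : ∀ v, v ⬝ᵥ A *ᵥ v ≤ v ⬝ᵥ v) {c t : ℝ} (hc : c < 1 / 2) (ht0 : 0 ≤ t) (ht : t < 1) :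
    ∫⁻ g, .ofReal (Real.exp (c * (g ⬝ᵥ g) + (1 - 2 * c) * t / 2 * (g ⬝ᵥ A *ᵥ g)))
      ∂gaussianPi ι ≤
    .ofReal (Real.exp (-(Fintype.card ι * Real.log (1 - 2 * c)) / 2 +
      (∑ i, ∑ j, A i j ^ 2) * (-t - Real.log (1 - t)) / 2)) := by
  classical
  have factor_pos (i) : 0 < 1 - t * hA.eigenvalues i := by
    nlinarith [eigenvalues_le_one hA hle i]
  have eigen_lt (i) : c + (1 - 2 * c) * t / 2 * hA.eigenvalues i < 1 / 2 := by
    nlinarith [factor_pos i]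
  rw [lintegral_comp_quadraticForm_gaussian hA
    (F := fun a b ↦ .ofReal (Real.exp (c * a + (1 - 2 * c) * t / 2 * b)))
    (by unfold Function.uncurry; fun_prop)]
  simp_rw [mul_sum, ← sum_add_distrib, ← mul_assoc, ← add_mul,
    lintegral_exp_sum_mul_sq_gaussian eigen_lt]
  refine ENNReal.ofReal_le_ofReal (Real.exp_le_exp.2 ?_)
  calc _ = ∑ i, (-Real.log (1 - 2 * c) / 2 + -Real.log (1 - t * hA.eigenvalues i) / 2) := by
        refine sum_congr rfl fun i _ ↦ ?_
        rw [show 1 - 2 * (c + (1 - 2 * c) * t / 2 * hA.eigenvalues i) =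
          (1 - 2 * c) * (1 - t * hA.eigenvalues i) by ring,
          Real.log_mul (by linarith) (factor_pos i).ne']
        ring
    _ = -(Fintype.card ι * Real.log (1 - 2 * c)) / 2 +
        (∑ i, -Real.log (1 - t * hA.eigenvalues i)) / 2 := by
        rw [sum_add_distrib, sum_const, card_univ, nsmul_eq_mul, ← sum_div]
        ring
    _ ≤ _ := by
        gcongr
        exact sum_neg_log_one_sub_eigenvalues_le hA htr hle ht0 ht

theorem lintegral_exp_rademacher_le_gaussian_of_affine [DecidableEq ι] {q : (ι → ℝ) → ℝ}
    (hq : Measurable q) (affine : ∀ i x, ∃ a b, ∀ t, q (Function.update x i t) = a + b * t) :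
    ∫⁻ r, .ofReal (Real.exp (q r)) ∂rademacherPi ι ≤
      ∫⁻ g, .ofReal (Real.exp (q g)) ∂gaussianPi ι := by
  refine lintegral_pi_mono_of_update (by fun_prop) fun i x ↦ ?_
  obtain ⟨a, b, hab⟩ := affine i x
  simp_rw [hab]
  have gaussian := lintegral_exp_quadratic_gaussianReal (α := 0) (by norm_num) a b
  simp only [mul_zero, zero_mul, add_zero, sub_zero, mul_one, Real.log_one, zero_div] at gaussian
  exact (lintegral_exp_affine_rademacher_le a b).trans_eq gaussian.symm

theorem quadraticForm_update_eq [DecidableEq ι] {i : ι} (hi : A i i = 0) (x : ι → ℝ) :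
    ∃ a b, ∀ t, Function.update x i t ⬝ᵥ A *ᵥ Function.update x i t = a + b * t := by
  set z := Function.update x i 0
  have split (t : ℝ) : Function.update x i t = z + Pi.single i t := by
    ext j
    rcases eq_or_ne j i with rfl | hj <;> simp [z, *]
  refine ⟨z ⬝ᵥ A *ᵥ z, (z ᵥ* A) i + (A *ᵥ z) i, fun t ↦ ?_⟩
  have diagonal_term : (A *ᵥ Pi.single i t) i = 0 := by simp [hi]
  rw [split, mulVec_add, add_dotProduct, dotProduct_add, dotProduct_add, single_dotProduct,
    single_dotProduct, diagonal_term, dotProduct_mulVec z A (Pi.single i t), dotProduct_single]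
  ring

theorem lintegral_exp_chaos_rademacher_le (hA : A.IsHermitian) (hdiag : ∀ i, A i i = 0)
    (hle : ∀ v, v ⬝ᵥ A *ᵥ v ≤ v ⬝ᵥ v) {t : ℝ} (ht0 : 0 ≤ t) (ht : t < 1) :
    ∫⁻ r, .ofReal (Real.exp (t / 2 * (r ⬝ᵥ A *ᵥ r))) ∂rademacherPi ι ≤
    .ofReal (Real.exp ((∑ i, ∑ j, A i j ^ 2) * (-t - Real.log (1 - t)) / 2)) := by
  classical
  have dominated := lintegral_exp_rademacher_le_gaussian_of_affine
    (q := fun r : ι → ℝ ↦ t / 2 * (r ⬝ᵥ A *ᵥ r))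
    (by unfold mulVec dotProduct; fun_prop) fun i x ↦ by
      obtain ⟨a, b, hab⟩ := quadraticForm_update_eq (hdiag i) x
      exact ⟨t / 2 * a, t / 2 * b, fun s ↦ by rw [hab]; ring⟩
  have gaussian := lintegral_exp_quadraticForm_gaussian_le hA (by simp [trace, hdiag]) hle
    (c := 0) (by norm_num) ht0 ht
  simp only [zero_mul, mul_zero, sub_zero, one_mul, zero_add, Real.log_one, neg_zero,
    zero_div] at gaussian
  exact dominated.trans gaussian

end QuadraticForm

section UpperTail

variable [DecidableEq ι]

theorem dotProduct_offDiagPart_vecMulVec_le {y : ι → ℝ} (hy : y ⬝ᵥ y ≤ 1) (v : ι → ℝ) :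
    v ⬝ᵥ offDiagPart (vecMulVec y y) *ᵥ v ≤ v ⬝ᵥ v := by
  have cauchy_schwarz : (y ⬝ᵥ v) ^ 2 ≤ (y ⬝ᵥ y) * (v ⬝ᵥ v) := by
    simpa only [dotProduct, sq] using sum_mul_sq_le_sq_mul_sq univ y v
  have diagonal_nonneg : 0 ≤ ∑ i, vecMulVec y y i i * v i ^ 2 :=
    sum_nonneg fun i _ ↦ mul_nonneg (mul_self_nonneg _) (sq_nonneg _)
  rw [dotProduct_offDiagPart_mulVec, vecMulVec_mulVec, dotProduct_smul]
  have : 0 ≤ v ⬝ᵥ v := sum_nonneg fun i _ ↦ mul_self_nonneg _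
  simp only [MulOpposite.smul_eq_mul_unop, MulOpposite.unop_op, dotProduct_comm v y, ← sq]
  linarith [mul_le_of_le_one_left this hy]

theorem sum_sq_offDiagPart_vecMulVec_le {y : ι → ℝ} (hy : y ⬝ᵥ y ≤ 1) :
    ∑ i, ∑ j, offDiagPart (vecMulVec y y) i j ^ 2 ≤ 1 := by
  have entry_le (i j : ι) : offDiagPart (vecMulVec y y) i j ^ 2 ≤ y i * y i * (y j * y j) := by
    rcases eq_or_ne i j with rfl | hij
    · rw [offDiagPart_apply_self, zero_pow two_ne_zero]
      exact mul_self_nonneg _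
    · rw [offDiagPart_apply_of_ne _ hij, vecMulVec_apply]
      exact le_of_eq (by ring)
  calc _ ≤ ∑ i, ∑ j, y i * y i * (y j * y j) :=
        sum_le_sum fun i _ ↦ sum_le_sum fun j _ ↦ entry_le i j
    _ = (y ⬝ᵥ y) ^ 2 := by rw [sq, dotProduct, sum_mul_sum]
    _ ≤ 1 := pow_le_one₀ (sum_nonneg fun i _ ↦ mul_self_nonneg _) hy

theorem lintegral_exp_pos_sq_mulVec_rademacher_le {W : Matrix ι κ ℝ} {y : ι → ℝ}
    (hW : W * Wᵀ = 1 + offDiagPart (vecMulVec y y)) (hy : y ⬝ᵥ y ≤ 1) {τ : ℝ} (hτ0 : 0 ≤ τ)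
    (hτ : τ < 1) :
    ∫⁻ r, .ofReal (Real.exp (τ / (2 * (1 + τ)) * (W *ᵥ r ⬝ᵥ W *ᵥ r))) ∂rademacherPi κ ≤
    .ofReal (Real.exp ((Fintype.card ι * Real.log (1 + τ) - τ - Real.log (1 - τ)) / 2)) := by
  set c := τ / (2 * (1 + τ)) with hc
  have : 0 ≤ c := by positivity
  have one_sub : 1 - 2 * c = (1 + τ)⁻¹ := by rw [hc]; field_simp; ring
  have weight : (1 - 2 * c) * τ / 2 = c := by rw [one_sub, hc]; field_simp
  have scale : √(2 * c) * √(2 * c) = 2 * c := Real.mul_self_sqrt (by positivity)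
  have hermitian : (vecMulVec y y).IsHermitian := by
    ext i j
    simp [vecMulVec_apply, mul_comm]
  have gaussian := lintegral_exp_quadraticForm_gaussian_le (isHermitian_offDiagPart hermitian)
    (trace_offDiagPart _) (dotProduct_offDiagPart_vecMulVec_le hy) (c := c)
    (by linarith [inv_pos.2 (by linarith : 0 < 1 + τ)]) hτ0 hτ
  rw [weight, one_sub, Real.log_inv] at gaussian
  calc _ = ∫⁻ r, .ofReal (Real.exp ((√(2 * c) • W) *ᵥ r ⬝ᵥ (√(2 * c) • W) *ᵥ r / 2))
          ∂rademacherPi κ := by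
        simp_rw [smul_mulVec, smul_dotProduct, dotProduct_smul, smul_smul, scale, smul_eq_mul,
          mul_assoc, mul_div_cancel_left₀ _ (two_ne_zero (α := ℝ))]
    _ ≤ ∫⁻ g, .ofReal (Real.exp (c * (g ⬝ᵥ g) + c * (g ⬝ᵥ offDiagPart (vecMulVec y y) *ᵥ g)))
          ∂gaussianPi ι := by
        refine (lintegral_exp_sq_mulVec_rademacher_le _).trans_eq (lintegral_congr fun g ↦ ?_)
        rw [transpose_smul, Matrix.smul_mul, Matrix.mul_smul, smul_smul, scale, hW,
          smul_mulVec, add_mulVec, one_mulVec, dotProduct_smul, dotProduct_add, smul_eq_mul]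
        ring_nf
    _ ≤ _ := by
        grw [gaussian, sum_sq_offDiagPart_vecMulVec_le hy]
        · exact le_of_eq (by ring_nf)
        · exact neg_sub_log_one_sub_nonneg hτ

end UpperTail

section LowerTail

/-- Any two distinct rows of `W` have at most one column in common where both are nonzero. For the
coefficient matrix of the rows of a symmetric matrix this records that rows `i` and `j` share only
the entry at `{i, j}`, so that squaring the off-diagonal Gram entries produces no cross terms. -/
def RowsMeetOnce {ι κ : Type*} (W : Matrix ι κ ℝ) : Prop :=
  ∀ ⦃i j⦄, i ≠ j → ∀ ⦃e f⦄, e ≠ f → W i e * W j e * (W i f * W j f) = 0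

theorem sum_sq_offDiagPart_transpose_mul_le [DecidableEq κ] {W : Matrix ι κ ℝ}
    (hrow : ∀ i, W i ⬝ᵥ W i = 1) (hmeet : RowsMeetOnce W) :
    ∑ e, ∑ f, offDiagPart (Wᵀ * W) e f ^ 2 ≤ Fintype.card ι := by
  classical
  have entry_le (e f : κ) : offDiagPart (Wᵀ * W) e f ^ 2 ≤ ∑ i, W i e ^ 2 * W i f ^ 2 := by
    rcases eq_or_ne e f with rfl | hef
    · rw [offDiagPart_apply_self, zero_pow two_ne_zero]
      positivity
    · rw [offDiagPart_apply_of_ne _ hef, mul_apply, sq, sum_mul_sum]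
      refine le_of_eq (sum_congr rfl fun i _ ↦ ?_)
      rw [sum_eq_single i _ (by simp)]
      · simp only [transpose_apply]; ring
      · intro j _ hji
        rw [transpose_apply, transpose_apply, ← hmeet hji.symm hef]
        ring
  calc _ ≤ ∑ e, ∑ f, ∑ i, W i e ^ 2 * W i f ^ 2 :=
        sum_le_sum fun e _ ↦ sum_le_sum fun f _ ↦ entry_le e f
    _ = ∑ i, (W i ⬝ᵥ W i) ^ 2 := by
        simp_rw [sum_comm (t := (univ : Finset ι)), dotProduct, ← sq, sq (∑ _, _), sum_mul_sum]
    _ = Fintype.card ι := by simp [hrow]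

theorem mulVec_dotProduct_mulVec_eq [DecidableEq κ] (W : Matrix ι κ ℝ) (v : κ → ℝ) :
    W *ᵥ v ⬝ᵥ W *ᵥ v = v ⬝ᵥ offDiagPart (Wᵀ * W) *ᵥ v + ∑ e, (Wᵀ * W) e e * v e ^ 2 := by
  rw [dotProduct_offDiagPart_mulVec, sub_add_cancel, ← mulVec_mulVec, dotProduct_mulVec _ Wᵀ,
    vecMul_transpose]

theorem mulVec_dotProduct_mulVec_of_sq_eq_one [DecidableEq κ] {W : Matrix ι κ ℝ}
    (hrow : ∀ i, W i ⬝ᵥ W i = 1) {r : κ → ℝ} (hr : ∀ e, r e ^ 2 = 1) :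
    W *ᵥ r ⬝ᵥ W *ᵥ r = r ⬝ᵥ offDiagPart (Wᵀ * W) *ᵥ r + Fintype.card ι := by
  have trace_gram : (Wᵀ * W).trace = Fintype.card ι := by
    rw [trace_mul_comm]
    exact (sum_congr rfl fun i _ ↦ hrow i).trans (by simp)
  simp_rw [mulVec_dotProduct_mulVec_eq W r, hr, mul_one, ← trace_gram, trace, diag_apply]

theorem neg_dotProduct_offDiagPart_le [DecidableEq κ] {W : Matrix ι κ ℝ}
    (hcol : ∀ e, (Wᵀ * W) e e ≤ 1) (v : κ → ℝ) :
    -(v ⬝ᵥ offDiagPart (Wᵀ * W) *ᵥ v) ≤ v ⬝ᵥ v := by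
  have square_nonneg : 0 ≤ W *ᵥ v ⬝ᵥ W *ᵥ v := sum_nonneg fun i _ ↦ mul_self_nonneg _
  have diagonal_le : ∑ e, (Wᵀ * W) e e * v e ^ 2 ≤ v ⬝ᵥ v :=
    sum_le_sum fun e _ ↦ by rw [← sq]; exact mul_le_of_le_one_left (sq_nonneg _) (hcol e)
  linarith [mulVec_dotProduct_mulVec_eq W v]

theorem lintegral_exp_neg_sq_mulVec_rademacher_le {W : Matrix ι κ ℝ}
    (hrow : ∀ i, W i ⬝ᵥ W i = 1) (hcol : ∀ e, (Wᵀ * W) e e ≤ 1) (hmeet : RowsMeetOnce W)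
    {t : ℝ} (ht0 : 0 ≤ t) (ht : t < 1) :
    ∫⁻ r, .ofReal (Real.exp (-(t / 2) * (W *ᵥ r ⬝ᵥ W *ᵥ r))) ∂rademacherPi κ ≤
    .ofReal (Real.exp (-(Fintype.card ι * (t + Real.log (1 - t) / 2)))) := by
  classical
  have ae_signs : ∀ᵐ r ∂rademacherPi κ, ∀ e, r e ^ 2 = 1 :=
    ae_all_iff.2 fun e ↦ (Measure.tendsto_eval_ae_ae
      (μ := fun _ : κ ↦ rademacher) (i := e)).eventually ae_rademacher_sq
  have chaos := lintegral_exp_chaos_rademacher_le (A := -offDiagPart (Wᵀ * W))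
    (isHermitian_offDiagPart (isHermitian_conjTranspose_mul_self W)).neg
    (fun e ↦ by rw [neg_apply, offDiagPart_apply_self, neg_zero])
    (fun v ↦ by rw [neg_mulVec, dotProduct_neg]; exact neg_dotProduct_offDiagPart_le hcol v) ht0 ht
  simp only [Matrix.neg_apply, neg_sq] at chaos
  calc _ = ∫⁻ r, .ofReal (Real.exp (-(Fintype.card ι * t / 2))) *
        .ofReal (Real.exp (t / 2 * (r ⬝ᵥ (-offDiagPart (Wᵀ * W)) *ᵥ r))) ∂rademacherPi κ := by
        refine lintegral_congr_ae (ae_signs.mono fun r hr ↦ ?_)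
        simp only [mulVec_dotProduct_mulVec_of_sq_eq_one hrow hr, neg_mulVec, dotProduct_neg]
        rw [← ENNReal.ofReal_mul (Real.exp_pos _).le, ← Real.exp_add]
        ring_nf
    _ ≤ .ofReal (Real.exp (-(Fintype.card ι * t / 2))) *
        .ofReal (Real.exp (Fintype.card ι * (-t - Real.log (1 - t)) / 2)) := by
        rw [lintegral_const_mul _ (by unfold mulVec dotProduct; fun_prop)]
        grw [chaos, sum_sq_offDiagPart_transpose_mul_le hrow hmeet]
        exact neg_sub_log_one_sub_nonneg ht
    _ = _ := by
        rw [← ENNReal.ofReal_mul (Real.exp_pos _).le, ← Real.exp_add]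
        ring_nf

end LowerTail

/-! ### Chernoff bounds -/

theorem exists_upper_tail_parameter {n ε : ℝ} (hn : 0 ≤ n) (hε : 0 < ε)
    (hlarge : 5 / 2 ≤ n * (ε ^ 2 / 2 - ε ^ 3 / 3)) :
    ∃ τ, 0 ≤ τ ∧ τ < 1 ∧
      n * Real.log (1 + τ) - τ - Real.log (1 - τ) - τ / (1 + τ) * ((1 + ε) * n) ≤
        -(n * (ε ^ 2 / 2 - ε ^ 3 / 3)) := by
  set D := ε ^ 2 / 2 - ε ^ 3 / 3 with hD
  -- `τ = ε` optimises the terms of order `n`, but `-τ - log (1 - τ)` explodes near `1`; for large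
  -- `ε` the constant `τ = 1 / 2` is already good enough.
  rcases le_total ε (1 / 2) with small | large
  · refine ⟨ε, hε.le, by linarith, ?_⟩
    have log_bound : Real.log (1 + ε) ≤ ε - D - 9 / 20 * ε ^ 2 * D := by
      have : 0 ≤ ε ^ 4 * (1 / 2 - ε) := mul_nonneg (by positivity) (by linarith)
      rw [hD]
      linarith [log_one_add_le_quintic hε.le]
    have cancel : ε / (1 + ε) * ((1 + ε) * n) = ε * n := by field_simp
    have gain := mul_le_mul_of_nonneg_left log_bound hn
    have loss := neg_sub_log_one_sub_le_sq small
    have margin := mul_le_mul_of_nonneg_left hlarge (sq_nonneg ε)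
    rw [cancel]
    linarith [sq_nonneg ε]
  · refine ⟨1 / 2, by norm_num, by norm_num, ?_⟩
    have log_bound : Real.log (1 + 1 / 2) ≤ (1 + ε) / 3 - 11 / 10 * D := by
      rw [hD]
      linarith [log_one_add_le_quintic (x := 1 / 2) (by norm_num),
        pow_nonneg (sub_nonneg.2 large) 3]
    have gain := mul_le_mul_of_nonneg_left log_bound hn
    have loss := neg_sub_log_one_sub_le_sq (x := 1 / 2) le_rfl
    linarith

theorem measure_le_of_lintegral_exp_le {Ω : Type*} [MeasurableSpace Ω] {μ : Measure Ω} {X : Ω → ℝ}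
    (hX : Measurable X) {a b : ℝ} (h : ∫⁻ ω, .ofReal (Real.exp (X ω)) ∂μ ≤ .ofReal (Real.exp b)) :
    μ {ω | a ≤ X ω} ≤ .ofReal (Real.exp (b - a)) := by
  have markov := meas_ge_le_lintegral_div (μ := μ)
    (f := fun ω ↦ ENNReal.ofReal (Real.exp (X ω))) (ε := .ofReal (Real.exp a)) (by fun_prop)
    (by simp only [ne_eq, ENNReal.ofReal_eq_zero, not_le, Real.exp_pos]) ENNReal.ofReal_ne_top
  simp only [ENNReal.ofReal_le_ofReal_iff (Real.exp_pos _).le, Real.exp_le_exp] at markov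
  rw [Real.exp_sub, ENNReal.ofReal_div_of_pos (Real.exp_pos a)]
  exact markov.trans (ENNReal.div_le_div_right h _)

theorem measure_sq_mulVec_le_le {W : Matrix ι κ ℝ} (hrow : ∀ i, W i ⬝ᵥ W i = 1)
    (hcol : ∀ e, (Wᵀ * W) e e ≤ 1) (hmeet : RowsMeetOnce W) {ε : ℝ} (hε : 0 ≤ ε) :
    rademacherPi κ {r | W *ᵥ r ⬝ᵥ W *ᵥ r ≤ (1 - ε) * Fintype.card ι} ≤
      .ofReal (Real.exp (-(Fintype.card ι * (ε ^ 2 / 2 - ε ^ 3 / 3)) / 2)) := by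
  set n := (Fintype.card ι : ℝ)
  set t := ε / (1 + ε) with ht
  have ht0 : 0 ≤ t := by positivity
  have one_sub : 1 - t = (1 + ε)⁻¹ := by rw [ht]; field_simp; ring
  have ht1 : t < 1 := by linarith [inv_pos.2 (by linarith : 0 < 1 + ε)]
  have slope : t * (1 + ε) = ε := by rw [ht]; field_simp
  have chernoff := measure_le_of_lintegral_exp_le (a := -(t / 2) * ((1 - ε) * n))
    (by unfold mulVec dotProduct; fun_prop)
    (lintegral_exp_neg_sq_mulVec_rademacher_le hrow hcol hmeet ht0 ht1)
  refine (measure_mono fun r hr ↦ ?_).trans (chernoff.trans ?_)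
  · exact Set.mem_ofPred.2 (mul_le_mul_of_nonpos_left (Set.mem_ofPred.1 hr) (by linarith))
  · rw [one_sub, Real.log_inv]
    gcongr
    calc _ = n * (Real.log (1 + ε) - t * (1 + ε)) / 2 := by ring
      _ ≤ n * (-(ε ^ 2 / 2 - ε ^ 3 / 3)) / 2 := by
        gcongr
        linarith [log_one_add_le_cubic hε]
      _ = _ := by ring

theorem measure_le_sq_mulVec_le [DecidableEq ι] {W : Matrix ι κ ℝ} {y : ι → ℝ}
    (hW : W * Wᵀ = 1 + offDiagPart (vecMulVec y y)) (hy : y ⬝ᵥ y ≤ 1) {ε : ℝ} (hε : 0 < ε)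
    (hlarge : 5 / 2 ≤ Fintype.card ι * (ε ^ 2 / 2 - ε ^ 3 / 3)) :
    rademacherPi κ {r | (1 + ε) * Fintype.card ι ≤ W *ᵥ r ⬝ᵥ W *ᵥ r} ≤
      .ofReal (Real.exp (-(Fintype.card ι * (ε ^ 2 / 2 - ε ^ 3 / 3)) / 2)) := by
  obtain ⟨τ, hτ0, hτ1, exponent_le⟩ := exists_upper_tail_parameter (by positivity) hε hlarge
  have chernoff := measure_le_of_lintegral_exp_le
    (a := τ / (2 * (1 + τ)) * ((1 + ε) * Fintype.card ι)) (by unfold mulVec dotProduct; fun_prop)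
    (lintegral_exp_pos_sq_mulVec_rademacher_le hW hy hτ0 hτ1)
  refine (measure_mono fun r hr ↦ ?_).trans (chernoff.trans ?_)
  · exact Set.mem_ofPred.2 (mul_le_mul_of_nonneg_left (Set.mem_ofPred.1 hr) (by positivity))
  · gcongr
    rw [mul_comm 2, ← div_div, div_mul_eq_mul_div, ← sub_div]
    gcongr

/-! ### The symmetric sign matrix -/

theorem toMeasure_uniformOfFintype_pi [DecidableEq ι] {Ω : ι → Type*} [∀ i, Fintype (Ω i)]
    [∀ i, Nonempty (Ω i)] [∀ i, MeasurableSpace (Ω i)] [∀ i, MeasurableSingletonClass (Ω i)] :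
    (PMF.uniformOfFintype (∀ i, Ω i)).toMeasure =
      Measure.pi fun i ↦ (PMF.uniformOfFintype (Ω i)).toMeasure := by
  refine Measure.ext_of_singleton fun ω ↦ ?_
  simp only [Measure.pi_singleton, PMF.toMeasure_apply_singleton, MeasurableSet.singleton,
    PMF.uniformOfFintype_apply, Fintype.card_pi, Nat.cast_prod]
  exact ENNReal.prod_inv_distrib (by simp [Set.Pairwise])

/-- The entry of the random symmetric sign matrix at an unordered pair of indices; indexing by
`Sym2` makes the entries independent without exception. -/
def edgeSign {N : ℕ} (ω : Fin N → Fin N → Bool) (e : Sym2 (Fin N)) : ℝ := rad (ω e.inf e.sup)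

theorem rsym_eq_edgeSign {N : ℕ} (ω : Fin N → Fin N → Bool) (i j : Fin N) :
    rsym ω i j = edgeSign ω s(i, j) := by
  rcases le_total i j with h | h
  · simp [rsym, edgeSign, h]
  · rcases h.eq_or_lt with rfl | h
    · simp [rsym, edgeSign]
    · simp [rsym, edgeSign, h.le, h.not_ge]

theorem μsym_eq_infinitePi (N : ℕ) :
    μsym N = Measure.infinitePi fun _ ↦ Measure.infinitePi fun _ ↦
      (PMF.uniformOfFintype Bool).toMeasure := by
  simp_rw [μsym, Measure.infinitePi_eq_pi, toMeasure_uniformOfFintype_pi]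

instance (N : ℕ) : IsProbabilityMeasure (μsym N) := by
  unfold μsym
  infer_instance

theorem measurable_edgeSign {N : ℕ} : Measurable (edgeSign (N := N)) :=
  measurable_pi_lambda _ fun e ↦ (by fun_prop : Measurable rad).comp
    ((measurable_pi_apply e.sup).comp (measurable_pi_apply e.inf))

theorem map_edgeSign_μsym (N : ℕ) : (μsym N).map edgeSign = rademacherPi (Sym2 (Fin N)) := by
  have indep : iIndepFun (fun e ω ↦ edgeSign ω e) (μsym N) := by
    rw [μsym_eq_infinitePi]
    exact (iIndepFun_uncurry_infinitePi' (fun _ _ ↦ (PMF.uniformOfFintype Bool).toMeasure)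
      (fun _ _ ↦ (by fun_prop : Measurable rad))).precomp
      (g := fun e : Sym2 (Fin N) ↦ (e.inf, e.sup)) fun e f h ↦
        Sym2.inf_eq_inf_and_sup_eq_sup.1 (Prod.ext_iff.1 h)
  have marginal (e : Sym2 (Fin N)) : (μsym N).map (edgeSign · e) = rademacher := by
    have coordinate : MeasurePreserving (fun ω : Fin N → Fin N → Bool ↦ ω e.inf e.sup) (μsym N)
        (PMF.uniformOfFintype Bool).toMeasure := by
      rw [μsym_eq_infinitePi]
      exact (measurePreserving_eval_infinitePi (fun _ ↦ _) e.sup).comp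
        (measurePreserving_eval_infinitePi (fun _ ↦ _) e.inf)
    rw [rademacher, ← coordinate.map_eq, Measure.map_map (by fun_prop) (by fun_prop)]
    rfl
  rw [rademacherPi, ← funext marginal]
  exact (iIndepFun_iff_map_fun_eq_pi_map fun e ↦
    (measurable_pi_iff.1 measurable_edgeSign e).aemeasurable).1 indep

/-- The coefficient matrix of `R x`, for a symmetric `R`, as a function of the entries of `R`: row
`i` has `x k` in the column of the unordered pair `s(i, k)`. -/
def entryCoeff {ι : Type*} (x : ι → ℝ) : Matrix ι (Sym2 ι) ℝ :=
  of fun i ↦ Function.extend (fun k ↦ s(i, k)) x 0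

theorem entryCoeff_mk {ι : Type*} (x : ι → ℝ) (i k : ι) : entryCoeff x i s(i, k) = x k :=
  Function.Injective.extend_apply (fun _ _ h ↦ Sym2.congr_right.1 h) _ _ _

theorem entryCoeff_of_notMem {ι : Type*} (x : ι → ℝ) {i : ι} {e : Sym2 ι} (h : i ∉ e) :
    entryCoeff x i e = 0 :=
  Function.extend_apply' _ _ _ fun ⟨k, hk⟩ ↦ h (hk ▸ Sym2.mem_mk_left i k)

theorem entryCoeff_mulVec (x : ι → ℝ) (r : Sym2 ι → ℝ) (i : ι) :
    (entryCoeff x *ᵥ r) i = ∑ k, x k * r s(i, k) := by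
  have inj : Function.Injective fun k ↦ s(i, k) := fun _ _ h ↦ Sym2.congr_right.1 h
  refine (Fintype.sum_of_injective _ inj _ _ (fun e he ↦ ?_) fun k ↦ ?_).symm
  · exact mul_eq_zero_of_left (entryCoeff_of_notMem x fun ⟨k, hk⟩ ↦ he ⟨k, hk.symm⟩) _
  · exact congrArg (· * r s(i, k)) (entryCoeff_mk x i k).symm

theorem entryCoeff_mul_transpose [DecidableEq ι] {x : ι → ℝ} (hx : x ⬝ᵥ x = 1) :
    entryCoeff x * (entryCoeff x)ᵀ = 1 + offDiagPart (vecMulVec x x) := by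
  ext i j
  rw [Matrix.add_apply]
  have expand : (entryCoeff x * (entryCoeff x)ᵀ) i j = ∑ k, x k * entryCoeff x j s(i, k) :=
    entryCoeff_mulVec x (entryCoeff x j) i
  rw [expand]
  rcases eq_or_ne i j with rfl | hij
  · simp_rw [entryCoeff_mk, offDiagPart_apply_self, one_apply_eq, add_zero, ← hx, dotProduct]
  · rw [offDiagPart_apply_of_ne _ hij, one_apply_ne hij, zero_add, vecMulVec_apply,
      sum_eq_single j, Sym2.eq_swap, entryCoeff_mk, mul_comm]
    · intro k _ hk
      rw [entryCoeff_of_notMem, mul_zero]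
      simp [hij.symm, hk.symm]
    · simp

theorem rowsMeetOnce_entryCoeff {ι : Type*} (x : ι → ℝ) : RowsMeetOnce (entryCoeff x) := by
  intro i j hij e f hef
  have eq_mk {e : Sym2 ι} (h : entryCoeff x i e * entryCoeff x j e ≠ 0) : e = s(i, j) :=
    (Sym2.mem_and_mem_iff hij).1
      ⟨not_imp_comm.1 (entryCoeff_of_notMem x) (left_ne_zero_of_mul h),
        not_imp_comm.1 (entryCoeff_of_notMem x) (right_ne_zero_of_mul h)⟩
  by_contra h
  exact hef ((eq_mk (left_ne_zero_of_mul h)).trans (eq_mk (right_ne_zero_of_mul h)).symm)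

theorem sum_sq_entryCoeff_le (x : ι → ℝ) (e : Sym2 ι) :
    ∑ i, entryCoeff x i e ^ 2 ≤ x ⬝ᵥ x := by
  classical
  simp_rw [dotProduct, ← sq]
  induction e with | _ a b
  have vanish {i : ι} (h : i ∉ s(a, b)) : entryCoeff x i s(a, b) ^ 2 = 0 := by
    rw [entryCoeff_of_notMem x h, zero_pow two_ne_zero]
  rcases eq_or_ne a b with rfl | hab
  · rw [sum_eq_single a (fun i _ hi ↦ vanish (by simpa using hi)) (by simp), entryCoeff_mk]
    exact single_le_sum (fun i _ ↦ sq_nonneg (x i)) (mem_univ a)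
  · calc _ = ∑ i ∈ {a, b}, entryCoeff x i s(a, b) ^ 2 :=
          (sum_subset (subset_univ _) fun i _ hi ↦ vanish (by simpa using hi)).symm
      _ = ∑ i ∈ {a, b}, x i ^ 2 := by
          rw [sum_pair hab, sum_pair hab, entryCoeff_mk, Sym2.eq_swap, entryCoeff_mk, add_comm]
      _ ≤ _ := sum_le_univ_sum_of_nonneg fun i ↦ sq_nonneg (x i)

theorem offDiagPart_submatrix {ι κ : Type*} [DecidableEq ι] [DecidableEq κ] {s : κ → ι}
    (hs : Function.Injective s) (A : Matrix ι ι ℝ) :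
    offDiagPart (A.submatrix s s) = (offDiagPart A).submatrix s s := by
  ext i j
  simp [offDiagPart, diagonal_apply, hs.eq_iff]

theorem RowsMeetOnce.submatrix {ι ι' κ : Type*} {W : Matrix ι κ ℝ} (hW : RowsMeetOnce W)
    {s : ι' → ι} (hs : Function.Injective s) : RowsMeetOnce (W.submatrix s id) :=
  fun _ _ hij _ _ hef ↦ hW (hs.ne hij) hef

theorem sum_comp_le_sum_of_injective {s : κ → ι} (hs : Function.Injective s) {f : ι → ℝ}
    (hf : ∀ i, 0 ≤ f i) : ∑ i, f (s i) ≤ ∑ i, f i :=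
  (sum_map univ ⟨s, hs⟩ f).symm.trans_le (sum_le_univ_sum_of_nonneg hf)

section SelectedRows

variable {s : κ → ι}

theorem measure_sq_selectedRows_le_le (hs : Function.Injective s) {x : ι → ℝ} (hx : x ⬝ᵥ x = 1)
    {ε : ℝ} (hε : 0 ≤ ε) :
    rademacherPi (Sym2 ι) {r | (entryCoeff x).submatrix s id *ᵥ r ⬝ᵥ
        (entryCoeff x).submatrix s id *ᵥ r ≤ (1 - ε) * Fintype.card κ} ≤
      .ofReal (Real.exp (-(Fintype.card κ * (ε ^ 2 / 2 - ε ^ 3 / 3)) / 2)) := by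
  classical
  refine measure_sq_mulVec_le_le (fun i ↦ ?row) (fun e ↦ ?column)
    ((rowsMeetOnce_entryCoeff x).submatrix hs) hε
  case row =>
    have diagonal := congrFun₂ (entryCoeff_mul_transpose hx) (s i) (s i)
    rwa [Matrix.add_apply, offDiagPart_apply_self, one_apply_eq, add_zero] at diagonal
  case column =>
    calc (((entryCoeff x).submatrix s id)ᵀ * (entryCoeff x).submatrix s id) e e
        = ∑ i, entryCoeff x (s i) e ^ 2 := sum_congr rfl fun i _ ↦ (sq _).symm
      _ ≤ ∑ i, entryCoeff x i e ^ 2 :=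
        sum_comp_le_sum_of_injective hs (f := fun i ↦ entryCoeff x i e ^ 2) fun i ↦ sq_nonneg _
      _ ≤ 1 := (sum_sq_entryCoeff_le x e).trans_eq hx

theorem measure_le_sq_selectedRows_le (hs : Function.Injective s) {x : ι → ℝ}
    (hx : x ⬝ᵥ x = 1) {ε : ℝ} (hε : 0 < ε)
    (hlarge : 5 / 2 ≤ Fintype.card κ * (ε ^ 2 / 2 - ε ^ 3 / 3)) :
    rademacherPi (Sym2 ι) {r | (1 + ε) * Fintype.card κ ≤ (entryCoeff x).submatrix s id *ᵥ r ⬝ᵥ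
        (entryCoeff x).submatrix s id *ᵥ r} ≤
      .ofReal (Real.exp (-(Fintype.card κ * (ε ^ 2 / 2 - ε ^ 3 / 3)) / 2)) := by
  classical
  refine measure_le_sq_mulVec_le (y := x ∘ s) ?_ ?_ hε hlarge
  · rw [transpose_submatrix, ← submatrix_mul _ _ s id s Function.bijective_id,
      entryCoeff_mul_transpose hx, submatrix_add, Pi.add_apply, Pi.add_apply, submatrix_one s hs,
      ← offDiagPart_submatrix hs]
    rfl
  · exact (sum_comp_le_sum_of_injective hs fun i ↦ mul_self_nonneg (x i)).trans_eq hx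

end SelectedRows

theorem proj_smul {N n : ℕ} (hnN : n ≤ N) (ω : Fin N → Fin N → Bool) (c : ℝ) (x : Fin N → ℝ) :
    proj hnN ω (c • x) = c • proj hnN ω x := by
  ext i
  simp only [proj, Pi.smul_apply, smul_eq_mul, mul_sum]
  exact sum_congr rfl fun k _ ↦ by ring

theorem proj_sub {N n : ℕ} (hnN : n ≤ N) (ω : Fin N → Fin N → Bool) (x y : Fin N → ℝ) :
    proj hnN ω (x - y) = proj hnN ω x - proj hnN ω y := by
  ext i
  simp only [proj, Pi.sub_apply, mul_sub, sum_sub_distrib]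

theorem sum_sq_proj {N n : ℕ} (hnN : n ≤ N) (ω : Fin N → Fin N → Bool) (x : Fin N → ℝ) :
    ∑ i, proj hnN ω x i ^ 2 =
      ((entryCoeff x).submatrix (Fin.castLE hnN) id *ᵥ edgeSign ω ⬝ᵥ
        (entryCoeff x).submatrix (Fin.castLE hnN) id *ᵥ edgeSign ω) / n := by
  rw [dotProduct, sum_div]
  refine sum_congr rfl fun i _ ↦ ?_
  have row : ((entryCoeff x).submatrix (Fin.castLE hnN) id *ᵥ edgeSign ω) i =
      ∑ k, rsym ω (Fin.castLE hnN i) k * x k := by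
    refine (entryCoeff_mulVec x _ (Fin.castLE hnN i)).trans (sum_congr rfl fun k _ ↦ ?_)
    rw [rsym_eq_edgeSign, mul_comm]
  rw [row, proj, mul_pow, inv_pow, Real.sq_sqrt n.cast_nonneg]
  ring

theorem exists_eq_smul_dotProduct_self_eq_one {x : ι → ℝ} (hx : x ≠ 0) :
    ∃ (c : ℝ) (y : ι → ℝ), 0 < c ∧ y ⬝ᵥ y = 1 ∧ x = c • y := by
  have pos : 0 < √(x ⬝ᵥ x) := Real.sqrt_pos.2 (by simpa using dotProduct_star_self_pos_iff.2 hx)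
  refine ⟨√(x ⬝ᵥ x), (√(x ⬝ᵥ x))⁻¹ • x, pos, ?_, (smul_inv_smul₀ pos.ne' x).symm⟩
  rw [smul_dotProduct, dotProduct_smul, smul_smul, ← mul_inv, Real.mul_self_sqrt
    (Real.sqrt_pos.1 pos).le, smul_eq_mul, inv_mul_cancel₀ (Real.sqrt_pos.1 pos).ne']

theorem measure_iUnion_pairs_le {Ω α : Type*} [MeasurableSpace Ω] {μ : Measure Ω} [Fintype α]
    [LinearOrder α] {E F : α → α → Set Ω} (hE : ∀ u v, E u v = E v u) (hF : ∀ u v, F u v = F v u)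
    (hF_self : ∀ u, F u u = ∅) {b : ℝ≥0∞} (hEb : ∀ u v, μ (E u v) ≤ b)
    (hFb : ∀ u v, μ (F u v) ≤ b) :
    μ (⋃ u, ⋃ v, E u v ∪ F u v) ≤ Fintype.card α ^ 2 * b := by
  -- Symmetry lets `E` be charged to the pairs `u ≤ v` and `F` to the pairs `v < u`.
  have cover : ⋃ u, ⋃ v, E u v ∪ F u v ⊆ ⋃ u, ⋃ v, if u ≤ v then E u v else F u v := by
    refine Set.iUnion₂_subset fun u v ω hω ↦ Set.mem_iUnion₂.2 ?_
    rcases hω with hω | hω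
    · rcases le_total u v with h | h
      · exact ⟨u, v, by rwa [if_pos h]⟩
      · exact ⟨v, u, by rwa [if_pos h, hE]⟩
    · rcases lt_trichotomy u v with h | rfl | h
      · exact ⟨v, u, by rwa [if_neg h.not_ge, hF]⟩
      · exact absurd hω (by simp only [hF_self, Set.mem_empty_iff_false, not_false_iff])
      · exact ⟨u, v, by rwa [if_neg h.not_ge]⟩
  calc _ ≤ ∑ u, ∑ v, μ (if u ≤ v then E u v else F u v) :=
        (measure_mono cover).trans <| (measure_iUnion_fintype_le _ _).trans <|
          sum_le_sum fun u _ ↦ measure_iUnion_fintype_le _ _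
    _ ≤ ∑ _u : α, ∑ _v : α, b := sum_le_sum fun u _ ↦ sum_le_sum fun v _ ↦ by
        split_ifs
        exacts [hEb u v, hFb u v]
    _ = _ := by
        simp only [sum_const, card_univ, nsmul_eq_mul]
        ring

section Projection

variable {N n : ℕ} (hnN : n ≤ N) {ε : ℝ}

theorem μsym_edgeSign_mem_le (S : Set (Sym2 (Fin N) → ℝ)) :
    μsym N {ω | edgeSign ω ∈ S} ≤ rademacherPi (Sym2 (Fin N)) S := by
  rw [← map_edgeSign_μsym]
  exact Measure.le_map_apply measurable_edgeSign.aemeasurable S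

theorem exists_unit_sum_sq_proj {x : Fin N → ℝ} (hx : x ≠ 0) :
    ∃ y : Fin N → ℝ, y ⬝ᵥ y = 1 ∧ 0 < ∑ k, x k ^ 2 ∧ ∀ ω, ∑ i, proj hnN ω x i ^ 2 =
      (∑ k, x k ^ 2) * ((entryCoeff y).submatrix (Fin.castLE hnN) id *ᵥ edgeSign ω ⬝ᵥ
        (entryCoeff y).submatrix (Fin.castLE hnN) id *ᵥ edgeSign ω / n) := by
  obtain ⟨c, y, hc, hy, rfl⟩ := exists_eq_smul_dotProduct_self_eq_one hx
  have norm_sq : ∑ k, (c • y) k ^ 2 = c ^ 2 := by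
    simp only [Pi.smul_apply, smul_eq_mul, mul_pow, ← mul_sum]
    simp_rw [sq (y _)]
    exact (congrArg (c ^ 2 * ·) hy).trans (mul_one _)
  refine ⟨y, hy, norm_sq ▸ pow_pos hc 2, fun ω ↦ ?_⟩
  rw [norm_sq]
  simp only [proj_smul, Pi.smul_apply, smul_eq_mul, mul_pow, ← mul_sum, sum_sq_proj]

theorem μsym_sum_sq_proj_lt_le (hn : 0 < n) (hε : 0 ≤ ε) (x : Fin N → ℝ) :
    μsym N {ω | ∑ i, proj hnN ω x i ^ 2 < (1 - ε) * ∑ k, x k ^ 2} ≤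
      .ofReal (Real.exp (-(n * (ε ^ 2 / 2 - ε ^ 3 / 3)) / 2)) := by
  rcases eq_or_ne x 0 with rfl | hx
  · simp [proj]
  obtain ⟨y, hy, hpos, sum_sq⟩ := exists_unit_sum_sq_proj hnN hx
  have tail := (μsym_edgeSign_mem_le _).trans
    (measure_sq_selectedRows_le_le (Fin.castLE_injective hnN) hy hε)
  rw [Fintype.card_fin] at tail
  refine (measure_mono fun ω hω ↦ ?_).trans tail
  rw [Set.mem_ofPred, sum_sq, mul_comm, mul_lt_mul_iff_left₀ hpos,
    div_lt_iff₀ (Nat.cast_pos.2 hn)] at hω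
  exact hω.le

theorem μsym_lt_sum_sq_proj_le (hε : 0 < ε) (hlarge : 5 / 2 ≤ n * (ε ^ 2 / 2 - ε ^ 3 / 3))
    (hn : 0 < n) (x : Fin N → ℝ) :
    μsym N {ω | (1 + ε) * ∑ k, x k ^ 2 < ∑ i, proj hnN ω x i ^ 2} ≤
      .ofReal (Real.exp (-(n * (ε ^ 2 / 2 - ε ^ 3 / 3)) / 2)) := by
  rcases eq_or_ne x 0 with rfl | hx
  · simp [proj]
  obtain ⟨y, hy, hpos, sum_sq⟩ := exists_unit_sum_sq_proj hnN hx
  have tail := (μsym_edgeSign_mem_le _).trans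
    (measure_le_sq_selectedRows_le (Fin.castLE_injective hnN) hy hε
      (hlarge.trans_eq (by rw [Fintype.card_fin])))
  rw [Fintype.card_fin] at tail
  refine (measure_mono fun ω hω ↦ ?_).trans tail
  rw [Set.mem_ofPred, sum_sq, mul_comm, mul_lt_mul_iff_right₀ hpos,
    lt_div_iff₀ (Nat.cast_pos.2 hn)] at hω
  exact hω.le

theorem μsym_exists_distorted_le {α : Type*} [Fintype α] [LinearOrder α] (p : α → Fin N → ℝ)
    (hε : 0 < ε) (hlarge : 5 / 2 ≤ n * (ε ^ 2 / 2 - ε ^ 3 / 3)) :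
    μsym N {ω | ∀ u v,
      (1 - ε) * ∑ k, (p u k - p v k) ^ 2 ≤
        ∑ i, (proj hnN ω (p u) i - proj hnN ω (p v) i) ^ 2 ∧
      ∑ i, (proj hnN ω (p u) i - proj hnN ω (p v) i) ^ 2 ≤
        (1 + ε) * ∑ k, (p u k - p v k) ^ 2}ᶜ ≤
    Fintype.card α ^ 2 * .ofReal (Real.exp (-(n * (ε ^ 2 / 2 - ε ^ 3 / 3)) / 2)) := by
  have hn : 0 < n := Nat.pos_of_ne_zero fun h ↦ by norm_num [h] at hlarge
  refine le_of_eq_of_le ?union (measure_iUnion_pairs_le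
    (E := fun u v ↦ {ω | ∑ i, proj hnN ω (p u - p v) i ^ 2 < (1 - ε) * ∑ k, (p u - p v) k ^ 2})
    (F := fun u v ↦ {ω | (1 + ε) * ∑ k, (p u - p v) k ^ 2 < ∑ i, proj hnN ω (p u - p v) i ^ 2})
    ?symm_low ?symm_up ?self (fun u v ↦ μsym_sum_sq_proj_lt_le hnN hn hε.le _)
    (fun u v ↦ μsym_lt_sum_sq_proj_le hnN hε hlarge hn _))
  case union =>
    congr 1
    ext ω
    simp only [proj_sub, Pi.sub_apply, Set.mem_compl_iff, Set.mem_ofPred, Set.mem_iUnion,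
      Set.mem_union, not_forall, not_and_or, not_le]
  case symm_low | symm_up =>
    intro u v
    simp only [proj_sub, Pi.sub_apply, sub_sq_comm (p u _), sub_sq_comm (proj hnN _ (p u) _)]
  case self => simp [proj]

end Projection

end FiniteIndex

theorem five_halves_le_of_mul_log_le {m : ℕ} {β T : ℝ} (hm : 2 ≤ m) (hβ : 0 ≤ β)
    (hT : (4 + 2 * β) * Real.log m ≤ T) : 5 / 2 ≤ T := by
  have log_le : Real.log 2 ≤ Real.log m := Real.log_le_log two_pos (by exact_mod_cast hm)
  nlinarith [Real.log_two_gt_d9]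

theorem sq_mul_exp_neg_half_le {m : ℝ} {β T : ℝ} (hm : 0 < m)
    (hT : (4 + 2 * β) * Real.log m ≤ T) : m ^ 2 * Real.exp (-T / 2) ≤ m ^ (-β) := by
  calc m ^ 2 * Real.exp (-T / 2) = Real.exp (2 * Real.log m - T / 2) := by
        rw [Real.exp_sub, neg_div, Real.exp_neg, ← div_eq_mul_inv, mul_comm 2, Real.exp_mul,
          Real.exp_log hm, Real.rpow_two]
    _ ≤ Real.exp (Real.log m * -β) := by
        gcongr
        linarith
    _ = m ^ (-β) := (Real.rpow_def_of_pos hm _).symm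

theorem stmt11 {N n m : ℕ} (hnN : n ≤ N) (ε β : ℝ) (hε : 0 < ε) (hβ : 0 < β)
    (hpos : 0 < ε ^ 2 / 2 - ε ^ 3 / 3)
    (p : Fin m → Fin N → ℝ)
    (hn : ((4 + 2 * β) / (ε ^ 2 / 2 - ε ^ 3 / 3)) * Real.log m ≤ (n : ℝ)) :
    ENNReal.ofReal (1 - (m : ℝ) ^ (-β)) ≤
      (μsym N) {ω | ∀ u v : Fin m,
        (1 - ε) * ∑ k, (p u k - p v k) ^ 2
            ≤ ∑ i : Fin n, (proj hnN ω (p u) i - proj hnN ω (p v) i) ^ 2 ∧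
        ∑ i : Fin n, (proj hnN ω (p u) i - proj hnN ω (p v) i) ^ 2
            ≤ (1 + ε) * ∑ k, (p u k - p v k) ^ 2} := by
  rcases le_or_gt m 1 with hm | hm
  · have : Subsingleton (Fin m) := Fin.subsingleton_iff_le_one.2 hm
    calc _ ≤ 1 := ENNReal.ofReal_le_one.2 (sub_le_self _ (by positivity))
      _ = μsym N Set.univ := measure_univ.symm
      _ ≤ _ := measure_mono fun ω _ ↦ Set.mem_ofPred.2 fun u v ↦ by
        simp [Subsingleton.elim u v]
  have exponent_ge : (4 + 2 * β) * Real.log m ≤ n * (ε ^ 2 / 2 - ε ^ 3 / 3) := by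
    rwa [div_mul_eq_mul_div, div_le_iff₀ hpos] at hn
  have failure := μsym_exists_distorted_le hnN p hε
    (five_halves_le_of_mul_log_le hm hβ.le exponent_ge)
  rw [Fintype.card_fin, ← ENNReal.ofReal_natCast, ← ENNReal.ofReal_pow (by positivity),
    ← ENNReal.ofReal_mul (by positivity)] at failure
  have union_bound := failure.trans (ENNReal.ofReal_le_ofReal
    (sq_mul_exp_neg_half_le (by positivity) exponent_ge))
  rw [ENNReal.ofReal_sub _ (by positivity), ENNReal.ofReal_one, tsub_le_iff_right,
    ← measure_univ (μ := μsym N)]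
  exact (measure_univ_le_add_compl _).trans (by gcongr)
end
end

section
/- Let Φ be an n × N real matrix, k ≥ 1, and suppose there exists δ with 0 < δ < √2 − 1 such that (1−δ)·‖w‖₂² ≤ ‖Φw‖₂² ≤ (1+δ)·‖w‖₂² for every 2k-sparse vector w ∈ ℝ^N. If x ∈ ℝ^N is k-sparse and y = Φx, then any vector x* with Φx* = y and ‖x*‖₁ ≤ ‖z‖₁ for all z with Φz = y must equal x; that is, ℓ₁-minimization recovers every k-sparse vector exactly. -/
open Finset

noncomputable section

/-!
Let `h` be the error `xstar - x` and `U` the support of `x`. Minimality of `‖xstar‖₁` forces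
`‖h_{Uᶜ}‖₁ ≤ ‖h_U‖₁`, so it is enough that no nonzero kernel vector satisfies this inequality (the
null space property). Cut `Uᶜ` greedily into blocks of `k` coordinates of decreasing size, and let
`V` be the first one. Each later block has all its entries below the average of the previous block,
so the later blocks have total Euclidean norm at most `‖h_{Uᶜ}‖₁ / √k ≤ ‖h_U‖₂`. By polarization
the restricted isometry property makes `Φ` almost orthogonal on disjoint blocks; pairing `Φ h = 0`
with `Φ (h_U + h_V)` then gives
`(1 - δ) (‖h_U‖₂² + ‖h_V‖₂²) ≤ δ (‖h_U‖₂ + ‖h_V‖₂) ‖h_U‖₂`, hence `h_U = 0` and so `h = 0`.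
-/

open scoped RealInnerProductSpace

namespace CompressedSensing

section Blocks

variable {ι : Type*}

lemma sqrt_sum_sq_le_sqrt_mul {a : ι → ℝ} (ha : ∀ j, 0 ≤ a j) {T : Finset ι} {k : ℕ}
    (hT : #T ≤ k) {M : ℝ} (hM : 0 ≤ M) (haM : ∀ j ∈ T, a j ≤ M) :
    √(∑ j ∈ T, a j ^ 2) ≤ √k * M := by
  refine Real.sqrt_le_iff.2 ⟨by positivity, ?_⟩
  calc ∑ j ∈ T, a j ^ 2 ≤ #T • M ^ 2 :=
        sum_le_card_nsmul T _ _ fun j hj ↦ pow_le_pow_left₀ (ha j) (haM j hj) 2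
    _ ≤ k * M ^ 2 := by rw [nsmul_eq_mul]; gcongr
    _ = (√k * M) ^ 2 := by rw [mul_pow, Real.sq_sqrt k.cast_nonneg]

variable [DecidableEq ι]

lemma exists_subset_card_eq_forall_sdiff_le {α : Type*} [LinearOrder α] (a : ι → α)
    {S : Finset ι} {k : ℕ} (hk : k ≤ #S) :
    ∃ T ⊆ S, #T = k ∧ ∀ i ∈ T, ∀ j ∈ S \ T, a j ≤ a i := by
  induction k with
  | zero => exact ⟨∅, by simp⟩
  | succ k ih =>
    obtain ⟨T, hTS, hcard, hT⟩ := ih (by lia)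
    have hne : (S \ T).Nonempty := by
      rw [← card_pos, card_sdiff_of_subset hTS]
      lia
    obtain ⟨m, hm, hmax⟩ := exists_max_image (S \ T) a hne
    obtain ⟨hmS, hmT⟩ := mem_sdiff.1 hm
    refine ⟨insert m T, insert_subset hmS hTS, by rw [card_insert_of_notMem hmT, hcard], ?_⟩
    intro i hi j hj
    have hj' : j ∈ S \ T := sdiff_subset_sdiff Subset.rfl (subset_insert m T) hj
    rcases mem_insert.1 hi with rfl | hi
    · exact hmax j hj'
    · exact hT i hi j hj'

lemma exists_subset_card_le_mul_le_sum {a : ι → ℝ} (ha : ∀ j, 0 ≤ a j) (S : Finset ι) {k : ℕ}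
    (hk : 0 < k) :
    ∃ T ⊆ S, #T ≤ k ∧ (S.Nonempty → T.Nonempty) ∧
      ∃ M, 0 ≤ M ∧ (∀ j ∈ S \ T, a j ≤ M) ∧ k * M ≤ ∑ j ∈ T, a j := by
  rcases le_total k #S with hkS | hSk
  · obtain ⟨T, hTS, hcard, hT⟩ := exists_subset_card_eq_forall_sdiff_le a hkS
    have hne : T.Nonempty := card_pos.1 (hcard ▸ hk)
    obtain ⟨m, hm, hmin⟩ := exists_min_image T a hne
    refine ⟨T, hTS, hcard.le, fun _ ↦ hne, a m, ha m, hT m hm, ?_⟩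
    simpa [hcard] using card_nsmul_le_sum T a (a m) hmin
  · exact ⟨S, Subset.rfl, hSk, id, 0, le_rfl, by simp, by simpa using sum_nonneg fun j _ ↦ ha j⟩

lemma exists_finpartition_sum_sqrt_le_of_le {a : ι → ℝ} (ha : ∀ j, 0 ≤ a j) {k : ℕ} (hk : 0 < k)
    (S : Finset ι) {M : ℝ} (hM : 0 ≤ M) (haM : ∀ j ∈ S, a j ≤ M) :
    ∃ P : Finpartition S, (∀ T ∈ P.parts, #T ≤ k) ∧
      √k * ∑ T ∈ P.parts, √(∑ j ∈ T, a j ^ 2) ≤ k * M + ∑ j ∈ S, a j := by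
  induction S using Finset.strongInduction generalizing M with
  | H S ih =>
    rcases S.eq_empty_or_nonempty with rfl | hS
    · exact ⟨Finpartition.empty _, by simp, by simpa using by positivity⟩
    obtain ⟨T, hTS, hcard, hne, M', hM', haM', hsum⟩ := exists_subset_card_le_mul_le_sum ha S hk
    have hT : T ≠ ∅ := (hne hS).ne_empty
    obtain ⟨P, hPcard, hPsum⟩ := ih (S \ T) (sdiff_ssubset hTS (hne hS)) hM' haM'
    have hTP : T ∉ P.parts := fun h ↦
      hT (disjoint_self.1 (disjoint_sdiff.mono_right (P.le h)))
    have hfirst : √k * √(∑ j ∈ T, a j ^ 2) ≤ k * M := by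
      calc √k * √(∑ j ∈ T, a j ^ 2) ≤ √k * (√k * M) := by
            gcongr
            exact sqrt_sum_sq_le_sqrt_mul ha hcard hM fun j hj ↦ haM j (hTS hj)
        _ = k * M := by rw [← mul_assoc, Real.mul_self_sqrt k.cast_nonneg]
    refine ⟨P.extend hT sdiff_disjoint (sdiff_union_of_subset hTS),
      (forall_mem_insert _ _ _).2 ⟨hcard, hPcard⟩, ?_⟩
    calc √k * ∑ B ∈ insert T P.parts, √(∑ j ∈ B, a j ^ 2)
        = √k * √(∑ j ∈ T, a j ^ 2) + √k * ∑ B ∈ P.parts, √(∑ j ∈ B, a j ^ 2) := by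
          rw [sum_insert hTP, mul_add]
      _ ≤ k * M + (∑ j ∈ T, a j + ∑ j ∈ S \ T, a j) := by linarith
      _ = k * M + ∑ j ∈ S, a j := by rw [add_comm (∑ j ∈ T, a j), sum_sdiff hTS]

lemma exists_finpartition_sdiff_sum_sqrt_le {a : ι → ℝ} (ha : ∀ j, 0 ≤ a j) {k : ℕ} (hk : 0 < k)
    (S : Finset ι) :
    ∃ V ⊆ S, #V ≤ k ∧ ∃ P : Finpartition (S \ V), (∀ T ∈ P.parts, #T ≤ k) ∧
      √k * ∑ T ∈ P.parts, √(∑ j ∈ T, a j ^ 2) ≤ ∑ j ∈ S, a j := by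
  obtain ⟨V, hVS, hcard, -, M, hM, haM, hsum⟩ := exists_subset_card_le_mul_le_sum ha S hk
  obtain ⟨P, hPcard, hPsum⟩ := exists_finpartition_sum_sqrt_le_of_le ha hk (S \ V) hM haM
  exact ⟨V, hVS, hcard, P, hPcard, by linarith [sum_sdiff (f := a) hVS]⟩

end Blocks

section Cone

variable {ι : Type*} [Fintype ι] [DecidableEq ι] {E : ι → Type*} [∀ i, SeminormedAddCommGroup (E i)]

lemma sum_compl_norm_sub_le {x y : ∀ i, E i} {U : Finset ι} (hx : ∀ j ∉ U, x j = 0)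
    (hle : ∑ j, ‖y j‖ ≤ ∑ j, ‖x j‖) : ∑ j ∈ Uᶜ, ‖y j - x j‖ ≤ ∑ j ∈ U, ‖y j - x j‖ := by
  have hoff : ∀ j ∈ Uᶜ, x j = 0 := fun j hj ↦ hx j (mem_compl.1 hj)
  have hx_compl : ∑ j ∈ Uᶜ, ‖x j‖ = 0 := sum_eq_zero fun j hj ↦ by rw [hoff j hj, norm_zero]
  have hy_compl : ∑ j ∈ Uᶜ, ‖y j - x j‖ = ∑ j ∈ Uᶜ, ‖y j‖ :=
    sum_congr rfl fun j hj ↦ by rw [hoff j hj, sub_zero]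
  have htriangle : ∑ j ∈ U, ‖x j‖ ≤ ∑ j ∈ U, ‖y j‖ + ∑ j ∈ U, ‖y j - x j‖ := by
    rw [← sum_add_distrib]
    exact sum_le_sum fun j _ ↦ norm_le_norm_add_norm_sub _ _
  rw [← sum_add_sum_compl U, ← sum_add_sum_compl U fun j ↦ ‖x j‖] at hle
  linarith

end Cone

section Truncation

variable {ι : Type*} [DecidableEq ι] {E : ι → Type*} [∀ i, NormedAddCommGroup (E i)]

/-- The vector `h_S` obtained from `h` by setting the coordinates outside `S` to zero; it is the
block of `h` supported on `S`. -/
def truncate (S : Finset ι) (h : PiLp 2 E) : PiLp 2 E := ∑ j ∈ S, PiLp.single 2 j (h j)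

lemma truncate_apply (S : Finset ι) (h : PiLp 2 E) (i : ι) :
    truncate S h i = if i ∈ S then h i else 0 := by
  simp [truncate, Finset.sum_pi_single]

lemma truncate_eq_zero_or_of_disjoint {U V : Finset ι} (hUV : Disjoint U V) (h : PiLp 2 E)
    (i : ι) : truncate U h i = 0 ∨ truncate V h i = 0 := by
  by_cases hi : i ∈ U
  · exact .inr (by rw [truncate_apply, if_neg (disjoint_left.1 hUV hi)])
  · exact .inl (by rw [truncate_apply, if_neg hi])

lemma truncate_add_truncate_sdiff {S T : Finset ι} (hTS : T ⊆ S) (h : PiLp 2 E) :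
    truncate T h + truncate (S \ T) h = truncate S h := by
  rw [add_comm]
  exact sum_sdiff hTS

lemma sum_truncate_parts {S : Finset ι} (P : Finpartition S) (h : PiLp 2 E) :
    ∑ T ∈ P.parts, truncate T h = truncate S h :=
  calc ∑ T ∈ P.parts, truncate T h = truncate (P.parts.biUnion id) h :=
        (sum_biUnion P.disjoint).symm
    _ = truncate S h := by rw [P.biUnion_parts]

variable [Fintype ι]

lemma truncate_add_truncate_add_sum_parts {U V : Finset ι} (hV : V ⊆ Uᶜ)
    (P : Finpartition (Uᶜ \ V)) (h : PiLp 2 E) :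
    truncate U h + truncate V h + ∑ T ∈ P.parts, truncate T h = h := by
  rw [sum_truncate_parts, add_assoc, truncate_add_truncate_sdiff hV]
  ext i
  by_cases hi : i ∈ U <;> simp [truncate_apply, hi]

lemma norm_truncate (S : Finset ι) (h : PiLp 2 E) : ‖truncate S h‖ = √(∑ j ∈ S, ‖h j‖ ^ 2) := by
  rw [PiLp.norm_eq_of_L2]
  simp [truncate_apply, apply_ite, ite_pow]

lemma sum_norm_le_sqrt_mul_norm_truncate {S : Finset ι} {k : ℕ} (hS : #S ≤ k) (h : PiLp 2 E) :
    ∑ j ∈ S, ‖h j‖ ≤ √k * ‖truncate S h‖ := by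
  rw [norm_truncate, ← Real.sqrt_mul k.cast_nonneg]
  refine Real.le_sqrt_of_sq_le (sq_sum_le_card_mul_sum_sq.trans ?_)
  gcongr

lemma hammingNorm_truncate_le [∀ i, DecidableEq (E i)] (S : Finset ι) (h : PiLp 2 E) :
    hammingNorm (truncate S h).ofLp ≤ #S :=
  card_le_card fun i hi ↦ by
    by_contra hiS
    simp [truncate_apply, hiS] at hi

end Truncation

section DisjointSupports

variable {ι : Type*} [Fintype ι] {E : ι → Type*}

lemma hammingNorm_le_add [∀ i, Zero (E i)] [∀ i, DecidableEq (E i)] {u v w : ∀ i, E i}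
    (hw : ∀ i, u i = 0 → v i = 0 → w i = 0) : hammingNorm w ≤ hammingNorm u + hammingNorm v := by
  classical
  refine (card_le_card fun i hi ↦ ?_).trans (card_union_le _ _)
  simp only [mem_union, mem_filter_univ] at hi ⊢
  by_contra! huv
  exact hi (hw i huv.1 huv.2)

lemma norm_add_sq_of_disjoint [∀ i, SeminormedAddCommGroup (E i)] {u v : PiLp 2 E}
    (huv : ∀ i, u i = 0 ∨ v i = 0) : ‖u + v‖ ^ 2 = ‖u‖ ^ 2 + ‖v‖ ^ 2 := by
  simp_rw [PiLp.norm_sq_eq_of_L2, ← sum_add_distrib]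
  refine sum_congr rfl fun i _ ↦ ?_
  rcases huv i with hi | hi <;> simp [hi]

end DisjointSupports

section RestrictedIsometry

variable {ι : Type*} [Fintype ι] {E : ι → Type*} [∀ i, NormedAddCommGroup (E i)]
  [∀ i, NormedSpace ℝ (E i)] [∀ i, DecidableEq (E i)]
  {F : Type*} [SeminormedAddCommGroup F]

/-- The restricted isometry property of order `s` with constant `δ`, which makes `Φ` almost
isometric on `s`-sparse vectors. The scalar case is `E i = ℝ`; in general sparsity counts the
nonzero blocks `w i : E i`. -/
def IsRestrictedIsometry [NormedSpace ℝ F] (Φ : PiLp 2 E →ₗ[ℝ] F) (s : ℕ) (δ : ℝ) : Prop :=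
  ∀ w : PiLp 2 E, hammingNorm w.ofLp ≤ s →
    (1 - δ) * ‖w‖ ^ 2 ≤ ‖Φ w‖ ^ 2 ∧ ‖Φ w‖ ^ 2 ≤ (1 + δ) * ‖w‖ ^ 2

namespace IsRestrictedIsometry

variable [InnerProductSpace ℝ F] {Φ : PiLp 2 E →ₗ[ℝ] F} {s k : ℕ} {δ : ℝ}

lemma sq_norm_map_add_bounds (hΦ : IsRestrictedIsometry Φ s δ) {u v : PiLp 2 E}
    (huv : ∀ i, u i = 0 ∨ v i = 0) (hs : hammingNorm u.ofLp + hammingNorm v.ofLp ≤ s) :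
    (1 - δ) * (‖u‖ ^ 2 + ‖v‖ ^ 2) ≤ ‖Φ (u + v)‖ ^ 2 ∧
      ‖Φ (u + v)‖ ^ 2 ≤ (1 + δ) * (‖u‖ ^ 2 + ‖v‖ ^ 2) := by
  rw [← norm_add_sq_of_disjoint huv]
  exact hΦ (u + v) ((hammingNorm_le_add fun i hu hv ↦ by simp [hu, hv]).trans hs)

lemma abs_inner_map_map_le_half (hΦ : IsRestrictedIsometry Φ s δ) {u v : PiLp 2 E}
    (huv : ∀ i, u i = 0 ∨ v i = 0) (hs : hammingNorm u.ofLp + hammingNorm v.ofLp ≤ s) :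
    |⟪Φ u, Φ v⟫| ≤ δ * (‖u‖ ^ 2 + ‖v‖ ^ 2) / 2 := by
  have hadd := hΦ.sq_norm_map_add_bounds huv hs
  have hsub := hΦ (u - v) ((hammingNorm_le_add fun i hu hv ↦ by simp [hu, hv]).trans hs)
  have hnorm_sub : ‖u - v‖ ^ 2 = ‖u‖ ^ 2 + ‖v‖ ^ 2 := by
    rw [sub_eq_add_neg, norm_add_sq_of_disjoint fun i ↦ by simpa using huv i, norm_neg]
  rw [map_add, norm_add_sq_real] at hadd
  rw [hnorm_sub, map_sub, norm_sub_sq_real] at hsub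
  exact abs_le.2 ⟨by linarith [hadd.1, hsub.2], by linarith [hadd.2, hsub.1]⟩

lemma abs_inner_map_map_le (hΦ : IsRestrictedIsometry Φ s δ) {u v : PiLp 2 E}
    (huv : ∀ i, u i = 0 ∨ v i = 0) (hs : hammingNorm u.ofLp + hammingNorm v.ofLp ≤ s) :
    |⟪Φ u, Φ v⟫| ≤ δ * ‖u‖ * ‖v‖ := by
  rcases eq_or_ne u 0 with rfl | hu
  · simp
  rcases eq_or_ne v 0 with rfl | hv
  · simp
  have hpos : 0 < ‖u‖ * ‖v‖ := mul_pos (norm_pos_iff.2 hu) (norm_pos_iff.2 hv)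
  -- For vectors of equal norm the arithmetic mean of the squares is the product of the norms.
  have hscaled : |⟪Φ (‖v‖ • u), Φ (‖u‖ • v)⟫| ≤
      δ * (‖‖v‖ • u‖ ^ 2 + ‖‖u‖ • v‖ ^ 2) / 2 :=
    hΦ.abs_inner_map_map_le_half (fun i ↦ (huv i).imp (by simp +contextual) (by simp +contextual))
      ((Nat.add_le_add hammingNorm_smul_le_hammingNorm hammingNorm_smul_le_hammingNorm).trans hs)
  refine le_of_mul_le_mul_left ?_ hpos
  calc ‖u‖ * ‖v‖ * |⟪Φ u, Φ v⟫| = |⟪Φ (‖v‖ • u), Φ (‖u‖ • v)⟫| := by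
        rw [map_smul, map_smul, real_inner_smul_left, real_inner_smul_right, abs_mul, abs_mul,
          abs_norm, abs_norm]
        ring
    _ ≤ δ * (‖‖v‖ • u‖ ^ 2 + ‖‖u‖ • v‖ ^ 2) / 2 := hscaled
    _ = ‖u‖ * ‖v‖ * (δ * ‖u‖ * ‖v‖) := by
        rw [norm_smul, norm_smul, norm_norm, norm_norm]
        ring

variable [DecidableEq ι] {U V : Finset ι}

lemma abs_inner_map_truncate_le (hΦ : IsRestrictedIsometry Φ s δ) (hUV : Disjoint U V)
    (hs : #U + #V ≤ s) (h : PiLp 2 E) :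
    |⟪Φ (truncate U h), Φ (truncate V h)⟫| ≤ δ * ‖truncate U h‖ * ‖truncate V h‖ :=
  hΦ.abs_inner_map_map_le (truncate_eq_zero_or_of_disjoint hUV h)
    ((Nat.add_le_add (hammingNorm_truncate_le U h) (hammingNorm_truncate_le V h)).trans hs)

lemma mul_sq_add_sq_norm_truncate_le (hΦ : IsRestrictedIsometry Φ (2 * k) δ) {h : PiLp 2 E}
    (hh : Φ h = 0) (hU : #U ≤ k) (hVU : V ⊆ Uᶜ) (hV : #V ≤ k) (P : Finpartition (Uᶜ \ V))
    (hP : ∀ T ∈ P.parts, #T ≤ k) :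
    (1 - δ) * (‖truncate U h‖ ^ 2 + ‖truncate V h‖ ^ 2) ≤
      δ * (‖truncate U h‖ + ‖truncate V h‖) * ∑ T ∈ P.parts, ‖truncate T h‖ := by
  set u := truncate U h
  set v := truncate V h
  have hUV : Disjoint U V := disjoint_compl_right.mono_right hVU
  have hlower : (1 - δ) * (‖u‖ ^ 2 + ‖v‖ ^ 2) ≤ ‖Φ (u + v)‖ ^ 2 :=
    (hΦ.sq_norm_map_add_bounds (truncate_eq_zero_or_of_disjoint hUV h)
      ((Nat.add_le_add (hammingNorm_truncate_le U h) (hammingNorm_truncate_le V h)).trans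
        (by lia))).1
  have hhead : Φ (u + v) = -∑ T ∈ P.parts, Φ (truncate T h) := by
    rw [eq_neg_iff_add_eq_zero, ← map_sum, ← map_add, truncate_add_truncate_add_sum_parts hVU, hh]
  have hblock : ∀ T ∈ P.parts,
      -⟪Φ (u + v), Φ (truncate T h)⟫ ≤ δ * (‖u‖ + ‖v‖) * ‖truncate T h‖ := by
    intro T hT
    have hTsub : T ⊆ Uᶜ \ V := P.le hT
    have hUT : Disjoint U T := disjoint_compl_right.mono_right (hTsub.trans sdiff_subset)
    have hVT : Disjoint V T := disjoint_sdiff.mono_right hTsub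
    have hTk := hP T hT
    have hu := neg_le_of_abs_le (hΦ.abs_inner_map_truncate_le hUT (by lia) h)
    have hv := neg_le_of_abs_le (hΦ.abs_inner_map_truncate_le hVT (by lia) h)
    rw [map_add, inner_add_left]
    linarith
  calc (1 - δ) * (‖u‖ ^ 2 + ‖v‖ ^ 2) ≤ ‖Φ (u + v)‖ ^ 2 := hlower
    _ = ⟪Φ (u + v), -∑ T ∈ P.parts, Φ (truncate T h)⟫ := by
        rw [← hhead, real_inner_self_eq_norm_sq]
    _ = ∑ T ∈ P.parts, -⟪Φ (u + v), Φ (truncate T h)⟫ := by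
        rw [inner_neg_right, inner_sum, sum_neg_distrib]
    _ ≤ ∑ T ∈ P.parts, δ * (‖u‖ + ‖v‖) * ‖truncate T h‖ := sum_le_sum hblock
    _ = δ * (‖u‖ + ‖v‖) * ∑ T ∈ P.parts, ‖truncate T h‖ := (mul_sum _ _ _).symm

end IsRestrictedIsometry

end RestrictedIsometry

section Constants

lemma add_mul_le_one_add_sqrt_two_div_two_mul (a b : ℝ) :
    (a + b) * a ≤ (1 + √2) / 2 * (a ^ 2 + b ^ 2) := by
  have hsqrt : √2 ^ 2 = 2 := Real.sq_sqrt zero_le_two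
  have hgap : (1 + √2) / 2 * (a ^ 2 + b ^ 2) - (a + b) * a =
      (√2 - 1) / 2 * (a - (1 + √2) * b) ^ 2 := by
    linear_combination (a * b - (√2 + 1) / 2 * b ^ 2) * hsqrt
  have hnonneg : 0 ≤ (√2 - 1) / 2 * (a - (1 + √2) * b) ^ 2 :=
    mul_nonneg (by linarith [Real.one_lt_sqrt_two]) (sq_nonneg _)
  linarith

lemma eq_zero_of_one_sub_mul_le {δ a b : ℝ} (hδ0 : 0 ≤ δ) (hδ1 : δ < 2 / (3 + √2))
    (hab : (1 - δ) * (a ^ 2 + b ^ 2) ≤ δ * ((a + b) * a)) : a = 0 := by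
  have hδ : δ * (3 + √2) < 2 := (lt_div_iff₀ (by positivity)).1 hδ1
  have hquad := mul_le_mul_of_nonneg_left (add_mul_le_one_add_sqrt_two_div_two_mul a b) hδ0
  by_contra ha
  have hpos : 0 < (2 - δ * (3 + √2)) * (a ^ 2 + b ^ 2) :=
    mul_pos (sub_pos.2 hδ) (by positivity)
  linarith

lemma sqrt_two_sub_one_le : √2 - 1 ≤ 2 / (3 + √2) := by
  rw [le_div_iff₀ (by positivity)]
  nlinarith [Real.sq_sqrt zero_le_two, Real.sqrt_two_lt_three_halves]

end Constants

lemma IsRestrictedIsometry.eq_zero_of_sum_compl_norm_le {ι : Type*} [Fintype ι] [DecidableEq ι]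
    {E : ι → Type*} [∀ i, NormedAddCommGroup (E i)] [∀ i, NormedSpace ℝ (E i)]
    [∀ i, DecidableEq (E i)] {F : Type*} [SeminormedAddCommGroup F] [InnerProductSpace ℝ F]
    {Φ : PiLp 2 E →ₗ[ℝ] F} {k : ℕ} {δ : ℝ} (hΦ : IsRestrictedIsometry Φ (2 * k) δ) (hk : 0 < k)
    (hδ0 : 0 ≤ δ) (hδ1 : δ < 2 / (3 + √2)) {h : PiLp 2 E} (hh : Φ h = 0) {U : Finset ι}
    (hU : #U ≤ k) (hcone : ∑ j ∈ Uᶜ, ‖h j‖ ≤ ∑ j ∈ U, ‖h j‖) : h = 0 := by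
  obtain ⟨V, hVU, hV, P, hP, htail⟩ :=
    exists_finpartition_sdiff_sum_sqrt_le (fun j ↦ norm_nonneg (h j)) hk Uᶜ
  simp_rw [← norm_truncate] at htail
  have hhead := sum_norm_le_sqrt_mul_norm_truncate hU h
  have hblocks : ∑ T ∈ P.parts, ‖truncate T h‖ ≤ ‖truncate U h‖ :=
    le_of_mul_le_mul_left (htail.trans (hcone.trans hhead)) (by positivity)
  have hhead_zero : ‖truncate U h‖ = 0 := by
    refine eq_zero_of_one_sub_mul_le hδ0 hδ1 (b := ‖truncate V h‖) ?_
    rw [← mul_assoc]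
    exact (hΦ.mul_sq_add_sq_norm_truncate_le hh hU hVU hV P hP).trans (by gcongr)
  have hsum : ∑ j, ‖h j‖ = 0 := by
    refine le_antisymm ?_ (sum_nonneg fun j _ ↦ norm_nonneg _)
    rw [hhead_zero, mul_zero] at hhead
    linarith [sum_add_sum_compl U fun j ↦ ‖h j‖]
  ext j
  exact norm_eq_zero.1 ((sum_eq_zero_iff_of_nonneg fun j _ ↦ norm_nonneg _).1 hsum j (mem_univ j))

lemma isRestrictedIsometry_toEuclideanLin {κ ι : Type*} [Fintype κ] [Fintype ι] [DecidableEq ι]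
    {Φ : Matrix κ ι ℝ} {s : ℕ} {δ : ℝ}
    (hΦ : ∀ w : ι → ℝ, hammingNorm w ≤ s →
      (1 - δ) * ∑ j, w j ^ 2 ≤ ∑ i, Φ.mulVec w i ^ 2 ∧
      ∑ i, Φ.mulVec w i ^ 2 ≤ (1 + δ) * ∑ j, w j ^ 2) :
    IsRestrictedIsometry (Matrix.toEuclideanLin Φ) s δ := fun w hw ↦ by
  simpa only [EuclideanSpace.real_norm_sq_eq, Matrix.ofLp_toLpLin, Matrix.toLin'_apply]
    using hΦ w.ofLp hw

end CompressedSensing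

open CompressedSensing

-- `2 / (3 + √2) ≈ 0.453` is the constant of Foucart and Lai.
theorem stmt14_general {ι : Type*} [Fintype ι] {E : ι → Type*} [∀ i, NormedAddCommGroup (E i)]
    [∀ i, NormedSpace ℝ (E i)] [∀ i, DecidableEq (E i)] {F : Type*} [SeminormedAddCommGroup F]
    [InnerProductSpace ℝ F] {Φ : PiLp 2 E →ₗ[ℝ] F} {k : ℕ} (hk : 0 < k) {δ : ℝ} (hδ0 : 0 ≤ δ)
    (hδ1 : δ < 2 / (3 + √2)) (hΦ : IsRestrictedIsometry Φ (2 * k) δ) {x xstar : PiLp 2 E}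
    (hx : hammingNorm x.ofLp ≤ k) (hfeas : Φ xstar = Φ x)
    (hle : ∑ j, ‖xstar j‖ ≤ ∑ j, ‖x j‖) : xstar = x := by
  classical
  have hker : Φ (xstar - x) = 0 := by rw [map_sub, hfeas, sub_self]
  have hcone := sum_compl_norm_sub_le (U := univ.filter fun j ↦ x j ≠ 0) (by simp) hle
  exact sub_eq_zero.1 (hΦ.eq_zero_of_sum_compl_norm_le hk hδ0 hδ1 hker hx hcone)

theorem stmt14 {n N : ℕ} (k : ℕ) (hk : 1 ≤ k) (Φ : Matrix (Fin n) (Fin N) ℝ)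
    (δ : ℝ) (hδ0 : 0 < δ) (hδ1 : δ < Real.sqrt 2 - 1)
    (hRIP : ∀ w : Fin N → ℝ, (Finset.univ.filter (fun j => w j ≠ 0)).card ≤ 2 * k →
      (1 - δ) * ∑ j, (w j) ^ 2 ≤ ∑ i, (Φ.mulVec w i) ^ 2 ∧
      ∑ i, (Φ.mulVec w i) ^ 2 ≤ (1 + δ) * ∑ j, (w j) ^ 2)
    (x : Fin N → ℝ) (hx : (Finset.univ.filter (fun j => x j ≠ 0)).card ≤ k)
    (xstar : Fin N → ℝ)
    (hfeas : Φ.mulVec xstar = Φ.mulVec x)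
    (hmin : ∀ z : Fin N → ℝ, Φ.mulVec z = Φ.mulVec x → ∑ j, |xstar j| ≤ ∑ j, |z j|) :
    xstar = x :=
  WithLp.toLp_injective 2 <| stmt14_general hk hδ0.le (hδ1.trans_le sqrt_two_sub_one_le)
    (isRestrictedIsometry_toEuclideanLin hRIP) hx (congrArg (WithLp.toLp 2) hfeas) (hmin x rfl)
end
end
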